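/- arXiv:1212.6756 — 3 statements merged into one kernel-verified Lean document; each statement's English description precedes it below -/
import Mathlib

section
/- For any forest G, π(G) ≤ 2: there exist two permutations of V(G) (obtained from preorder and postorder traversals of the trees) that together separate every pair of disjoint edges. -/
/-- A permutation `σ` separates two sets `A`, `B`: all of `A` comes before all
of `B`, or vice versa. -/
def SepPerm {V : Type*} {n : ℕ} (σ : V ≃ Fin n) (A B : Set V) : Prop :=
  (∀ a ∈ A, ∀ b ∈ B, σ a < σ b) ∨ (∀ a ∈ A, ∀ b ∈ B, σ b < σ a)

/-- A family of permutations is pairwise suitable for a graph `G` if every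
pair of disjoint edges is separated by some member of the family. -/
def PWSuitable {V : Type*} [Fintype V] (G : SimpleGraph V)
    {k : ℕ} (F : Fin k → (V ≃ Fin (Fintype.card V))) : Prop :=
  ∀ e ∈ G.edgeSet, ∀ f ∈ G.edgeSet, (∀ x, ¬(x ∈ e ∧ x ∈ f)) →
    ∃ i, SepPerm (F i) {x | x ∈ e} {x | x ∈ f}

/-- The separation dimension of a graph: the minimum size of a pairwise
suitable family of permutations of the vertex set. -/
noncomputable def sepDim {V : Type*} [Fintype V] (G : SimpleGraph V) : ℕ :=
  sInf {k : ℕ | ∃ F : Fin k → (V ≃ Fin (Fintype.card V)), PWSuitable G F}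

/-- The map `f` places both `a` and `b` before both `c` and `d`, or vice versa. -/
def SepPairs {V : Type*} (f : V → ℕ) (a b c d : V) : Prop :=
  (f a < f c ∧ f a < f d ∧ f b < f c ∧ f b < f d) ∨
    (f c < f a ∧ f d < f a ∧ f c < f b ∧ f d < f b)

theorem SepPairs.symm {V : Type*} {f : V → ℕ} {a b c d : V} (h : SepPairs f a b c d) :
    SepPairs f c d a b := by
  unfold SepPairs at h ⊢
  omega

theorem SepPairs.swap_left {V : Type*} {f : V → ℕ} {a b c d : V} (h : SepPairs f a b c d) :
    SepPairs f b a c d := by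
  unfold SepPairs at h ⊢
  omega

/-- In a forest, a vertex set `S` with at least two elements, one of them `r`, splits off a part
`B` avoiding `r` such that at most one edge joins `B` to the rest, and this edge is at `r`. -/
theorem exists_split_of_isAcyclic {V : Type*} [DecidableEq V] {G : SimpleGraph V}
    (hG : G.IsAcyclic) (S : Finset V) {r : V} (hS : ∃ x ∈ S, x ≠ r) :
    ∃ B ⊆ S, ∃ c ∈ B, r ∉ B ∧ ∀ x ∈ S, x ∉ B → ∀ y ∈ B, G.Adj x y → x = r ∧ y = c := by
  classical
  by_cases h : ∃ c ∈ S, G.Adj r c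
  · obtain ⟨c, hcS, hrc⟩ := h
    have hb := (SimpleGraph.isAcyclic_iff_forall_adj_isBridge.mp hG) hrc
    rw [SimpleGraph.isBridge_iff] at hb
    refine ⟨S.filter fun x => (G \ SimpleGraph.fromEdgeSet {s(r, c)}).Reachable c x,
      Finset.filter_subset _ _, c, by simp [hcS], ?_, ?_⟩
    · intro hr
      exact hb (Finset.mem_filter.mp hr).2.symm
    · intro x hx hxB y hy hxy
      rw [Finset.mem_filter] at hxB hy
      by_contra hne
      by_cases hyx : x = c ∧ y = r
      · obtain ⟨rfl, rfl⟩ := hyx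
        exact hb hy.2.symm
      · refine hxB ⟨hx, hy.2.trans (SimpleGraph.Adj.reachable ?_)⟩
        have := hxy.symm
        simp only [SimpleGraph.sdiff_adj, SimpleGraph.fromEdgeSet_adj, Set.mem_singleton_iff,
          Sym2.eq_iff]
        grind
  · push Not at h
    obtain ⟨c, hc, hcr⟩ := hS
    refine ⟨S.erase r, Finset.erase_subset _ _, c, by simp [hc, hcr], by simp, ?_⟩
    intro x hx hxB y hy hxy
    have hxr : x = r := by
      by_contra hne
      exact hxB (Finset.mem_erase.mpr ⟨hne, hx⟩)
    subst hxr
    exact absurd hxy (h y (Finset.mem_of_mem_erase hy))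

/-- Two injective rankings of a vertex set of a forest separate all pairs of disjoint edges, and
any prescribed vertex can be made first in one of them. -/
theorem exists_sepPairs_of_isAcyclic {V : Type*} [Fintype V] [DecidableEq V] {G : SimpleGraph V}
    (hG : G.IsAcyclic) (S : Finset V) : ∀ r ∈ S, ∃ f g : V → ℕ,
      Set.InjOn f S ∧ Set.InjOn g S ∧ (∀ x ∈ S, f r ≤ f x) ∧
      ∀ a ∈ S, ∀ b ∈ S, ∀ c ∈ S, ∀ d ∈ S, G.Adj a b → G.Adj c d →
        a ≠ c → a ≠ d → b ≠ c → b ≠ d → SepPairs f a b c d ∨ SepPairs g a b c d := by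
  induction S using Finset.strongInduction with
  | H S ih =>
    intro r hr
    by_cases hS : ∃ x ∈ S, x ≠ r
    · obtain ⟨B, hBS, c, hcB, hrB, hcross⟩ := exists_split_of_isAcyclic hG S hS
      have hB : B ⊂ S := Finset.ssubset_iff_subset_ne.mpr ⟨hBS, by rintro rfl; exact hrB hr⟩
      have hA : S \ B ⊂ S := Finset.sdiff_ssubset hBS ⟨c, hcB⟩
      obtain ⟨fB, gB, hfB, hgB, hminB, hsepB⟩ := ih B hB c hcB
      obtain ⟨fA, gA, hfA, hgA, hminA, hsepA⟩ := ih (S \ B) hA r (by simp [hr, hrB])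
      obtain ⟨M, hM⟩ : ∃ M, ∀ x, fB x < M ∧ gB x < M := by
        refine ⟨∑ x, (fB x + gB x) + 1, fun x => ?_⟩
        have := Finset.single_le_sum (f := fun x => fB x + gB x) (fun _ _ => Nat.zero_le _)
          (Finset.mem_univ x)
        omega
      obtain ⟨f, hf⟩ : ∃ f : V → ℕ, ∀ x,
          f x = if x = r then 0 else if x ∈ B then fB x + 1 else fA x + M + 1 := ⟨_, fun _ => rfl⟩
      obtain ⟨g, hg⟩ : ∃ g : V → ℕ, ∀ x, g x = if x ∈ B then gB x else gA x + M :=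
        ⟨_, fun _ => rfl⟩
      have hfr : f r = 0 := by simp [hf]
      have hfinB : ∀ x ∈ B, f x = fB x + 1 := by grind
      have hfinA : ∀ x, x ∉ B → x ≠ r → f x = fA x + M + 1 := by grind
      have hginB : ∀ x ∈ B, g x = gB x := by grind
      have hginA : ∀ x, x ∉ B → g x = gA x + M := by grind
      have hfBinj : ∀ x ∈ B, ∀ y ∈ B, fB x = fB y → x = y := fun x hx y hy h => hfB hx hy h
      have hgBinj : ∀ x ∈ B, ∀ y ∈ B, gB x = gB y → x = y := fun x hx y hy h => hgB hx hy h
      have hfAinj : ∀ x ∈ S, x ∉ B → ∀ y ∈ S, y ∉ B → fA x = fA y → x = y :=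
        fun x hx hx' y hy hy' h => hfA (by simp [hx, hx']) (by simp [hy, hy']) h
      have hgAinj : ∀ x ∈ S, x ∉ B → ∀ y ∈ S, y ∉ B → gA x = gA y → x = y :=
        fun x hx hx' y hy hy' h => hgA (by simp [hx, hx']) (by simp [hy, hy']) h
      have hminA' : ∀ x ∈ S, x ∉ B → fA r ≤ fA x := fun x hx hx' => hminA x (by simp [hx, hx'])
      have hmono : ∀ x, x ∉ B → x ∈ S → ∀ y, y ∉ B → y ∈ S → fA x < fA y → f x < f y := by
        intro x hx hxS y hy hyS h
        have := hminA' x hxS hx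
        grind
      have hcrossAdj : ∀ b ∈ S, b ∉ B → ∀ a ∈ B, G.Adj a b ∨ G.Adj b a → b = r ∧ a = c :=
        fun b hb hb' a ha h => hcross b hb hb' a ha (h.elim (·.symm) id)
      have hbridge : ∀ x ∈ S, ∀ y ∈ S, G.Adj x y → x ≠ r → x ≠ c → y ≠ r → y ≠ c →
          SepPairs f r c x y := by
        intro x hx y hy hxy hxr hxc hyr hyc
        left
        have h1 := hfinB c hcB
        have h2 := hM c
        by_cases hxB : x ∈ B
        · have hyB : y ∈ B := by grind
          have := hfinB x hxB
          have := hfinB y hyB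
          have := hminB x hxB
          have := hminB y hyB
          have := hfBinj c hcB x hxB
          have := hfBinj c hcB y hyB
          have : fB c ≠ fB x := by grind
          have : fB c ≠ fB y := by grind
          omega
        · have hyB : y ∉ B := by grind
          have := hfinA x hxB hxr
          have := hfinA y hyB hyr
          omega
      refine ⟨f, g, ?_, ?_, by simp [hfr], ?_⟩
      · intro x hx y hy hxy
        have h1 := hM x
        have h2 := hM y
        grind
      · intro x hx y hy hxy
        have h1 := hM x
        have h2 := hM y
        grind
      · intro x hx y hy z hz w hw hxy hzw hxz hxw hyz hyw
        by_cases hxB : x ∈ B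
        · by_cases hyB : y ∈ B
          · by_cases hzB : z ∈ B
            · by_cases hwB : w ∈ B
              · have := hsepB x hxB y hyB z hzB w hwB hxy hzw hxz hxw hyz hyw
                simp only [SepPairs, hfinB, hginB, hxB, hyB, hzB, hwB] at this ⊢
                omega
              · obtain ⟨rfl, rfl⟩ := hcrossAdj w hw hwB z hzB (.inl hzw)
                exact .inl ((hbridge x hx y hy hxy hxw hxz hyw hyz).swap_left.symm)
            · by_cases hwB : w ∈ B
              · obtain ⟨rfl, rfl⟩ := hcrossAdj z hz hzB w hwB (.inr hzw)
                exact .inl ((hbridge x hx y hy hxy hxz hxw hyz hyw).symm)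
              · have h1 := hM x
                have h2 := hM y
                right
                left
                rw [hginB x hxB, hginB y hyB, hginA z hzB, hginA w hwB]
                omega
          · obtain ⟨rfl, rfl⟩ := hcrossAdj y hy hyB x hxB (.inl hxy)
            exact .inl ((hbridge z hz w hw hzw hyz.symm hxz.symm hyw.symm hxw.symm).swap_left)
        · by_cases hyB : y ∈ B
          · obtain ⟨rfl, rfl⟩ := hcrossAdj x hx hxB y hyB (.inr hxy)
            exact .inl (hbridge z hz w hw hzw hxz.symm hyz.symm hxw.symm hyw.symm)
          · by_cases hzB : z ∈ B
            · by_cases hwB : w ∈ B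
              · have h1 := hM z
                have h2 := hM w
                right
                right
                rw [hginA x hxB, hginA y hyB, hginB z hzB, hginB w hwB]
                omega
              · obtain ⟨rfl, rfl⟩ := hcrossAdj w hw hwB z hzB (.inl hzw)
                exact .inl ((hbridge x hx y hy hxy hxw hxz hyw hyz).swap_left.symm)
            · by_cases hwB : w ∈ B
              · obtain ⟨rfl, rfl⟩ := hcrossAdj z hz hzB w hwB (.inr hzw)
                exact .inl ((hbridge x hx y hy hxy hxz hxw hyz hyw).symm)
              · rcases hsepA x (by simp [hx, hxB]) y (by simp [hy, hyB]) z (by simp [hz, hzB]) w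
                  (by simp [hw, hwB]) hxy hzw hxz hxw hyz hyw with h | h
                · left
                  rcases h with ⟨h1, h2, h3, h4⟩ | ⟨h1, h2, h3, h4⟩
                  · exact .inl ⟨hmono _ hxB hx _ hzB hz h1, hmono _ hxB hx _ hwB hw h2,
                      hmono _ hyB hy _ hzB hz h3, hmono _ hyB hy _ hwB hw h4⟩
                  · exact .inr ⟨hmono _ hzB hz _ hxB hx h1, hmono _ hwB hw _ hxB hx h2,
                      hmono _ hzB hz _ hyB hy h3, hmono _ hwB hw _ hyB hy h4⟩
                · right
                  unfold SepPairs at h ⊢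
                  rw [hginA x hxB, hginA y hyB, hginA z hzB, hginA w hwB]
                  omega
    · push Not at hS
      refine ⟨fun _ => 0, fun _ => 0, ?_, ?_, by simp, ?_⟩
      · intro x hx y hy _
        rw [hS x hx, hS y hy]
      · intro x hx y hy _
        rw [hS x hx, hS y hy]
      · intro a ha b _ c hc d _ _ _ hac
        exact absurd ((hS a ha).trans (hS c hc).symm) hac

/-- An injective ranking of a finite type is induced by a bijection with `Fin`. -/
theorem exists_equiv_fin_lt_iff {V : Type*} [Fintype V] {f : V → ℕ} (hf : Function.Injective f) :
    ∃ σ : V ≃ Fin (Fintype.card V), ∀ a b, σ a < σ b ↔ f a < f b := by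
  let _ : LinearOrder V := LinearOrder.lift' f hf
  exact ⟨(Fintype.orderIsoFinOfCardEq V rfl).symm.toEquiv,
    fun a b => (Fintype.orderIsoFinOfCardEq V rfl).symm.lt_iff_lt⟩

theorem SepPairs.sepPerm {V : Type*} {n : ℕ} {f : V → ℕ} {σ : V ≃ Fin n}
    (hσ : ∀ a b, σ a < σ b ↔ f a < f b) {a b c d : V} (h : SepPairs f a b c d) :
    SepPerm σ {x | x ∈ s(a, b)} {x | x ∈ s(c, d)} := by
  simp only [SepPerm, Set.mem_ofPred_eq, Sym2.mem_iff, hσ]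
  unfold SepPairs at h
  grind

/-- For any forest `G`, `π(G) ≤ 2`. -/
theorem stmt10 {V : Type*} [Fintype V] [DecidableEq V] (G : SimpleGraph V)
    (hG : G.IsAcyclic) : sepDim G ≤ 2 := by
  apply Nat.sInf_le
  rcases isEmpty_or_nonempty V with hV | ⟨⟨r⟩⟩
  · refine ⟨fun _ => Fintype.equivFin V, fun e _ => ?_⟩
    induction e with
    | h a b => exact hV.elim a
  · obtain ⟨f, g, hf, hg, -, hsep⟩ :=
      exists_sepPairs_of_isAcyclic hG Finset.univ r (Finset.mem_univ r)
    rw [Finset.coe_univ, Set.injOn_univ] at hf hg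
    obtain ⟨σ, hσ⟩ := exists_equiv_fin_lt_iff hf
    obtain ⟨τ, hτ⟩ := exists_equiv_fin_lt_iff hg
    refine ⟨![σ, τ], fun e he e' he' hdisj => ?_⟩
    induction e with
    | h a b =>
      induction e' with
      | h c d =>
        simp only [Sym2.mem_iff] at hdisj
        have hne : a ≠ c ∧ a ≠ d ∧ b ≠ c ∧ b ≠ d :=
          ⟨fun h => hdisj a ⟨.inl rfl, .inl h⟩, fun h => hdisj a ⟨.inl rfl, .inr h⟩,
            fun h => hdisj b ⟨.inr rfl, .inl h⟩, fun h => hdisj b ⟨.inr rfl, .inr h⟩⟩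
        rcases hsep a (by simp) b (by simp) c (by simp) d (by simp) he he' hne.1 hne.2.1 hne.2.2.1
          hne.2.2.2 with h | h
        · exact ⟨0, h.sepPerm hσ⟩
        · exact ⟨1, h.sepPerm hτ⟩
end

section
/- If the star chromatic number of G is χₛ, then π(G) ≤ χₛ + 13.68·log₂ χₛ; if the acyclic chromatic number is χₐ, then π(G) ≤ 2χₐ + 13.68·log₂ χₐ. -/
/-- `F` is a star forest: every connected component is a star. -/
def IsStarForest {V : Type*} (F : SimpleGraph V) : Prop :=
  ¬ ∃ a b c d : V, F.Adj a b ∧ F.Adj b c ∧ F.Adj c d ∧ a ≠ c ∧ b ≠ d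

open Finset in
/-- Greedy covering: if every constraint in `B` is satisfied by at least a third of the points
of `Ω`, then `k` points suffice to satisfy all constraints as soon as `|B| * (2 / 3) ^ k < 1`. -/
theorem exists_cover_of_third {β Ω : Type*} [Fintype Ω] [Nonempty Ω] (P : β → Ω → Prop)
    (hP : ∀ b, ∃ τ₁ τ₂ : Equiv.Perm Ω, ∀ ω, P b ω ∨ P b (τ₁ ω) ∨ P b (τ₂ ω)) (k : ℕ) :
    ∀ B : Finset β, #B * 2 ^ k < 3 ^ k → ∃ F : Fin k → Ω, ∀ b ∈ B, ∃ i, P b (F i) := by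
  classical
  have third (b : β) : Fintype.card Ω ≤ 3 * #{ω | P b ω} := by
    obtain ⟨τ₁, τ₂, h⟩ := hP b
    have hmap (τ : Equiv.Perm Ω) : #{ω | P b (τ ω)} = #{ω | P b ω} :=
      card_equiv τ (by simp)
    have hcover : (univ : Finset Ω) ⊆
        (({ω | P b ω} : Finset Ω) ∪ ({ω | P b (τ₁ ω)} : Finset Ω)) ∪
          ({ω | P b (τ₂ ω)} : Finset Ω) := by
      intro ω _
      simpa [or_assoc] using h ω
    have h₁ := card_le_card hcover
    have h₂ := card_union_le (({ω | P b ω} : Finset Ω) ∪ ({ω | P b (τ₁ ω)} : Finset Ω))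
      ({ω | P b (τ₂ ω)} : Finset Ω)
    have h₃ := card_union_le ({ω | P b ω} : Finset Ω) ({ω | P b (τ₁ ω)} : Finset Ω)
    rw [hmap] at h₂ h₃
    rw [card_univ] at h₁
    omega
  induction k with
  | zero =>
    intro B hB
    refine ⟨Fin.elim0, fun b hb => ?_⟩
    have := card_pos.2 ⟨b, hb⟩
    simp at hB
    simp [hB] at hb
  | succ k ih =>
    intro B hB
    obtain ⟨ω, hω⟩ : ∃ ω, #B ≤ 3 * #{b ∈ B | P b ω} := by
      by_contra! hcon
      have h₁ : ∑ b ∈ B, #{ω | P b ω} = ∑ ω, #{b ∈ B | P b ω} :=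
        sum_card_bipartiteAbove_eq_sum_card_bipartiteBelow (s := B) (t := univ) P
      have h₂ : Fintype.card Ω * #B ≤ 3 * ∑ b ∈ B, #{ω | P b ω} := by
        rw [mul_sum, mul_comm, ← smul_eq_mul, ← sum_const]
        exact sum_le_sum fun b _ => third b
      have h₃ : 3 * ∑ ω, #{b ∈ B | P b ω} < Fintype.card Ω * #B := by
        rw [mul_sum, ← card_univ, ← smul_eq_mul, ← sum_const]
        exact sum_lt_sum_of_nonempty univ_nonempty fun ω _ => hcon ω
      omega
    have hsplit := card_filter_add_card_filter_not (s := B) (fun b => P b ω)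
    obtain ⟨F, hF⟩ := ih {b ∈ B | ¬ P b ω} (by
      have h2 : 3 * #{b ∈ B | ¬ P b ω} ≤ 2 * #B := by omega
      have h3 := Nat.mul_le_mul_right (2 ^ k) h2
      rw [pow_succ, pow_succ] at hB
      nlinarith)
    refine ⟨Fin.cons ω F, fun b hb => ?_⟩
    by_cases hbω : P b ω
    · exact ⟨0, by simpa using hbω⟩
    · obtain ⟨i, hi⟩ := hF b (by simp [hb, hbω])
      exact ⟨i.succ, by simpa using hi⟩

/-- All of `p`, `q` lie weakly below, or all weakly above, `u`, `v`. -/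
def WeakSep {α : Type*} [LE α] (p q u v : α) : Prop :=
  ((p ≤ u ∧ p ≤ v) ∧ q ≤ u ∧ q ≤ v) ∨ ((u ≤ p ∧ v ≤ p) ∧ u ≤ q ∧ v ≤ q)

theorem weakSep_pairing {α : Type*} [LinearOrder α] (p q u v : α) :
    WeakSep p q u v ∨ WeakSep p u q v ∨ WeakSep p v u q := by
  unfold WeakSep
  grind

theorem weakSep_middle {α : Type*} [LinearOrder α] (p q v : α) :
    WeakSep p q p v ∨ WeakSep q p q v ∨ WeakSep v q v p := by
  unfold WeakSep
  grind

/-- Among the permutations of `Fin r`, a family of size `k` weakly separates all pairs of distinct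
two-element sets as soon as `r ^ 4 * 2 ^ k < 4 * 3 ^ k`. -/
theorem exists_weakly_separating_perms (r k : ℕ) (hk : r ^ 4 * 2 ^ k < 4 * 3 ^ k) :
    ∃ F : Fin k → Equiv.Perm (Fin r), ∀ a b c d : Fin r, a ≠ b → c ≠ d →
      ({a, b} : Finset (Fin r)) ≠ {c, d} →
        ∃ i, WeakSep (F i a) (F i b) (F i c) (F i d) := by
  classical
  let T := Finset.powersetCard 2 (Finset.univ : Finset (Fin r))
  let P : Finset (Fin r) × Finset (Fin r) → Equiv.Perm (Fin r) → Prop := fun p σ =>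
    p.1 ∈ T → p.2 ∈ T → p.1 ≠ p.2 →
      (∀ x ∈ p.1, ∀ y ∈ p.2, σ x ≤ σ y) ∨ (∀ x ∈ p.1, ∀ y ∈ p.2, σ y ≤ σ x)
  have P_pair (a b c d : Fin r) (σ : Equiv.Perm (Fin r))
      (h : WeakSep (σ a) (σ b) (σ c) (σ d)) : P ({a, b}, {c, d}) σ := fun _ _ _ => by
    simpa only [WeakSep, Finset.mem_insert, Finset.mem_singleton, forall_eq_or_imp, forall_eq]
      using h
  have hP (p) : ∃ τ₁ τ₂ : Equiv.Perm (Equiv.Perm (Fin r)),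
      ∀ ω, P p ω ∨ P p (τ₁ ω) ∨ P p (τ₂ ω) := by
    obtain ⟨e, f⟩ := p
    by_cases hp : e ∈ T ∧ f ∈ T ∧ e ≠ f
    swap
    · exact ⟨1, 1, fun ω => Or.inl fun h₁ h₂ h₃ => absurd ⟨h₁, h₂, h₃⟩ hp⟩
    obtain ⟨he, hf, hne⟩ := hp
    obtain ⟨a, b, hab, rfl⟩ := Finset.card_eq_two.1 (Finset.mem_powersetCard.1 he).2
    obtain ⟨c, d, hcd, rfl⟩ := Finset.card_eq_two.1 (Finset.mem_powersetCard.1 hf).2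
    have share (a b d : Fin r) (hab : a ≠ b) (had : a ≠ d) (hbd : b ≠ d) (σ : Equiv.Perm (Fin r)) :
        P ({a, b}, {a, d}) σ ∨ P ({a, b}, {a, d}) (σ * Equiv.swap a b) ∨
          P ({a, b}, {a, d}) (σ * Equiv.swap a d) := by
      refine (weakSep_middle (σ a) (σ b) (σ d)).imp (P_pair _ _ _ _ _)
        (Or.imp (fun h => P_pair _ _ _ _ _ ?_) (fun h => P_pair _ _ _ _ _ ?_))
      · simpa [Equiv.swap_apply_of_ne_of_ne had.symm hbd.symm] using h
      · simpa [Equiv.swap_apply_of_ne_of_ne hab.symm hbd] using h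
    by_cases hac : a = c
    · subst hac
      have hbd : b ≠ d := fun h => hne (by rw [h])
      exact ⟨Equiv.mulRight _, Equiv.mulRight _, share a b d hab hcd hbd⟩
    by_cases had : a = d
    · subst had
      have hbc : b ≠ c := fun h => hne (by rw [h, Finset.pair_comm])
      rw [Finset.pair_comm c a]
      exact ⟨Equiv.mulRight _, Equiv.mulRight _, share a b c hab hac hbc⟩
    by_cases hbc : b = c
    · subst hbc
      rw [Finset.pair_comm a b]
      exact ⟨Equiv.mulRight _, Equiv.mulRight _, share b a d hab.symm hcd had⟩
    by_cases hbd : b = d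
    · subst hbd
      rw [Finset.pair_comm a b, Finset.pair_comm c b]
      exact ⟨Equiv.mulRight _, Equiv.mulRight _, share b a c hab.symm hbc hac⟩
    refine ⟨Equiv.mulRight (Equiv.swap b c), Equiv.mulRight (Equiv.swap b d), fun σ => ?_⟩
    refine (weakSep_pairing (σ a) (σ b) (σ c) (σ d)).imp (P_pair _ _ _ _ _)
      (Or.imp (fun h => P_pair _ _ _ _ _ ?_) (fun h => P_pair _ _ _ _ _ ?_))
    · simpa [Equiv.swap_apply_of_ne_of_ne hab hac,
        Equiv.swap_apply_of_ne_of_ne (Ne.symm hbd) hcd.symm] using h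
    · simpa [Equiv.swap_apply_of_ne_of_ne hab had,
        Equiv.swap_apply_of_ne_of_ne (Ne.symm hbc) hcd] using h
  have hcard : (T ×ˢ T).card * 2 ^ k < 3 ^ k := by
    have h₁ : 2 * T.card ≤ r ^ 2 := by
      simp only [T, Finset.card_powersetCard, Finset.card_univ, Fintype.card_fin,
        Nat.choose_two_right]
      calc _ ≤ r * (r - 1) := Nat.mul_div_le _ _
        _ ≤ r * r := Nat.mul_le_mul_left _ (Nat.sub_le _ _)
        _ = r ^ 2 := (sq r).symm
    rw [Finset.card_product]
    have h₂ := Nat.mul_le_mul_right (2 ^ k) (Nat.mul_le_mul h₁ h₁)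
    nlinarith
  obtain ⟨F, hF⟩ := exists_cover_of_third P hP k (T ×ˢ T) hcard
  refine ⟨F, fun a b c d hab hcd hne => ?_⟩
  have h₁ : ({a, b} : Finset (Fin r)) ∈ T := by simp [T, Finset.mem_powersetCard, hab]
  have h₂ : ({c, d} : Finset (Fin r)) ∈ T := by simp [T, Finset.mem_powersetCard, hcd]
  obtain ⟨i, hi⟩ := hF (_, _) (Finset.mk_mem_product h₁ h₂)
  exact ⟨i, by simpa only [WeakSep, Finset.mem_insert, Finset.mem_singleton,
    forall_eq_or_imp, forall_eq] using hi h₁ h₂ hne⟩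

/-- The function `g` places the pair `a`, `b` entirely before or entirely after `x`, `y`. -/
def SepBy {V α : Type*} [LT α] (g : V → α) (a b x y : V) : Prop :=
  (g a < g x ∧ g a < g y ∧ g b < g x ∧ g b < g y) ∨
  (g x < g a ∧ g x < g b ∧ g y < g a ∧ g y < g b)

theorem SepBy.symm_pairs {V α : Type*} [LT α] {g : V → α} {a b x y : V} (h : SepBy g a b x y) :
    SepBy g x y a b := by
  unfold SepBy at *; tauto

theorem SepBy.swap {V α : Type*} [LT α] {g : V → α} {a b x y : V} (h : SepBy g a b x y) :
    SepBy g b a x y := by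
  unfold SepBy at *; tauto

theorem SepBy.of_lt {V α β : Type*} [LinearOrder α] [LT β] {g : V → α} {g' : V → β}
    (hg : ∀ u v, g u < g v → g' u < g' v) {a b x y : V} (h : SepBy g a b x y) :
    SepBy g' a b x y := by
  rcases h with ⟨h₁, h₂, h₃, h₄⟩ | ⟨h₁, h₂, h₃, h₄⟩
  · exact Or.inl ⟨hg _ _ h₁, hg _ _ h₂, hg _ _ h₃, hg _ _ h₄⟩
  · exact Or.inr ⟨hg _ _ h₁, hg _ _ h₂, hg _ _ h₃, hg _ _ h₄⟩

theorem exists_equiv_fin_of_lt {V α : Type*} [Fintype V] [LinearOrder α] (g : V → α) :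
    ∃ σ : V ≃ Fin (Fintype.card V), ∀ u v, g u < g v → σ u < σ v := by
  let f : V → α ×ₗ Fin (Fintype.card V) := fun v => toLex (g v, Fintype.equivFin V v)
  have hf : Function.Injective f := fun u v h => by
    simpa [f] using congrArg (fun p => (ofLex p).2) h
  let : LinearOrder V := LinearOrder.lift' f hf
  let σ := (Fintype.orderIsoFinOfCardEq V rfl).symm
  refine ⟨σ.toEquiv, fun u v h => σ.lt_iff_lt.2 ?_⟩
  change f u < f v
  exact Prod.Lex.toLex_lt_toLex.2 (Or.inl h)

/-- A finite family of height functions, possibly with ties, that separates all pairs of disjoint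
edges bounds the separation dimension. -/
theorem sepDim_le_card {V ι α : Type*} [Fintype V] [Fintype ι] [LinearOrder α]
    (G : SimpleGraph V) (g : ι → V → α)
    (h : ∀ a b x y, G.Adj a b → G.Adj x y → a ≠ x → a ≠ y → b ≠ x → b ≠ y →
      ∃ i, SepBy (g i) a b x y) : sepDim G ≤ Fintype.card ι := by
  choose σ hσ using fun i => exists_equiv_fin_of_lt (g i)
  refine Nat.sInf_le ⟨fun j => σ ((Fintype.equivFin ι).symm j), fun e he f hf hef => ?_⟩
  induction e with | _ a b
  induction f with | _ x y
  simp only [Sym2.mem_iff, not_and, not_or, forall_eq_or_imp, forall_eq] at hef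
  obtain ⟨i, hi⟩ := h a b x y he hf hef.1.1 hef.1.2 hef.2.1 hef.2.2
  refine ⟨Fintype.equivFin ι i, ?_⟩
  have := hi.of_lt (hσ i)
  simp only [Equiv.symm_apply_apply, SepPerm, Set.mem_ofPred_eq, Sym2.mem_iff, forall_eq_or_imp,
    forall_eq]
  unfold SepBy at this
  tauto

theorem SimpleGraph.IsAcyclic.exists_subsingleton_neighbors {W : Type*} [Finite W] [Nonempty W]
    {H : SimpleGraph W} (hH : H.IsAcyclic) :
    ∃ v, ∀ x y, H.Adj v x → H.Adj v y → x = y := by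
  classical
  obtain ⟨w⟩ := ‹Nonempty W›
  let C := H.connectedComponentMk w
  have hT := hH.isTree_connectedComponent C
  have mem {v x : W} (hv : v ∈ C.supp) (h : H.Adj v x) : x ∈ C.supp :=
    (C.mem_supp_congr_adj h).1 hv
  have : Fintype C := Fintype.ofFinite _
  rcases subsingleton_or_nontrivial C with hC | hC
  · refine ⟨w, fun x y hx hy => ?_⟩
    have hw : w ∈ C.supp := rfl
    exact congrArg Subtype.val
      (Subsingleton.elim (⟨x, mem hw hx⟩ : C) ⟨y, mem hw hy⟩)
  · obtain ⟨⟨v, hv⟩, hdeg⟩ := hT.exists_vert_degree_one_of_nontrivial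
    obtain ⟨u, -, hu⟩ := SimpleGraph.degree_eq_one_iff_existsUnique_adj.1 hdeg
    refine ⟨v, fun x y hx hy => ?_⟩
    have hx' := hu ⟨x, mem hv hx⟩ hx
    have hy' := hu ⟨y, mem hv hy⟩ hy
    exact congrArg Subtype.val (hx'.trans hy'.symm)

/-- Two orders separate the disjoint edges of a forest: build it by adding leaves, placing each new
leaf directly after its neighbour in the first order and last in the second. -/
theorem SimpleGraph.IsAcyclic.exists_two_separating {W : Type*} [Finite W] {H : SimpleGraph W}
    (hH : H.IsAcyclic) :
    ∃ g : Fin 2 → W → ℕ, ∀ a b x y, H.Adj a b → H.Adj x y → a ≠ x → a ≠ y → b ≠ x → b ≠ y →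
      ∃ i, SepBy (g i) a b x y := by
  classical
  have : Fintype W := Fintype.ofFinite W
  suffices key : ∀ n, ∀ s : Finset W, s.card = n → ∃ g₁ g₂ : W → ℕ, Set.InjOn g₁ s ∧
      (∀ p ∈ s, ∀ x ∈ s, ∀ y ∈ s, H.Adj x y → p ≠ x → p ≠ y →
        (g₁ p < g₁ x ∧ g₁ p < g₁ y) ∨ (g₁ x < g₁ p ∧ g₁ y < g₁ p) ∨
          (g₂ x < g₂ p ∧ g₂ y < g₂ p)) ∧
      (∀ a ∈ s, ∀ b ∈ s, ∀ x ∈ s, ∀ y ∈ s, H.Adj a b → H.Adj x y →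
        a ≠ x → a ≠ y → b ≠ x → b ≠ y → SepBy g₁ a b x y ∨ SepBy g₂ a b x y) by
    obtain ⟨g₁, g₂, -, -, h⟩ := key _ Finset.univ rfl
    refine ⟨![g₁, g₂], fun a b x y hab hxy h₁ h₂ h₃ h₄ => ?_⟩
    rcases h a (by simp) b (by simp) x (by simp) y (by simp) hab hxy h₁ h₂ h₃ h₄ with h | h
    · exact ⟨0, h⟩
    · exact ⟨1, h⟩
  intro n
  induction n with
  | zero =>
    intro s hs
    obtain rfl := Finset.card_eq_zero.1 hs
    exact ⟨0, 0, by simp⟩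
  | succ n ih =>
    intro s hs
    have : Nonempty (s : Set W) := (Finset.card_pos.1 (by omega : 0 < s.card)).to_subtype
    obtain ⟨⟨l, hl⟩, hl'⟩ := (hH.induce (s : Set W)).exists_subsingleton_neighbors
    have leaf : ∀ x ∈ s, ∀ y ∈ s, H.Adj l x → H.Adj l y → x = y := fun x hx y hy h₁ h₂ =>
      congrArg Subtype.val (hl' ⟨x, hx⟩ ⟨y, hy⟩ h₁ h₂)
    obtain ⟨g₁, g₂, hinj, hvert, hedge⟩ := ih (s.erase l) (by
      rw [Finset.card_erase_of_mem hl]; omega)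
    obtain ⟨p, hp⟩ : ∃ p, ∀ x ∈ s, H.Adj l x → x = p ∧ x ∈ s.erase l := by
      by_cases h : ∃ p ∈ s, H.Adj l p
      · obtain ⟨p, hps, hlp⟩ := h
        exact ⟨p, fun x hx hlx => ⟨leaf x hx p hps hlx hlp, Finset.mem_erase.2 ⟨hlx.ne', hx⟩⟩⟩
      · push Not at h
        exact ⟨l, fun x hx hlx => absurd hlx (h x hx)⟩
    obtain ⟨M, hM⟩ : ∃ M, ∀ x ∈ s, g₂ x < M :=
      ⟨s.sup g₂ + 1, fun x hx => Nat.lt_succ_of_le (Finset.le_sup hx)⟩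
    have old {x : W} (hx : x ∈ s) (hxl : x ≠ l) : x ∈ s.erase l := Finset.mem_erase.2 ⟨hxl, hx⟩
    let g₁' : W → ℕ := fun v => if v = l then 2 * g₁ p + 1 else 2 * g₁ v
    let g₂' : W → ℕ := fun v => if v = l then M else g₂ v
    have g₁l : g₁' l = 2 * g₁ p + 1 := if_pos rfl
    have g₂l : g₂' l = M := if_pos rfl
    have g₁o {v : W} (h : v ≠ l) : g₁' v = 2 * g₁ v := if_neg h
    have g₂o {v : W} (h : v ≠ l) : g₂' v = g₂ v := if_neg h
    have sep_leaf (q x y : W) (hq : q ∈ s) (hx : x ∈ s) (hy : y ∈ s) (hlq : H.Adj l q)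
        (hxy : H.Adj x y) (hlx : l ≠ x) (hly : l ≠ y) (hqx : q ≠ x) (hqy : q ≠ y) :
        SepBy g₁' l q x y ∨ SepBy g₂' l q x y := by
      obtain ⟨rfl, hqe⟩ := hp q hq hlq
      have hql := Finset.ne_of_mem_erase hqe
      have := hvert q hqe x (old hx hlx.symm) y (old hy hly.symm) hxy hqx hqy
      have := hM x hx
      have := hM y hy
      simp only [SepBy, g₁l, g₂l, g₁o hql, g₂o hql, g₁o hlx.symm, g₂o hlx.symm, g₁o hly.symm,
        g₂o hly.symm]
      omega
    have vert_leaf (q y : W) (hq : q ∈ s) (hy : y ∈ s) (hly : H.Adj l y) (hql : q ≠ l)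
        (hqy : q ≠ y) : (g₁' q < g₁' l ∧ g₁' q < g₁' y) ∨ (g₁' l < g₁' q ∧ g₁' y < g₁' q) := by
      obtain ⟨rfl, hye⟩ := hp y hy hly
      have : g₁ q ≠ g₁ y := fun h => hqy (hinj (old hq hql) hye h)
      rw [g₁l, g₁o hql, g₁o (Finset.ne_of_mem_erase hye)]
      omega
    refine ⟨g₁', g₂', ?_, ?_, ?_⟩
    · intro x hx y hy hxy
      by_cases hxl : x = l <;> by_cases hyl : y = l
      · rw [hxl, hyl]
      · rw [hxl, g₁l, g₁o hyl] at hxy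
        omega
      · rw [hyl, g₁l, g₁o hxl] at hxy
        omega
      · rw [g₁o hxl, g₁o hyl] at hxy
        exact hinj (old hx hxl) (old hy hyl) (by omega)
    · intro q hq x hx y hy hxy hqx hqy
      by_cases hql : q = l
      · subst hql
        rw [g₂l, g₂o hqx.symm, g₂o hqy.symm]
        exact Or.inr (Or.inr ⟨hM x hx, hM y hy⟩)
      by_cases hxl : x = l
      · subst hxl
        have := vert_leaf q y hq hy hxy hql hqy
        tauto
      by_cases hyl : y = l
      · subst hyl
        have := vert_leaf q x hq hx hxy.symm hql hqx
        tauto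
      have := hvert q (old hq hql) x (old hx hxl) y (old hy hyl) hxy hqx hqy
      rw [g₁o hql, g₁o hxl, g₁o hyl, g₂o hql, g₂o hxl, g₂o hyl]
      omega
    · intro a ha b hb x hx y hy hab hxy hax hay hbx hby
      by_cases hal : a = l
      · subst hal
        exact sep_leaf b x y hb hx hy hab hxy hax hay hbx hby
      by_cases hbl : b = l
      · subst hbl
        exact (sep_leaf a x y ha hx hy hab.symm hxy hbx hby hax hay).imp SepBy.swap SepBy.swap
      by_cases hxl : x = l
      · subst hxl
        exact (sep_leaf y a b hy ha hb hxy hab hax.symm hbx.symm hay.symm hby.symm).imp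
          SepBy.symm_pairs SepBy.symm_pairs
      by_cases hyl : y = l
      · subst hyl
        exact (sep_leaf x a b hx ha hb hxy.symm hab hay.symm hby.symm hax.symm hbx.symm).imp
          (fun h => h.swap.symm_pairs) (fun h => h.swap.symm_pairs)
      have := hedge a (old ha hal) b (old hb hbl) x (old hx hxl) y (old hy hyl) hab hxy
        hax hay hbx hby
      simp only [SepBy, g₁o hal, g₁o hbl, g₁o hxl, g₁o hyl, g₂o hal, g₂o hbl, g₂o hxl,
        g₂o hyl] at this ⊢
      omega

theorem IsStarForest.exists_separating {W : Type*} [Finite W] {H : SimpleGraph W}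
    (hH : IsStarForest H) :
    ∃ g : W → ℕ, ∀ a b x y, H.Adj a b → H.Adj x y → a ≠ x → a ≠ y → b ≠ x → b ≠ y →
      SepBy g a b x y := by
  classical
  obtain ⟨n, ⟨e⟩⟩ := Finite.exists_equiv_fin H.ConnectedComponent
  refine ⟨fun v => e (H.connectedComponentMk v), fun a b x y hab hxy hax hay hbx hby => ?_⟩
  have path {p q u v : W} (h₁ : H.Adj p q) (h₂ : H.Adj q u) (h₃ : H.Adj u v) (h₄ : p ≠ u) :
      q = v := by
    by_contra h
    exact hH ⟨p, q, u, v, h₁, h₂, h₃, h₄, h⟩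
  have near (v : W) (hv : H.Reachable a v) : v = a ∨ v = b ∨ H.Adj v a ∨ H.Adj v b := by
    rw [SimpleGraph.reachable_iff_reflTransGen] at hv
    induction hv with
    | refl => exact Or.inl rfl
    | @tail u w _ huw ih =>
      rcases ih with rfl | rfl | h | h
      · exact Or.inr (Or.inr (Or.inl huw.symm))
      · exact Or.inr (Or.inr (Or.inr huw.symm))
      · by_cases hwa : w = a
        · exact Or.inl hwa
        · exact Or.inr (Or.inr (Or.inr (path huw.symm h hab hwa ▸ huw.symm)))
      · by_cases hwb : w = b
        · exact Or.inr (Or.inl hwb)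
        · exact Or.inr (Or.inr (Or.inl (path huw.symm h hab.symm hwb ▸ huw.symm)))
  have hcomp : e (H.connectedComponentMk a) ≠ e (H.connectedComponentMk x) := by
    intro h
    have hr : H.Reachable a x := SimpleGraph.ConnectedComponent.exact (e.injective h)
    rcases near x hr with h | h | h | h
    · exact hax h.symm
    · exact hbx h.symm
    · exact hbx (path hxy.symm h hab hay.symm).symm
    · exact hax (path hxy.symm h hab.symm hby.symm).symm
  have hb : H.connectedComponentMk b = H.connectedComponentMk a :=
    SimpleGraph.ConnectedComponent.sound hab.symm.reachable
  have hy : H.connectedComponentMk y = H.connectedComponentMk x :=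
    SimpleGraph.ConnectedComponent.sound hxy.symm.reachable
  simp only [SepBy, hb, hy, and_self]
  simpa using lt_or_gt_of_ne hcomp

theorem lex_lt_or_lt_reversed {α β : Type*} [LinearOrder α] [LinearOrder β]
    {p q u v : α} {p' q' u' v' : β} (hpu : p ≤ u) (hpv : p ≤ v) (hqu : q ≤ u) (hqv : q ≤ v)
    (hpu' : p' ≠ u') (hpv' : p' ≠ v') (hqu' : q' ≠ u') (hqv' : q' ≠ v') (hpq : p ≠ q)
    (huv : u ≠ v) (hne : ¬ ((p = u ∧ q = v) ∨ (p = v ∧ q = u))) :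
    ((p < u ∨ p = u ∧ p' < u') ∧ (p < v ∨ p = v ∧ p' < v') ∧
      (q < u ∨ q = u ∧ q' < u') ∧ (q < v ∨ q = v ∧ q' < v')) ∨
    ((p < u ∨ p = u ∧ u' < p') ∧ (p < v ∨ p = v ∧ v' < p') ∧
      (q < u ∨ q = u ∧ u' < q') ∧ (q < v ∨ q = v ∧ v' < q')) := by
  grind

/-- Ties in a weak separation are broken by an injective second coordinate or its negative. -/
theorem exists_lex_sepBy {V : Type*} (A T : V → ℕ) (hT : Function.Injective T) {a b x y : V}
    (h : WeakSep (A a) (A b) (A x) (A y)) (hax : a ≠ x) (hay : a ≠ y) (hbx : b ≠ x) (hby : b ≠ y)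
    (hab : A a ≠ A b) (hxy : A x ≠ A y)
    (hne : ¬ ((A a = A x ∧ A b = A y) ∨ (A a = A y ∧ A b = A x))) :
    ∃ q : Bool, SepBy (fun v => (toLex (A v, if q then (T v : ℤ) else -(T v : ℤ)) : ℕ ×ₗ ℤ))
      a b x y := by
  simp only [Bool.exists_bool, SepBy, Prod.Lex.toLex_lt_toLex, if_true, Bool.false_eq_true,
    if_false, neg_lt_neg_iff, Nat.cast_lt]
  rcases h with ⟨⟨h₁, h₂⟩, h₃, h₄⟩ | ⟨⟨h₁, h₂⟩, h₃, h₄⟩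
  · exact (lex_lt_or_lt_reversed h₁ h₂ h₃ h₄ (hT.ne hax) (hT.ne hay) (hT.ne hbx) (hT.ne hby)
      hab hxy hne).symm.imp Or.inl Or.inl
  · exact (lex_lt_or_lt_reversed h₁ h₃ h₂ h₄ (hT.ne hax.symm) (hT.ne hbx.symm)
      (hT.ne hay.symm) (hT.ne hby.symm) hxy hab (by omega)).symm.imp Or.inr Or.inr

/-- The partition lemma: if disjoint edges within any two colour classes are separated by `t` orders
and `k` permutations of the colours weakly separate all pairs of colours, then `2 * k + r * t` orders
suffice for the whole graph. -/
theorem sepDim_le_of_two_colour_classes {V : Type*} [Fintype V] (G : SimpleGraph V) (r k t : ℕ)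
    (hk : r ^ 4 * 2 ^ k < 4 * 3 ^ k) (c : V → Fin r) (hc : ∀ u v, G.Adj u v → c u ≠ c v)
    (hsep : ∀ i j : Fin r, ∃ g : Fin t → {v : V | c v = i ∨ c v = j} → ℕ,
      ∀ a b x y, (G.induce {v : V | c v = i ∨ c v = j}).Adj a b →
        (G.induce {v : V | c v = i ∨ c v = j}).Adj x y →
        a ≠ x → a ≠ y → b ≠ x → b ≠ y → ∃ m, SepBy (g m) a b x y) :
    sepDim G ≤ 2 * k + r * t := by
  classical
  have hsym (p : Sym2 (Fin r)) : ∃ g : Fin t → V → ℕ, ∀ a b x y, G.Adj a b → G.Adj x y →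
      s(c a, c b) = p → s(c x, c y) = p → a ≠ x → a ≠ y → b ≠ x → b ≠ y →
      ∃ m, SepBy (g m) a b x y := by
    induction p with | _ i j
    obtain ⟨g, hg⟩ := hsep i j
    refine ⟨fun m v => if hv : c v = i ∨ c v = j then g m ⟨v, hv⟩ else 0,
      fun a b x y hab hxy hpa hpx h₁ h₂ h₃ h₄ => ?_⟩
    have ha : c a = i ∨ c a = j := by rw [Sym2.eq_iff] at hpa; tauto
    have hb : c b = i ∨ c b = j := by rw [Sym2.eq_iff] at hpa; tauto
    have hx : c x = i ∨ c x = j := by rw [Sym2.eq_iff] at hpx; tauto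
    have hy : c y = i ∨ c y = j := by rw [Sym2.eq_iff] at hpx; tauto
    obtain ⟨m, hm⟩ := hg ⟨a, ha⟩ ⟨b, hb⟩ ⟨x, hx⟩ ⟨y, hy⟩ hab hxy (by simpa using h₁)
      (by simpa using h₂) (by simpa using h₃) (by simpa using h₄)
    refine ⟨m, ?_⟩
    simpa only [SepBy, ha, hb, hx, hy, dif_pos] using hm
  choose g hg using hsym
  obtain ⟨F, hF⟩ := exists_weakly_separating_perms r k hk
  let τ := Fintype.equivFin V
  let f : (Fin k × Bool) ⊕ (Fin r × Fin t) → V → ℕ ×ₗ ℤ := Sum.elim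
    (fun q v => toLex ((F q.1 (c v) : ℕ), if q.2 then ((τ v : ℕ) : ℤ) else -((τ v : ℕ) : ℤ)))
    (fun q v => toLex (g s(c v, q.1 - c v) q.2 v, 0))
  have hcard := sepDim_le_card G f ?_
  · simpa [Fintype.card_sum, mul_comm] using hcard
  intro a b x y hab hxy hax hay hbx hby
  by_cases hp : s(c a, c b) = s(c x, c y)
  · have : NeZero r := ⟨fun h => by subst h; exact (c a).elim0⟩
    obtain ⟨m, hm⟩ := hg _ a b x y hab hxy rfl hp.symm hax hay hbx hby
    refine ⟨Sum.inr (c a + c b, m), ?_⟩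
    have ha : s(c a, c a + c b - c a) = s(c a, c b) := by rw [add_sub_cancel_left]
    have hb : s(c b, c a + c b - c b) = s(c a, c b) := by rw [add_sub_cancel_right, Sym2.eq_swap]
    have hsum : c a + c b = c x + c y := by
      rcases Sym2.eq_iff.1 hp with ⟨h₁, h₂⟩ | ⟨h₁, h₂⟩ <;> rw [h₁, h₂]
      rw [add_comm]
    have hx : s(c x, c a + c b - c x) = s(c a, c b) := by rw [hsum, add_sub_cancel_left, hp]
    have hy : s(c y, c a + c b - c y) = s(c a, c b) := by
      rw [hsum, add_sub_cancel_right, hp, Sym2.eq_swap]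
    simp only [SepBy, f, Sum.elim_inr, ha, hb, hx, hy, Prod.Lex.toLex_lt_toLex]
    simpa [SepBy] using hm
  · have hne : ({c a, c b} : Finset (Fin r)) ≠ {c x, c y} := by
      intro h
      apply hp
      have hm (z : Fin r) : (z = c a ∨ z = c b) ↔ (z = c x ∨ z = c y) := by
        simpa using Finset.ext_iff.1 h z
      ext z
      simpa using hm z
    obtain ⟨i, hi⟩ := hF (c a) (c b) (c x) (c y) (hc _ _ hab) (hc _ _ hxy) hne
    have inj {u v : Fin r} (h : (F i u : ℕ) = F i v) : u = v := (F i).injective (Fin.ext h)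
    suffices ∃ q : Bool, SepBy (f (Sum.inl (i, q))) a b x y from this.elim fun q h => ⟨_, h⟩
    refine exists_lex_sepBy (fun v => (F i (c v) : ℕ)) (fun v => (τ v : ℕ)) ?_ hi
      hax hay hbx hby ?_ ?_ ?_
    · exact fun u v h => τ.injective (Fin.ext (by simpa using h))
    · exact fun h => hc _ _ hab (inj h)
    · exact fun h => hc _ _ hxy (inj h)
    · exact fun h => hp (Sym2.eq_iff.2 (h.imp (And.imp inj inj) (And.imp inj inj)))

theorem exists_nat_pow_lt_and_le_logb (r : ℕ) (hr : 2 ≤ r) :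
    ∃ k : ℕ, r ^ 4 * 2 ^ k < 4 * 3 ^ k ∧ (2 * k : ℝ) ≤ 13.68 * Real.logb 2 r := by
  have hr' : (2 : ℝ) ≤ r := by exact_mod_cast hr
  set L := Real.logb 2 r with hL
  have hL0 : 0 ≤ L := Real.logb_nonneg (by norm_num) (by linarith)
  have hrL : (2 : ℝ) ^ L = r := Real.rpow_logb (by norm_num) (by norm_num) (by linarith)
  refine ⟨⌊6.84 * L⌋₊, ?_, ?_⟩
  swap
  · have := Nat.floor_le (a := 6.84 * L) (by positivity)
    linarith
  set k := ⌊6.84 * L⌋₊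
  have hlt : 6.84 * L < k + 1 := Nat.lt_floor_add_one _
  have hbase : (16 : ℝ) ≤ (3 / 2 : ℝ) ^ (6.84 : ℝ) := by
    have h : ((16 : ℝ)) ^ (25 : ℕ) ≤ ((3 / 2 : ℝ) ^ (6.84 : ℝ)) ^ (25 : ℕ) := by
      rw [← Real.rpow_natCast ((3 / 2 : ℝ) ^ (6.84 : ℝ)), ← Real.rpow_mul (by norm_num)]
      have : (6.84 : ℝ) * ((25 : ℕ) : ℝ) = ((171 : ℕ) : ℝ) := by norm_num
      rw [this, Real.rpow_natCast]
      norm_num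
    exact le_of_pow_le_pow_left₀ (by norm_num) (by positivity) h
  have hmain : (r : ℝ) ^ 4 < (3 / 2 : ℝ) ^ (k + 1) := by
    calc (r : ℝ) ^ 4 = (16 : ℝ) ^ L := by
          rw [← hrL, ← Real.rpow_natCast, ← Real.rpow_mul (by norm_num), mul_comm,
            Real.rpow_mul (by norm_num)]
          norm_num
      _ ≤ ((3 / 2 : ℝ) ^ (6.84 : ℝ)) ^ L := Real.rpow_le_rpow (by norm_num) hbase hL0
      _ = (3 / 2 : ℝ) ^ (6.84 * L) := (Real.rpow_mul (by norm_num) _ _).symm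
      _ < (3 / 2 : ℝ) ^ ((k : ℝ) + 1) := Real.rpow_lt_rpow_of_exponent_lt (by norm_num) hlt
      _ = (3 / 2 : ℝ) ^ (k + 1) := by exact_mod_cast Real.rpow_natCast (3 / 2 : ℝ) (k + 1)
  have : (r : ℝ) ^ 4 * 2 ^ k < 4 * 3 ^ k := by
    have h2 : (0 : ℝ) < 2 ^ k := by positivity
    have h3 : (0 : ℝ) < 3 ^ k := by positivity
    rw [pow_succ (3 / 2 : ℝ), div_pow] at hmain
    calc (r : ℝ) ^ 4 * 2 ^ k < (3 ^ k / 2 ^ k * (3 / 2)) * 2 ^ k :=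
          mul_lt_mul_of_pos_right hmain h2
      _ = 3 ^ k * (3 / 2) := by field_simp
      _ < 4 * 3 ^ k := by linarith
  exact_mod_cast this

theorem sepDim_le_of_colouring {V : Type*} [Fintype V] (G : SimpleGraph V) (r t : ℕ)
    (c : V → Fin r) (hc : ∀ u v, G.Adj u v → c u ≠ c v)
    (hsep : ∀ i j : Fin r, ∃ g : Fin t → {v : V | c v = i ∨ c v = j} → ℕ,
      ∀ a b x y, (G.induce {v : V | c v = i ∨ c v = j}).Adj a b →
        (G.induce {v : V | c v = i ∨ c v = j}).Adj x y →
        a ≠ x → a ≠ y → b ≠ x → b ≠ y → ∃ m, SepBy (g m) a b x y) :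
    (sepDim G : ℝ) ≤ t * r + 13.68 * Real.logb 2 r := by
  rcases lt_or_ge r 2 with hr | hr
  · have h0 : sepDim G ≤ Fintype.card (Fin 0) :=
      sepDim_le_card G (fun _ _ => (0 : ℕ)) fun a b _ _ hab => by
        have := hc a b hab
        omega
    have h0' : sepDim G = 0 := by simpa using h0
    have hlog : Real.logb 2 r = 0 := by
      interval_cases r <;> simp
    rw [h0', hlog]
    simp
    positivity
  · obtain ⟨k, hk, hle⟩ := exists_nat_pow_lt_and_le_logb r hr
    have h : (sepDim G : ℝ) ≤ 2 * k + r * t := by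
      exact_mod_cast sepDim_le_of_two_colour_classes G r k t hk c hc hsep
    linarith

/-- If `G` has an acyclic colouring with `ka` colours then
`π(G) ≤ 2·ka + 13.68·log₂ ka`, and if `G` has a star colouring with `ks`
colours then `π(G) ≤ ks + 13.68·log₂ ks`. -/
theorem stmt12 {V : Type*} [Fintype V] [DecidableEq V] (G : SimpleGraph V)
    (ka ks : ℕ)
    (ha : ∃ c : V → Fin ka, (∀ u v, G.Adj u v → c u ≠ c v) ∧
      ∀ i j : Fin ka, (G.induce {v : V | c v = i ∨ c v = j}).IsAcyclic)
    (hs : ∃ c : V → Fin ks, (∀ u v, G.Adj u v → c u ≠ c v) ∧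
      ∀ i j : Fin ks, IsStarForest (G.induce {v : V | c v = i ∨ c v = j})) :
    (sepDim G : ℝ) ≤ 2 * ka + 13.68 * Real.logb 2 ka ∧
    (sepDim G : ℝ) ≤ ks + 13.68 * Real.logb 2 ks := by
  obtain ⟨ca, hca, hforest⟩ := ha
  obtain ⟨cs, hcs, hstar⟩ := hs
  constructor
  · exact_mod_cast sepDim_le_of_colouring G ka 2 ca hca fun i j =>
      (hforest i j).exists_two_separating
  · have h := sepDim_le_of_colouring G ks 1 cs hcs fun i j => by
      obtain ⟨g, hg⟩ := (hstar i j).exists_separating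
      exact ⟨fun _ => g, fun a b x y h₁ h₂ h₃ h₄ h₅ h₆ => ⟨0, hg a b x y h₁ h₂ h₃ h₄ h₅ h₆⟩⟩
    simpa using h
end

section
/- Every planar graph G has separation dimension at most 3, and K₄ has separation dimension exactly 3. -/
/-- `f` is a straight-line plane drawing of `G`: vertices go to distinct points
of the plane, disjoint edges have disjoint segments, edges sharing a vertex
meet only at its image, and no vertex lies on the segment of another edge. -/
def IsPlanarDrawing {V : Type*} (G : SimpleGraph V) (f : V → ℝ × ℝ) : Prop :=
  Function.Injective f ∧
  (∀ a b c d : V, G.Adj a b → G.Adj c d → a ≠ c → a ≠ d → b ≠ c → b ≠ d →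
    Disjoint (segment ℝ (f a) (f b)) (segment ℝ (f c) (f d))) ∧
  (∀ a b c : V, G.Adj a b → G.Adj a c → b ≠ c →
    segment ℝ (f a) (f b) ∩ segment ℝ (f a) (f c) = {f a}) ∧
  (∀ a b c : V, G.Adj a b → c ≠ a → c ≠ b → f c ∉ segment ℝ (f a) (f b))

namespace PlanarSep

/-- Three real keys such that every vertex beats every edge avoiding it in one of them. -/
def IsRealizer {V : Type*} (G : SimpleGraph V) (κ : Fin 3 → V → ℝ) : Prop :=
  ∀ a b c, G.Adj a b → c ≠ a → c ≠ b → ∃ i, κ i a < κ i c ∧ κ i b < κ i c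

lemma exists_equiv_fin_of_key {V : Type*} [Fintype V] (κ : V → ℝ) :
    ∃ σ : V ≃ Fin (Fintype.card V), ∀ x y, κ x < κ y → σ x < σ y := by
  let e := Fintype.equivFin V
  refine ⟨e.trans (Tuple.sort (κ ∘ e.symm)).symm, fun x y h => ?_⟩
  by_contra hle
  have := Tuple.monotone_sort (κ ∘ e.symm) (not_lt.mp hle)
  simp at this
  linarith

lemma IsRealizer.separates {V : Type*} {G : SimpleGraph V} {κ : Fin 3 → V → ℝ}
    (h : IsRealizer G κ) {a b c d : V} (hab : G.Adj a b) (hcd : G.Adj c d)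
    (hac : a ≠ c) (had : a ≠ d) (hbc : b ≠ c) (hbd : b ≠ d) :
    ∃ i, (κ i a < κ i c ∧ κ i a < κ i d ∧ κ i b < κ i c ∧ κ i b < κ i d) ∨
      (κ i c < κ i a ∧ κ i d < κ i a ∧ κ i c < κ i b ∧ κ i d < κ i b) := by
  obtain ⟨i, hi⟩ := h a b c hab hac.symm hbc.symm
  obtain ⟨j, hj⟩ := h a b d hab had.symm hbd.symm
  obtain ⟨k, hk⟩ := h c d a hcd hac had
  obtain ⟨l, hl⟩ := h c d b hcd hbc hbd
  have hki : k ≠ i := by rintro rfl; linarith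
  have hkj : k ≠ j := by rintro rfl; linarith
  have hli : l ≠ i := by rintro rfl; linarith
  have hlj : l ≠ j := by rintro rfl; linarith
  by_cases hij : i = j
  · subst hij
    exact ⟨i, Or.inl ⟨hi.1, hj.1, hi.2, hj.2⟩⟩
  · have hkl : k = l := by omega
    subst hkl
    exact ⟨k, Or.inr ⟨hk.1, hk.2, hl.1, hl.2⟩⟩

lemma IsRealizer.exists_pwSuitable {V : Type*} [Fintype V] {G : SimpleGraph V}
    {κ : Fin 3 → V → ℝ} (h : IsRealizer G κ) :
    ∃ F : Fin 3 → (V ≃ Fin (Fintype.card V)), PWSuitable G F := by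
  choose F hF using fun i => exists_equiv_fin_of_key (κ i)
  refine ⟨F, fun e he f hf hd => ?_⟩
  induction e with | _ a b
  induction f with | _ c d
  rw [SimpleGraph.mem_edgeSet] at he hf
  simp only [Sym2.mem_iff, not_and, not_or] at hd
  obtain ⟨hac, had⟩ := hd a (Or.inl rfl)
  obtain ⟨hbc, hbd⟩ := hd b (Or.inr rfl)
  obtain ⟨i, hi⟩ := h.separates he hf hac had hbc hbd
  refine ⟨i, hi.imp ?_ ?_⟩ <;> rintro ⟨h1, h2, h3, h4⟩ <;>
    simp only [Set.mem_ofPred_eq, Sym2.mem_iff] <;>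
    rintro x (rfl | rfl) y (rfl | rfl) <;> apply hF <;> assumption

lemma IsRealizer.sepDim_le {V : Type*} [Fintype V] {G : SimpleGraph V} {κ : Fin 3 → V → ℝ}
    (h : IsRealizer G κ) : sepDim G ≤ 3 :=
  Nat.sInf_le h.exists_pwSuitable

/-- `Peel G S c`: the vertex set `S` can be built from two vertices by adding one vertex at a
time, each new vertex being joined only to a block of consecutive vertices of the current
contour and replacing the interior of that block; `c` is the resulting contour. -/
inductive Peel {V : Type*} [DecidableEq V] (G : SimpleGraph V) : Finset V → List V → Prop
  | base (s t : V) (hst : s ≠ t) : Peel G {s, t} [s, t]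
  | step (S : Finset V) (A B M : List V) (a b v : V) :
      Peel G S (A ++ a :: M ++ b :: B) → v ∉ S →
      (∀ w ∈ S, G.Adj v w → w ∈ a :: M ++ [b]) →
      Peel G (insert v S) (A ++ a :: v :: b :: B)

lemma exists_gt_lt_of_finset (s : Finset ℝ) (a : ℝ) : ∃ b > a, ∀ x ∈ s, a < x → b < x := by
  induction s using Finset.induction with
  | empty => exact ⟨a + 1, by linarith, by simp⟩
  | insert y s hy ih =>
    obtain ⟨b, hb, h⟩ := ih
    by_cases hay : a < y
    · refine ⟨min b ((a + y) / 2), by simp; exact ⟨hb, by linarith⟩, ?_⟩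
      intro x hx hax
      rcases Finset.mem_insert.mp hx with rfl | hx
      · exact (min_le_right _ _).trans_lt (by linarith)
      · exact (min_le_left _ _).trans_lt (h x hx hax)
    · refine ⟨b, hb, fun x hx hax => ?_⟩
      rcases Finset.mem_insert.mp hx with rfl | hx
      · exact absurd hax hay
      · exact h x hx hax

/-- The keys `t`, `l`, `r` realize `G` on `S`, and the contour `c` is an antichain of minimal
elements for `l` and `r`, listed in decreasing order for `l`. -/
structure ContourKeys {V : Type*} (G : SimpleGraph V) (S : Finset V) (c : List V)
    (t l r : V → ℝ) : Prop where
  subset : ∀ x ∈ c, x ∈ S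
  left : c.Pairwise (fun x y => l y < l x)
  right : c.Pairwise (fun x y => r x < r y)
  minimal : ∀ w ∈ c, ∀ z ∈ S, z ≠ w → l w < l z ∨ r w < r z
  edge : ∀ x ∈ S, ∀ y ∈ S, ∀ z ∈ S, G.Adj x y → z ≠ x → z ≠ y →
    (t x < t z ∧ t y < t z) ∨ (l x < l z ∧ l y < l z) ∨ (r x < r z ∧ r y < r z)

lemma pairwise_append_cons {α : Type*} {R : α → α → Prop} {A B : List α} {v : α}
    (h : (A ++ B).Pairwise R) (hA : ∀ x ∈ A, R x v) (hB : ∀ y ∈ B, R v y) :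
    (A ++ v :: B).Pairwise R := by
  rw [List.pairwise_append] at h ⊢
  refine ⟨h.1, List.pairwise_cons.mpr ⟨hB, h.2.1⟩, fun x hx y hy => ?_⟩
  rcases List.mem_cons.mp hy with rfl | hy
  · exact hA x hx
  · exact h.2.2 x hx y hy

lemma Peel.exists_keys {V : Type*} [DecidableEq V] {G : SimpleGraph V} {S : Finset V}
    {c : List V} (h : Peel G S c) : ∃ t l r, ContourKeys G S c t l r := by
  induction h with
  | base s t hst =>
    refine ⟨fun _ => 0, fun x => if x = s then 1 else 0, fun x => if x = s then 0 else 1, ?_⟩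
    constructor
    · simp
    · simp [hst.symm]
    · simp [hst.symm]
    · simp [hst, hst.symm]
    · intro x hx y hy z hz hxy hzx hzy
      have := hxy.ne
      simp only [Finset.mem_insert, Finset.mem_singleton] at hx hy hz
      grind
  | step S A B M a b v _ hv hN ih =>
    obtain ⟨t, l, r, K⟩ := ih
    obtain ⟨T, hT⟩ := (S.image t).exists_le
    obtain ⟨l₀, hl₀, hl⟩ := exists_gt_lt_of_finset (S.image l) (l b)
    obtain ⟨r₀, hr₀, hr⟩ := exists_gt_lt_of_finset (S.image r) (r a)
    simp only [Finset.mem_image, forall_exists_index, and_imp, forall_apply_eq_imp_iff₂]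
      at hT hl hr
    have hne : ∀ x ∈ S, x ≠ v := fun x hx h => hv (h ▸ hx)
    have hsub := K.subset
    have hleft := K.left
    have hright := K.right
    have hmin := K.minimal
    simp only [List.append_assoc, List.cons_append, List.pairwise_append, List.pairwise_cons,
      List.mem_append, List.mem_cons] at hsub hleft hright hmin hN
    have haS : a ∈ S := hsub a (by simp)
    have hbS : b ∈ S := hsub b (by simp)
    refine ⟨Function.update t v (T + 1), Function.update l v l₀, Function.update r v r₀, ?_⟩
    have ul : ∀ x ∈ S, Function.update l v l₀ x = l x := fun x hx =>
      Function.update_of_ne (hne x hx) _ _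
    have ur : ∀ x ∈ S, Function.update r v r₀ x = r x := fun x hx =>
      Function.update_of_ne (hne x hx) _ _
    have ut : ∀ x ∈ S, Function.update t v (T + 1) x = t x := fun x hx =>
      Function.update_of_ne (hne x hx) _ _
    have hab : l b < l a ∧ r a < r b := by grind
    have hsl : ((A ++ [a]) ++ b :: B).Sublist (A ++ a :: M ++ b :: B) := by
      simp
    have key : ∀ w, w = a ∨ w ∈ M ∨ w = b → ∀ z ∈ S, z ≠ w →
        (l w < l z ∧ l₀ < l z) ∨ (r w < r z ∧ r₀ < r z) := by
      intro w hw z hz hzw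
      have hwb : l b ≤ l w := by grind
      have hwa : r a ≤ r w := by grind
      rcases hmin w (by grind) z hz hzw with h | h
      · exact Or.inl ⟨h, hl z hz (by linarith)⟩
      · exact Or.inr ⟨h, hr z hz (by linarith)⟩
    constructor
    · grind
    · have h1 : ∀ x ∈ A ++ [a], l₀ < l x := fun x hx => hl x (by grind) (by grind)
      have h2 : ∀ x ∈ b :: B, l x < l₀ := fun x hx => by grind
      rw [show A ++ a :: v :: b :: B = (A ++ [a]) ++ v :: (b :: B) by simp]
      refine pairwise_append_cons ((K.left.sublist hsl).imp_of_mem fun {x y} hx hy hxy => ?_)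
        (fun x hx => ?_) (fun x hx => ?_)
      · rwa [ul x (by grind), ul y (by grind)]
      · rw [ul x (by grind), Function.update_self]; exact h1 x hx
      · rw [ul x (by grind), Function.update_self]; exact h2 x hx
    · have h1 : ∀ x ∈ b :: B, r₀ < r x := fun x hx => hr x (by grind) (by grind)
      have h2 : ∀ x ∈ A ++ [a], r x < r₀ := fun x hx => by grind
      rw [show A ++ a :: v :: b :: B = (A ++ [a]) ++ v :: (b :: B) by simp]
      refine pairwise_append_cons ((K.right.sublist hsl).imp_of_mem fun {x y} hx hy hxy => ?_)
        (fun x hx => ?_) (fun x hx => ?_)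
      · rwa [ur x (by grind), ur y (by grind)]
      · rw [ur x (by grind), Function.update_self]; exact h2 x hx
      · rw [ur x (by grind), Function.update_self]; exact h1 x hx
    · have h1 : ∀ x ∈ A ++ [a], r x < r₀ := fun x hx => by grind
      have h2 : ∀ x ∈ b :: B, l x < l₀ := fun x hx => by grind
      have h3 : ∀ z ∈ S, l₀ < l z ∨ r₀ < r z := by
        intro z hz
        by_cases hza : z = a
        · subst hza
          exact Or.inl (hl z hz hab.1)
        · rcases key a (Or.inl rfl) z hz hza with h | h
          · exact Or.inl h.2
          · exact Or.inr h.2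
      intro w hw z hz hzw
      simp only [List.mem_append, List.mem_cons] at hw
      rcases Finset.mem_insert.mp hz with rfl | hz'
      · have hw' : w ∈ A ++ [a] ∨ w ∈ b :: B := by grind
        have hwS : w ∈ S := by grind
        rw [ul w hwS, ur w hwS, Function.update_self, Function.update_self]
        exact (hw'.imp (h1 w) (h2 w)).symm
      · by_cases hwv : w = v
        · subst hwv
          simpa [ul z hz', ur z hz'] using h3 z hz'
        · have hwS : w ∈ S := by grind
          rw [ul w hwS, ur w hwS, ul z hz', ur z hz']
          exact hmin w (by grind) z hz' hzw
    · have new : ∀ y ∈ S, ∀ z ∈ S, G.Adj v y → z ≠ y →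
          (l₀ < l z ∧ l y < l z) ∨ (r₀ < r z ∧ r y < r z) := by
        intro y hy z hz hvy hzy
        have := key y (by have := hN y hy hvy; grind) z hz hzy
        grind
      intro x hx y hy z hz hxy hzx hzy
      rcases Finset.mem_insert.mp hz with rfl | hz'
      · left
        have hx' : x ∈ S := by grind
        have hy' : y ∈ S := by grind
        rw [ut x hx', ut y hy', Function.update_self]
        constructor <;> linarith [hT x hx', hT y hy']
      · rw [ut z hz', ul z hz', ur z hz']
        rcases Finset.mem_insert.mp hx with rfl | hx' <;>
          rcases Finset.mem_insert.mp hy with rfl | hy'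
        · exact absurd rfl hxy.ne
        · rw [Function.update_self, Function.update_self, Function.update_self, ut y hy',
            ul y hy', ur y hy']
          exact Or.inr (new y hy' z hz' hxy hzy)
        · rw [Function.update_self, Function.update_self, Function.update_self, ut x hx',
            ul x hx', ur x hx']
          have := new x hx' z hz' hxy.symm hzx
          tauto
        · rw [ut x hx', ul x hx', ur x hx', ut y hy', ul y hy', ur y hy']
          exact K.edge x hx' y hy' z hz' hxy hzx hzy

lemma Peel.exists_isRealizer {V : Type*} [Fintype V] [DecidableEq V] {G : SimpleGraph V}
    {c : List V} (h : Peel G Finset.univ c) : ∃ κ, IsRealizer G κ := by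
  obtain ⟨t, l, r, K⟩ := h.exists_keys
  refine ⟨![t, l, r], fun a b c hab hca hcb => ?_⟩
  rcases K.edge a (by simp) b (by simp) c (by simp) hab hca hcb with h | h | h
  · exact ⟨0, h⟩
  · exact ⟨1, h⟩
  · exact ⟨2, h⟩

/-- A system of positively oriented triangles of `G`, at most one to the left of each dart. -/
structure IsTriangleSystem {V : Type*} (G : SimpleGraph V) (T : V → V → V → Prop) : Prop where
  rot : ∀ {x y z}, T x y z → T y z x
  adj : ∀ {x y z}, T x y z → G.Adj x y
  unique : ∀ {x y z w}, T x y z → T x y w → z = w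

/-- The neighbours of `x` in `S` form a fan of triangles that starts at `p` and ends at `s`. -/
def Link {V : Type*} (G : SimpleGraph V) (T : V → V → V → Prop) (S : Finset V) (p x s : V) :
    Prop :=
  ∃ ℓ : List V, ℓ.Nodup ∧ (∀ y, y ∈ ℓ ↔ G.Adj x y ∧ y ∈ S) ∧ ℓ.IsChain (T x) ∧
    ℓ.head? = some p ∧ ℓ.getLast? = some s ∧ ¬ T x s p

/-- The neighbours of `x` form a closed fan of triangles. -/
def Cyc {V : Type*} (G : SimpleGraph V) (T : V → V → V → Prop) (x : V) : Prop :=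
  ∀ v, G.Adj x v → ∃ ℓ : List V, ℓ.Nodup ∧ (∀ y, y ∈ ℓ ↔ G.Adj x y ∧ y ≠ v) ∧
    ℓ.IsChain (T x) ∧ (∃ h, ℓ.head? = some h ∧ T x v h) ∧ ∃ t, ℓ.getLast? = some t ∧ T x t v

/-- Every mod 2 cycle of `G[S]` is the boundary of the dart function of a set of triangles. -/
def BoundsCycles {V : Type*} [Fintype V] (G : SimpleGraph V) (T : V → V → V → Prop)
    (S : Finset V) : Prop :=
  ∀ Z : V → V → ZMod 2, (∀ x y, Z x y = Z y x) →
    (∀ x y, Z x y ≠ 0 → G.Adj x y ∧ x ∈ S ∧ y ∈ S) → (∀ x, ∑ y, Z x y = 0) →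
    ∃ g : V → V → ZMod 2, (∀ x y, g x y + g y x = Z x y) ∧
      (∀ x y z, T x y z → g x y = g y z) ∧
      ∀ x y, g x y ≠ 0 → ∃ z, T x y z ∧ x ∈ S ∧ y ∈ S ∧ z ∈ S

/-- `R p x s` holds for every entry `x` of a list with predecessor `p` and successor `s`. -/
def Walks {V : Type*} (R : V → V → V → Prop) : V → List V → V → Prop
  | _, [], _ => True
  | p, x :: l, s => R p x (l.headD s) ∧ Walks R x l s

lemma walks_append {V : Type*} {R : V → V → V → Prop} (l₁ l₂ : List V) (p s : V) :
    Walks R p (l₁ ++ l₂) s ↔ Walks R p l₁ (l₂.headD s) ∧ Walks R (l₁.getLastD p) l₂ s := by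
  induction l₁ generalizing p with
  | nil => simp [Walks]
  | cons x l ih =>
    simp only [List.cons_append, Walks, ih, and_assoc, List.getLastD_cons]
    cases l <;> simp

lemma Walks.mono {V : Type*} {R R' : V → V → V → Prop} {l : List V} {p s : V}
    (h : Walks R p l s) (hR : ∀ x ∈ l, ∀ p s, R p x s → R' p x s) : Walks R' p l s := by
  induction l generalizing p with
  | nil => trivial
  | cons x l ih => exact ⟨hR x (by simp) _ _ h.1, ih h.2 fun y hy => hR y (by simp [hy])⟩

lemma walks_of_split {V : Type*} {R : V → V → V → Prop} {l : List V} {p s : V}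
    (h : ∀ A q x t B, p :: l ++ [s] = A ++ q :: x :: t :: B → R q x t) : Walks R p l s := by
  induction l generalizing p with
  | nil => trivial
  | cons x l ih =>
    refine ⟨?_, ih fun A q y t B hAB => h (p :: A) q y t B (by simpa using hAB)⟩
    cases l with
    | nil => exact h [] p x s [] rfl
    | cons y l => exact h [] p x y (l ++ [s]) rfl

lemma Walks.exists_mem {V : Type*} {R : V → V → V → Prop} {l : List V} {p s : V}
    (h : Walks R p l s) {x : V} (hx : x ∈ l) : ∃ q t, R q x t := by
  induction l generalizing p with
  | nil => simp at hx
  | cons y l ih =>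
    rcases List.mem_cons.mp hx with rfl | hx
    · exact ⟨_, _, h.1⟩
    · exact ih h.2 hx

lemma Walks.isChain {V : Type*} {R : V → V → V → Prop} {Q : V → V → Prop} {l : List V} {p s : V}
    (h : Walks R p l s) (hR : ∀ p x s, R p x s → Q p x) : (p :: l).IsChain Q := by
  induction l generalizing p with
  | nil => simp
  | cons y l ih => exact List.isChain_cons_cons.mpr ⟨hR _ _ _ h.1, ih h.2⟩

section Link

variable {V : Type*} {G : SimpleGraph V} {T : V → V → V → Prop} {S : Finset V}

lemma Link.adj_pred {p x s : V} (h : Link G T S p x s) : G.Adj x p ∧ p ∈ S := by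
  obtain ⟨ℓ, -, hmem, -, hh, -, -⟩ := h
  exact (hmem p).mp (List.mem_of_mem_head? hh)

lemma Link.adj_succ {p x s : V} (h : Link G T S p x s) : G.Adj x s ∧ s ∈ S := by
  obtain ⟨ℓ, -, hmem, -, -, hl, -⟩ := h
  exact (hmem s).mp (List.mem_of_getLast? hl)

lemma Link.eq_of_self {p x y : V} (h : Link G T S p x p) (hy : G.Adj x y) (hyS : y ∈ S) :
    y = p := by
  obtain ⟨ℓ, hnd, hmem, hch, hh, hl, hn⟩ := h
  have hyℓ := (hmem y).mpr ⟨hy, hyS⟩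
  match ℓ, hh with
  | [q], hh => simp at hyℓ hh; exact hyℓ.trans hh
  | q :: r :: ℓ, hh =>
    simp only [List.head?_cons, Option.some.injEq] at hh
    subst hh
    rw [List.getLast?_cons_cons] at hl
    exact absurd (List.mem_of_getLast? hl) (List.nodup_cons.mp hnd).1

lemma Link.no_left (hT : IsTriangleSystem G T) {p x s z : V} (h : Link G T S p x s) (hz : z ∈ S) :
    ¬ T p x z := by
  intro hpxz
  obtain ⟨ℓ, hnd, hmem, hch, hh, hl, hn⟩ := h
  have hxzp := hT.rot hpxz
  have hzℓ : z ∈ ℓ := (hmem z).mpr ⟨hT.adj hxzp, hz⟩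
  obtain ⟨A, B, rfl⟩ := List.append_of_mem hzℓ
  cases B with
  | nil =>
    simp at hl
    exact hn (hl ▸ hxzp)
  | cons y B =>
    have hy : T x z y := by simp [List.isChain_append] at hch; tauto
    obtain rfl := hT.unique hxzp hy
    cases A with
    | nil => simp at hh; simp_all
    | cons q A => simp at hh; simp_all

/-- Along a fan at `u` the dart function only changes at the edges of the boundary. -/
lemma fan_const (hT : IsTriangleSystem G T) {Z g : V → V → ZMod 2}
    (hg : ∀ x y, g x y + g y x = Z x y) (hgT : ∀ x y z, T x y z → g x y = g y z) {u p : V}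
    {ℓ : List V} (hch : (p :: ℓ).IsChain (T u)) (hZ : ∀ y ∈ ℓ, Z u y = 0) :
    ∀ y ∈ ℓ, g u y = g u p := by
  induction ℓ generalizing p with
  | nil => simp
  | cons q ℓ ih =>
    rw [List.isChain_cons_cons] at hch
    have h1 : g u q = g u p := by
      have e1 := hgT _ _ _ hch.1
      have e2 := hgT _ _ _ (hT.rot hch.1)
      have e3 := hg u q
      rw [hZ q (by simp)] at e3
      rw [e1, e2]
      exact CharTwo.add_eq_zero.mp e3
    intro y hy
    rcases List.mem_cons.mp hy with rfl | hy
    · exact h1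
    · rw [ih hch.2 (fun y hy => hZ y (by simp [hy])) y hy, h1]

lemma Link.dart_pred (hT : IsTriangleSystem G T) {Z g : V → V → ZMod 2}
    (hg : ∀ x y, g x y + g y x = Z x y)
    (hgS : ∀ x y, g x y ≠ 0 → ∃ z, T x y z ∧ x ∈ S ∧ y ∈ S ∧ z ∈ S) {p u s : V}
    (h : Link G T S p u s) : g u p = Z u p := by
  have : g p u = 0 := by
    by_contra hne
    obtain ⟨z, hz, -, -, hzS⟩ := hgS _ _ hne
    exact h.no_left hT hzS hz
  rw [← hg, this, add_zero]

lemma Link.dart_eq_zero (hT : IsTriangleSystem G T) {Z g : V → V → ZMod 2}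
    (hg : ∀ x y, g x y + g y x = Z x y) (hgT : ∀ x y z, T x y z → g x y = g y z)
    (hgS : ∀ x y, g x y ≠ 0 → ∃ z, T x y z ∧ x ∈ S ∧ y ∈ S ∧ z ∈ S) {p u s : V}
    (h : Link G T S p u s) (hZ : ∀ y, Z u y = 0) (y : V) : g u y = 0 := by
  have hp := h.dart_pred hT hg hgS
  obtain ⟨ℓ, hnd, hmem, hch, hh, hl, hn⟩ := h
  by_contra hne
  obtain ⟨z, hz, -, hy, -⟩ := hgS _ _ hne
  have hyℓ := (hmem y).mpr ⟨hT.adj hz, hy⟩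
  cases ℓ with
  | nil => simp at hh
  | cons q ℓ =>
    simp at hh
    subst hh
    rw [hZ] at hp
    rcases List.mem_cons.mp hyℓ with rfl | hyℓ
    · exact hne hp
    · exact hne ((fan_const hT hg hgT hch (fun y _ => hZ y) y hyℓ).trans hp)

lemma Link.dart_eq_pred (hT : IsTriangleSystem G T) {Z g : V → V → ZMod 2}
    (hg : ∀ x y, g x y + g y x = Z x y) (hgT : ∀ x y z, T x y z → g x y = g y z)
    (hgS : ∀ x y, g x y ≠ 0 → ∃ z, T x y z ∧ x ∈ S ∧ y ∈ S ∧ z ∈ S) {p u s : V}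
    (h : Link G T S p u s) (hZ : ∀ y, y ≠ p → y ≠ s → Z u y = 0) {y : V} (hy : G.Adj u y)
    (hyS : y ∈ S) (hys : y ≠ s) : g u y = Z u p := by
  have hp := h.dart_pred hT hg hgS
  obtain ⟨ℓ, hnd, hmem, hch, hh, hl, hn⟩ := h
  have hyℓ := (hmem y).mpr ⟨hy, hyS⟩
  cases ℓ with
  | nil => simp at hh
  | cons q ℓ =>
    simp at hh
    subst hh
    rcases List.mem_cons.mp hyℓ with rfl | hyℓ
    · exact hp
    · obtain ⟨ℓ', rfl⟩ : ∃ ℓ', ℓ = ℓ' ++ [s] := by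
        rcases List.eq_nil_or_concat ℓ with rfl | ⟨ℓ', t, rfl⟩
        · simp at hyℓ
        · refine ⟨ℓ', ?_⟩
          rw [List.concat_eq_append] at hl ⊢
          rw [← List.cons_append, List.getLast?_concat] at hl
          simpa using hl
      rw [← List.cons_append] at hch
      have hch' := (List.isChain_append.mp hch).1
      have hyℓ' : y ∈ ℓ' := by simpa [hys] using hyℓ
      refine (fan_const hT hg hgT hch' (fun z hz => hZ z ?_ ?_) y hyℓ').trans hp
      · rintro rfl; simp [hz] at hnd
      · rintro rfl
        simp only [List.nodup_cons, List.nodup_append] at hnd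
        exact hnd.2.2.2 z hz z (by simp) rfl

end Link

section Cycles

variable {V : Type*} [DecidableEq V]

/-- The mod 2 indicator of the edge `ab`. -/
def edgeInd (a b : V) : V → V → ZMod 2 :=
  fun p q => if (p = a ∧ q = b) ∨ (p = b ∧ q = a) then 1 else 0

/-- The mod 2 edge indicator of the path through the entries of a list. -/
def pathInd : List V → V → V → ZMod 2
  | a :: b :: l => edgeInd a b + pathInd (b :: l)
  | _ => 0

lemma edgeInd_symm (a b p q : V) : edgeInd a b p q = edgeInd a b q p := by
  unfold edgeInd
  congr 1
  simp only [eq_iff_iff]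
  tauto

lemma edgeInd_ne_zero {a b p q : V} (h : edgeInd a b p q ≠ 0) :
    (p = a ∧ q = b) ∨ (p = b ∧ q = a) := by
  by_contra hn
  exact h (if_neg hn)

lemma sum_edgeInd [Fintype V] {a b : V} (hab : a ≠ b) (p : V) :
    ∑ q, edgeInd a b p q = (if p = a then 1 else 0) + if p = b then 1 else 0 := by
  unfold edgeInd
  by_cases ha : p = a
  · subst ha
    simp [hab]
  · by_cases hb : p = b
    · subst hb
      simp [hab.symm]
    · simp [ha, hb]

lemma pathInd_symm (l : List V) (p q : V) : pathInd l p q = pathInd l q p := by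
  induction l with
  | nil => rfl
  | cons a l ih =>
    cases l with
    | nil => rfl
    | cons b l => simp only [pathInd, Pi.add_apply, ih, edgeInd_symm a b p q]

lemma pathInd_ne_zero {l : List V} {p q : V} {Q : V → V → Prop} (hQ : ∀ x y, Q x y → Q y x)
    (hl : l.IsChain Q) (h : pathInd l p q ≠ 0) : Q p q ∧ p ∈ l ∧ q ∈ l := by
  induction l with
  | nil => exact absurd rfl h
  | cons a l ih =>
    cases l with
    | nil => exact absurd rfl h
    | cons b l =>
      rw [List.isChain_cons_cons] at hl
      simp only [pathInd, Pi.add_apply] at h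
      by_cases he : edgeInd a b p q = 0
      · rw [he, zero_add] at h
        obtain ⟨h1, h2, h3⟩ := ih hl.2 h
        exact ⟨h1, by simp_all, by simp_all⟩
      · rcases edgeInd_ne_zero he with ⟨rfl, rfl⟩ | ⟨rfl, rfl⟩
        · exact ⟨hl.1, by simp, by simp⟩
        · exact ⟨hQ _ _ hl.1, by simp, by simp⟩

lemma pathInd_eq_zero {l : List V} {p q : V} (h : p ∉ l ∨ q ∉ l) : pathInd l p q = 0 := by
  by_contra hne
  have := pathInd_ne_zero (Q := fun _ _ => True) (by simp)
    (List.Pairwise.isChain (List.pairwise_of_forall fun _ _ => trivial)) hne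
  tauto

lemma sum_pathInd [Fintype V] {l : List V} {a b : V} (hl : (a :: l ++ [b]).IsChain (· ≠ ·))
    (p : V) : ∑ q, pathInd (a :: l ++ [b]) p q =
      (if p = a then 1 else 0) + if p = b then 1 else 0 := by
  induction l generalizing a with
  | nil =>
    simp only [List.cons_append, List.nil_append, List.isChain_cons_cons] at hl
    simpa [pathInd] using sum_edgeInd hl.1 p
  | cons c l ih =>
    simp only [List.cons_append, List.isChain_cons_cons] at hl ih ⊢
    simp only [pathInd, Pi.add_apply, Finset.sum_add_distrib, ih hl.2, sum_edgeInd hl.1]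
    have : (if p = c then (1 : ZMod 2) else 0) + (if p = c then 1 else 0) = 0 :=
      CharTwo.add_self_eq_zero _
    linear_combination this

end Cycles

section Peeling

variable {V : Type*} [Fintype V] [DecidableEq V]

/-- A triangulated disk on the vertex set `S`, with boundary the contour `c` closed up by the
edge joining its ends. -/
structure IsDisk (G : SimpleGraph V) (T : V → V → V → Prop) (o₁ o₂ : V) (S : Finset V)
    (c : List V) : Prop where
  nodup : c.Nodup
  subset : ∀ x ∈ c, x ∈ S
  head : c.head? = some o₁
  last : c.getLast? = some o₂
  link : Walks (Link G T S) o₂ c o₁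
  interior : ∀ x ∈ S, x ∉ c → (∀ y, G.Adj x y → y ∈ S) ∧ Cyc G T x
  bounds : BoundsCycles G T S
  conn : ∀ U : Finset V, U.Nonempty → (∀ x ∈ U, x ∈ S ∧ x ∉ c) →
    ∃ x ∈ U, ∃ y ∈ S, y ∉ U ∧ G.Adj x y

variable {G : SimpleGraph V} {T : V → V → V → Prop} {o₁ o₂ : V} {S : Finset V}

/-- A chord of the contour separates the vertices on its two sides. -/
lemma IsDisk.not_adj_of_chord (hT : IsTriangleSystem G T) {A I B : List V} {x v y w : V}
    (h : IsDisk G T o₁ o₂ S (A ++ x :: v :: I ++ y :: B)) (hxy : G.Adj x y)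
    (hw : w ∈ A ∨ w ∈ B) : ¬ G.Adj v w := by
  intro hvw
  have hnd := h.nodup
  have hchain : (x :: v :: I ++ [y]).IsChain G.Adj := by
    have h1 := (h.link.isChain (Q := G.Adj) (fun p u s hl => hl.adj_pred.1.symm))
    have h2 : o₂ :: (A ++ x :: v :: I ++ y :: B) =
        (o₂ :: A) ++ ((x :: v :: I ++ [y]) ++ B) := by simp
    rw [h2] at h1
    exact (List.isChain_append.mp (List.isChain_append.mp h1).2.1).1
  have hchain' : (x :: v :: I ++ [y]).IsChain (· ≠ ·) := hchain.imp fun _ _ h => h.ne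
  have hSub : ∀ z ∈ x :: v :: I ++ [y], z ∈ S := fun z hz => h.subset z (by
    simp only [List.mem_append, List.mem_cons] at hz ⊢; grind)
  obtain ⟨g, hg, hgT, hgS⟩ := h.bounds
    (fun p q => pathInd (x :: v :: I ++ [y]) p q + edgeInd x y p q)
    (fun p q => by rw [pathInd_symm, edgeInd_symm]) (fun p q hpq => by
      by_cases he : edgeInd x y p q = 0
      · rw [he, add_zero] at hpq
        obtain ⟨h1, h2, h3⟩ := pathInd_ne_zero (fun _ _ h => h.symm) hchain hpq
        exact ⟨h1, hSub _ h2, hSub _ h3⟩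
      · rcases edgeInd_ne_zero he with ⟨rfl, rfl⟩ | ⟨rfl, rfl⟩
        · exact ⟨hxy, hSub _ (by simp), hSub _ (by simp)⟩
        · exact ⟨hxy.symm, hSub _ (by simp), hSub _ (by simp)⟩)
    (fun p => by
      rw [Finset.sum_add_distrib, sum_pathInd hchain', sum_edgeInd hxy.ne]
      exact CharTwo.add_self_eq_zero _)
  have hwS : w ∈ S := h.subset w (by simp; tauto)
  have hwl : w ∉ x :: v :: I ++ [y] := by
    intro hmem
    simp only [List.mem_append, List.mem_cons, List.nodup_append, List.nodup_cons] at hmem hnd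
    grind
  have hZw : ∀ q, pathInd (x :: v :: I ++ [y]) w q + edgeInd x y w q = 0 := by
    intro q
    rw [pathInd_eq_zero (Or.inl hwl), zero_add]
    by_contra he
    rcases edgeInd_ne_zero he with ⟨rfl, -⟩ | ⟨rfl, -⟩ <;> simp at hwl
  have hgw : g w v = 0 := by
    obtain ⟨q, t, hl⟩ := h.link.exists_mem (x := w) (by simp; tauto)
    exact hl.dart_eq_zero hT hg hgT hgS hZw v
  have hlv : Link G T S x v ((I ++ [y]).headD o₁) := by
    have h1 := h.link
    rw [show A ++ x :: v :: I ++ y :: B = (A ++ [x]) ++ v :: (I ++ y :: B) by simp,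
      walks_append] at h1
    have h2 := h1.2.1
    simp only [List.getLastD_concat] at h2
    cases I <;> simpa using h2
  have hvx : v ≠ x := by simp [List.nodup_append] at hnd; grind
  have hvy : v ≠ y := by simp [List.nodup_append] at hnd; grind
  have hvI : v ∉ I ++ [y] := by simp [List.nodup_append] at hnd; grind
  have hxI : x ∉ I ++ [y] := by simp [List.nodup_append] at hnd; grind
  obtain ⟨s, J, hsJ⟩ : ∃ s J, I ++ [y] = s :: J := by cases I <;> simp
  rw [hsJ] at hlv hvI hxI
  rw [List.headD_cons] at hlv
  have hpath : ∀ q, pathInd (x :: v :: I ++ [y]) v q + edgeInd x y v q =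
      edgeInd x v v q + edgeInd v s v q := by
    intro q
    have e1 : edgeInd x y v q = 0 := by
      by_contra he
      rcases edgeInd_ne_zero he with ⟨h1, -⟩ | ⟨h1, -⟩ <;> contradiction
    rw [show x :: v :: I ++ [y] = x :: v :: s :: J by simp [hsJ]]
    simp only [pathInd, Pi.add_apply]
    rw [e1, pathInd_eq_zero (Or.inl hvI)]
    ring
  have hsv : s ≠ v := by rintro rfl; simp at hvI
  have hsx : s ≠ x := by rintro rfl; simp at hxI
  have hws : w ≠ s := by
    rintro rfl
    apply hwl
    rw [show x :: v :: I ++ [y] = x :: v :: w :: J by simp [hsJ]]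
    simp
  have h1 := hlv.dart_eq_pred hT hg hgT hgS (fun q hqx hqs => by
    rw [hpath]; simp [edgeInd, hqx, hqs, hvx, hsv.symm]) hvw hwS hws
  rw [hpath] at h1
  have h2 := hg v w
  rw [hgw, h1, add_comm (pathInd _ _ _), add_comm] at h2
  rw [edgeInd_symm x y, edgeInd_symm x v] at h2
  have h3 : pathInd (x :: v :: I ++ [y]) v w = 0 := pathInd_eq_zero (Or.inr hwl)
  have h4 : edgeInd x y w v = 0 := by
    have := hZw v
    rwa [pathInd_eq_zero (Or.inl hwl), zero_add] at this
  rw [h3, h4] at h2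
  simp [edgeInd, hvx, hsx.symm, hvx.symm] at h2

/-- Some contour vertex other than the two ends has no chords. -/
lemma IsDisk.exists_chordless (hT : IsTriangleSystem G T) {c : List V}
    (h : IsDisk G T o₁ o₂ S c) {A I B : List V} {x v y : V} (hc : c = A ++ x :: v :: I ++ y :: B)
    (hxy : G.Adj x y) : ∃ A a v b B, c = A ++ a :: v :: b :: B ∧ ∀ w, w ∈ A ∨ w ∈ B →
      ¬ G.Adj v w := by
  induction hn : I.length using Nat.strong_induction_on generalizing A I B x v y with
  | _ n ih =>
    have hch := fun w => (hc ▸ h).not_adj_of_chord hT (w := w) hxy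
    cases I with
    | nil => exact ⟨A, x, v, y, B, by simpa using hc, hch⟩
    | cons i I =>
      by_cases hex : ∃ w ∈ I ++ [y], G.Adj v w
      · obtain ⟨w, hw, hvw⟩ := hex
        obtain ⟨I₁, I₂, hI⟩ := List.append_of_mem hw
        refine ih I₁.length ?_ (A := A ++ [x]) (x := v) (v := i) (I := I₁) (y := w)
          (B := I₂ ++ B) ?_ hvw rfl
        · have := congrArg List.length hI
          simp at this hn
          omega
        · rw [hc]
          have : I ++ y :: B = (I ++ [y]) ++ B := by simp
          simp only [List.append_assoc, List.cons_append, List.nil_append, this, hI]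
      · push Not at hex
        refine ⟨A, x, v, i, I ++ y :: B, by simp [hc], fun w hw => ?_⟩
        rcases hw with hw | hw
        · exact hch w (Or.inl hw)
        · simp only [List.mem_append, List.mem_cons] at hw
          rcases hw with hw | rfl | hw
          · exact hex w (by simp [hw])
          · exact hex w (by simp)
          · exact hch w (Or.inr hw)

end Peeling

section Erase

variable {V : Type*} [DecidableEq V] {G : SimpleGraph V} {T : V → V → V → Prop} {S : Finset V}

lemma Link.erase_of_not_adj {p x s v : V} (h : Link G T S p x s) (hv : ¬ G.Adj x v) :
    Link G T (S.erase v) p x s := by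
  obtain ⟨ℓ, hnd, hmem, h⟩ := h
  refine ⟨ℓ, hnd, fun y => ?_, h⟩
  rw [hmem, Finset.mem_erase]
  refine ⟨fun h => ⟨h.1, ?_, h.2⟩, fun h => ⟨h.1, h.2.2⟩⟩
  rintro rfl
  exact hv h.1

lemma Link.erase_head (hT : IsTriangleSystem G T) {b s v m : V} (h : Link G T S v b s)
    (hs : s ≠ v) (hm : T b v m) : Link G T (S.erase v) m b s := by
  obtain ⟨ℓ, hnd, hmem, hch, hh, hl, hn⟩ := h
  obtain ⟨u, ℓ, rfl⟩ : ∃ u ℓ', ℓ = v :: u :: ℓ' := by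
    match ℓ, hh, hl with
    | [q], hh, hl => simp at hh hl; exact absurd (hl.symm.trans hh) hs
    | q :: u :: ℓ', hh, _ => simp at hh; subst hh; exact ⟨u, ℓ', rfl⟩
  rw [List.isChain_cons_cons] at hch
  obtain rfl := hT.unique hch.1 hm
  rw [List.nodup_cons] at hnd
  refine ⟨u :: ℓ, hnd.2, fun y => ?_, hch.2, rfl, by simpa using hl, fun hb => ?_⟩
  · have := hmem y
    rw [List.mem_cons] at this
    rw [Finset.mem_erase]
    constructor
    · intro hy
      refine ⟨(this.mp (Or.inr hy)).1, ?_, (this.mp (Or.inr hy)).2⟩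
      rintro rfl
      exact hnd.1 hy
    · rintro ⟨h1, h2, h3⟩
      exact (this.mpr ⟨h1, h3⟩).resolve_left h2
  · exact hs (hT.unique (hT.rot (hT.rot hb)) (hT.rot (hT.rot hm)))

lemma Link.erase_last (hT : IsTriangleSystem G T) {p a v m : V} (h : Link G T S p a v)
    (hp : p ≠ v) (hm : T a m v) : Link G T (S.erase v) p a m := by
  obtain ⟨ℓ, hnd, hmem, hch, hh, hl, hn⟩ := h
  obtain ⟨ℓ, u, rfl⟩ : ∃ ℓ' u, ℓ = ℓ' ++ [u, v] := by
    rcases List.eq_nil_or_concat ℓ with rfl | ⟨ℓ', t, rfl⟩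
    · simp at hh
    · rw [List.concat_eq_append] at *
      simp only [List.getLast?_concat, Option.some.injEq] at hl
      subst hl
      rcases List.eq_nil_or_concat ℓ' with rfl | ⟨ℓ', u, rfl⟩
      · simp at hh
        exact absurd hh.symm hp
      · exact ⟨ℓ', u, by simp⟩
  have hu : T a u v := by
    have := (List.isChain_append.mp hch).2.1
    simpa using this
  obtain rfl := hT.unique (hT.rot (hT.rot hu)) (hT.rot (hT.rot hm))
  have hsplit : ℓ ++ [u, v] = (ℓ ++ [u]) ++ [v] := by simp
  rw [hsplit] at hnd hmem hch hh
  refine ⟨ℓ ++ [u], (List.nodup_append.mp hnd).1, fun y => ?_, (List.isChain_append.mp hch).1,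
    ?_, by simp, fun hb => hp (hT.unique hb hm)⟩
  · have := hmem y
    rw [List.mem_append, List.mem_singleton] at this
    rw [Finset.mem_erase]
    constructor
    · intro hy
      refine ⟨(this.mp (Or.inl hy)).1, ?_, (this.mp (Or.inl hy)).2⟩
      exact (List.nodup_append.mp hnd).2.2 y hy v (by simp)
    · rintro ⟨h1, h2, h3⟩
      exact (this.mpr ⟨h1, h3⟩).resolve_right h2
  · cases ℓ <;> simpa using hh

lemma Cyc.link_erase (hT : IsTriangleSystem G T) {x v p s : V} (h : Cyc G T x)
    (hS : ∀ y, G.Adj x y → y ∈ S) (hp : T v p x) (hs : T v x s) :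
    Link G T (S.erase v) p x s := by
  obtain ⟨ℓ, hnd, hmem, hch, ⟨q, hq, hqT⟩, t, ht, htT⟩ := h v (hT.adj hs).symm
  have hp' := hT.rot (hT.rot hp)
  obtain rfl := hT.unique hqT hp'
  obtain rfl := hT.unique (hT.rot (hT.rot htT)) hs
  refine ⟨ℓ, hnd, fun y => ?_, hch, hq, ht, fun hn => ?_⟩
  · rw [hmem, Finset.mem_erase]
    exact ⟨fun h => ⟨h.1, h.2, hS y h.1⟩, fun h => ⟨h.1, h.2.1⟩⟩
  · obtain rfl := hT.unique hn htT
    exact (hT.adj (hT.rot hp')).ne rfl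

end Erase

section Peeling

variable {V : Type*} [Fintype V] [DecidableEq V]
variable {G : SimpleGraph V} {T : V → V → V → Prop} {o₁ o₂ : V} {S : Finset V}

lemma BoundsCycles.erase (hT : IsTriangleSystem G T) (h : BoundsCycles G T S) {p v s : V}
    (hl : Link G T S p v s) : BoundsCycles G T (S.erase v) := by
  intro Z hsymm hsupp hsum
  obtain ⟨g, hg, hgT, hgS⟩ := h Z hsymm (fun x y hxy => by
    obtain ⟨h1, h2, h3⟩ := hsupp x y hxy
    exact ⟨h1, Finset.mem_of_mem_erase h2, Finset.mem_of_mem_erase h3⟩) hsum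
  have hZv : ∀ y, Z v y = 0 := by
    intro y
    by_contra hne
    exact Finset.notMem_erase v S (hsupp v y hne).2.1
  have hv : ∀ y, g v y = 0 := hl.dart_eq_zero hT hg hgT hgS hZv
  have hv' : ∀ y, g y v = 0 := by
    intro y
    have := hg v y
    rwa [hv, hZv, zero_add] at this
  refine ⟨g, hg, hgT, fun x y hxy => ?_⟩
  obtain ⟨z, hz, hx, hy, hzS⟩ := hgS x y hxy
  refine ⟨z, hz, Finset.mem_erase.mpr ⟨?_, hx⟩, Finset.mem_erase.mpr ⟨?_, hy⟩,
    Finset.mem_erase.mpr ⟨?_, hzS⟩⟩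
  · rintro rfl; exact hxy (hv _)
  · rintro rfl; exact hxy (hv' _)
  · rintro rfl; exact hxy ((hgT _ _ _ hz).trans (hv' _))

lemma IsDisk.erase (hT : IsTriangleSystem G T) {A B : List V} {a v b : V}
    (h : IsDisk G T o₁ o₂ S (A ++ a :: v :: b :: B))
    (hv : ∀ w, w ∈ A ∨ w ∈ B → ¬ G.Adj v w) :
    ∃ M, (∀ w ∈ S, G.Adj v w → w ∈ a :: M ++ [b]) ∧
      IsDisk G T o₁ o₂ (S.erase v) (A ++ a :: M ++ b :: B) := by
  have hnd := h.nodup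
  have hlink := h.link
  simp only [walks_append, Walks, List.headD_cons] at hlink
  obtain ⟨hA, hla, hlv, hlb, hB⟩ := hlink
  have hhead := h.head
  have hlast := h.last
  have hpa : A.getLastD o₂ ≠ v := by
    have h2 : o₂ ∈ b :: B := by
      apply List.mem_of_getLast?
      rw [← hlast, show A ++ a :: v :: b :: B = (A ++ [a, v]) ++ b :: B by simp,
        List.getLast?_append_cons]
    rcases List.eq_nil_or_concat A with rfl | ⟨A, t, rfl⟩
    · simp at hnd ⊢; grind
    · simp at hnd ⊢; grind
  have hsb : B.headD o₁ ≠ v := by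
    have h2 : o₁ ∈ A ++ [a] := by
      cases A
      · simp at hhead ⊢; tauto
      · simp at hhead ⊢; tauto
    cases B with
    | nil => simp [List.nodup_append] at hnd h2 ⊢; grind
    | cons => simp [List.nodup_append] at hnd ⊢; grind
  obtain ⟨ℓ, hℓnd, hmem, hch, hh, hl, hn⟩ := id hlv
  have hab : a ≠ b := by simp [List.nodup_append] at hnd; grind
  obtain ⟨M, rfl⟩ : ∃ M, ℓ = a :: M ++ [b] := by
    match ℓ, hh with
    | q :: ℓ', hh =>
      simp at hh
      subst hh
      rcases List.eq_nil_or_concat ℓ' with rfl | ⟨M, t, rfl⟩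
      · simp at hl; contradiction
      · rw [List.concat_eq_append, ← List.cons_append, List.getLast?_concat] at hl
        simp at hl
        exact ⟨M, by simp [hl]⟩
  have hMS : ∀ m ∈ M, G.Adj v m ∧ m ∈ S := fun m hm => (hmem m).mp (by simp [hm])
  have hMc : ∀ m ∈ M, m ∉ A ++ a :: v :: b :: B := by
    intro m hm hmc
    have h1 := (hMS m hm).1
    have h2 := h1.ne
    have h3 := hv m
    simp [List.nodup_append] at hℓnd hmc
    grind
  have hnadj : ∀ w, w ∈ S → w ∉ a :: M ++ [b] → ¬ G.Adj w v := fun w hw hw' hwv =>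
    hw' ((hmem w).mpr ⟨hwv.symm, hw⟩)
  have hcontour : ∀ x, x ∈ A ++ a :: M ++ b :: B ↔ (x ∈ A ++ a :: v :: b :: B ∧ x ≠ v) ∨ x ∈ M := by
    intro x
    have := hMS x
    have hvv := G.loopless.irrefl v
    simp [List.nodup_append] at hnd ⊢
    grind
  refine ⟨M, fun w hw hvw => (hmem w).mpr ⟨hvw, hw⟩, ?_⟩
  constructor
  · have hperm : (A ++ a :: M ++ b :: B).Perm (M ++ ((A ++ [a]) ++ b :: B)) := by
      rw [show A ++ a :: M ++ b :: B = (A ++ [a]) ++ (M ++ b :: B) by simp]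
      exact List.perm_append_comm_assoc _ _ _
    rw [hperm.nodup_iff, List.nodup_append]
    refine ⟨(List.nodup_append.mp (List.nodup_cons.mp hℓnd).2).1, hnd.sublist (by simp), ?_⟩
    rintro m hm x hx rfl
    exact hMc m hm (by simp at hx ⊢; tauto)
  · intro x hx
    rw [Finset.mem_erase]
    rcases (hcontour x).mp hx with hx | hx
    · exact ⟨hx.2, h.subset x hx.1⟩
    · exact ⟨(hMS x hx).1.ne.symm, (hMS x hx).2⟩
  · cases A <;> simpa using hhead
  · rw [show A ++ a :: v :: b :: B = (A ++ [a, v]) ++ b :: B by simp,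
      List.getLast?_append_cons] at hlast
    rw [List.getLast?_append_cons, hlast]
  · have hlink' : Walks (Link G T (S.erase v)) a M b := by
      refine walks_of_split fun L p m s R hsplit => ?_
      have hch' := hch
      rw [hsplit] at hch' hℓnd
      have h1 : T v p m ∧ T v m s := by
        have := (List.isChain_append.mp hch').2.1
        simp only [List.isChain_cons_cons] at this
        exact ⟨this.1, this.2.1⟩
      have hma : m ≠ a := by
        rintro rfl
        cases L <;> simp at hsplit hℓnd <;> grind
      have hmb : m ≠ b := by
        rintro rfl
        have h3 : (s :: R).getLast? = some m := by
          rw [← hl, hsplit, show L ++ p :: m :: s :: R = (L ++ [p, m]) ++ s :: R by simp,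
            List.getLast?_append_cons]
        have h4 := List.mem_of_getLast? h3
        simp [List.nodup_append] at hℓnd h4
        grind
      have hm : m ∈ M := by
        have : m ∈ a :: M ++ [b] := by rw [hsplit]; simp
        simp at this
        tauto
      obtain ⟨h2, h3⟩ := h.interior m (hMS m hm).2 (hMc m hm)
      exact h3.link_erase hT h2 h1.1 h1.2
    have hTa : T v a (M.headD b) := by
      cases M <;> simp [List.isChain_cons_cons] at hch ⊢ <;> tauto
    have hTb : T v (M.getLastD a) b := by
      rcases List.eq_nil_or_concat M with rfl | ⟨M, t, rfl⟩
      · simpa using hTa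
      · have := (List.isChain_append.mp hch).2.2 t
          (by rw [List.concat_eq_append, ← List.cons_append, List.getLast?_concat]; rfl) b (by simp)
        simpa using this
    have hMh : (M ++ b :: B).headD o₁ = M.headD b := by cases M <;> simp
    simp only [List.append_assoc, List.cons_append, walks_append, Walks, List.headD_cons, hMh]
    refine ⟨hA.mono fun x hx p s hx' => hx'.erase_of_not_adj fun hxv => hv x (Or.inl hx) hxv.symm,
      hla.erase_last hT hpa (hT.rot hTa), hlink', hlb.erase_head hT hsb (hT.rot (hT.rot hTb)),
      hB.mono fun x hx p s hx' => hx'.erase_of_not_adj fun hxv => hv x (Or.inr hx) hxv.symm⟩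
  · intro x hx hxc
    rw [Finset.mem_erase] at hx
    have hxc' := (not_congr (hcontour x)).mp hxc
    have hxc'' : x ∉ A ++ a :: v :: b :: B := fun h => hxc' (Or.inl ⟨h, hx.1⟩)
    obtain ⟨h1, h2⟩ := h.interior x hx.2 hxc''
    refine ⟨fun y hy => Finset.mem_erase.mpr ⟨?_, h1 y hy⟩, h2⟩
    rintro rfl
    refine hnadj x hx.2 (fun hx' => hxc ?_) hy
    simp at hx' ⊢
    tauto
  · exact h.bounds.erase hT hlv
  · intro U hU hUS
    have hUS' : ∀ x ∈ U, x ∈ S ∧ x ∉ A ++ a :: v :: b :: B := by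
      intro x hx
      obtain ⟨h1, h2⟩ := hUS x hx
      rw [Finset.mem_erase] at h1
      exact ⟨h1.2, fun h => h2 ((hcontour x).mpr (Or.inl ⟨h, h1.1⟩))⟩
    obtain ⟨x, hx, y, hy, hyU, hxy⟩ := h.conn U hU hUS'
    refine ⟨x, hx, y, Finset.mem_erase.mpr ⟨?_, hy⟩, hyU, hxy⟩
    rintro rfl
    refine hnadj x (hUS' x hx).1 (fun hx' => (hUS x hx).2 ?_) hxy
    simp at hx' ⊢
    tauto

lemma IsDisk.peel (hT : IsTriangleSystem G T) (ho : o₁ ≠ o₂) {c : List V}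
    (h : IsDisk G T o₁ o₂ S c) : Peel G S c := by
  induction hn : S.card generalizing S c with
  | zero =>
    have := h.head
    have := h.subset o₁ (List.mem_of_mem_head? this)
    simp_all
  | succ n ih =>
    have hhead := h.head
    have hlast := h.last
    obtain ⟨m, rfl⟩ : ∃ m, c = o₁ :: m ++ [o₂] := by
      match c, hhead with
      | q :: c', hh =>
        simp at hh
        subst hh
        rcases List.eq_nil_or_concat c' with rfl | ⟨M, t, rfl⟩
        · simp at hlast; contradiction
        · rw [List.concat_eq_append, ← List.cons_append, List.getLast?_concat] at hlast
          simp at hlast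
          exact ⟨M, by simp [hlast]⟩
    have hlink := h.link
    have hadj : G.Adj o₁ o₂ := hlink.1.adj_pred.1
    cases m with
    | nil =>
      have hS : S = {o₁, o₂} := by
        simp only [List.cons_append, List.nil_append, Walks, List.headD_cons, List.headD_nil,
          and_true] at hlink
        by_contra hne
        obtain ⟨z, hz⟩ : (S \ {o₁, o₂}).Nonempty := by
          rw [Finset.sdiff_nonempty]
          intro hsub
          refine hne (hsub.antisymm fun x hx => h.subset x ?_)
          simpa using hx
        obtain ⟨x, hx, y, hy, hyU, hxy⟩ := h.conn (S \ {o₁, o₂}) ⟨z, hz⟩ (fun x hx => by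
          simpa using hx)
        simp only [Finset.mem_sdiff, Finset.mem_insert, Finset.mem_singleton, not_and,
          not_not] at hx hyU
        rcases hyU hy with rfl | rfl
        · exact hx.2 (Or.inr (hlink.1.eq_of_self hxy.symm hx.1))
        · exact hx.2 (Or.inl (hlink.2.eq_of_self hxy.symm hx.1))
      subst hS
      exact Peel.base _ _ ho
    | cons i I =>
      obtain ⟨A, a, v, b, B, hc, hv⟩ := h.exists_chordless hT (A := []) (I := I) (B := [])
        (x := o₁) (v := i) (y := o₂) (by simp) hadj
      rw [hc] at h ⊢
      obtain ⟨M, hM, hD⟩ := h.erase hT hv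
      have hvS : v ∈ S := h.subset v (by simp)
      have hP := ih hD (by rw [Finset.card_erase_of_mem hvS, hn]; rfl)
      rw [← Finset.insert_erase hvS]
      refine Peel.step _ A B M a b v hP (Finset.notMem_erase v S) fun w hw => ?_
      exact hM w (Finset.mem_of_mem_erase hw)

end Peeling

section Bounding

variable {V : Type*} {G : SimpleGraph V} {T : V → V → V → Prop}

/-- `Z` is the boundary of the dart function of a set of triangles. -/
def IsBoundary (T : V → V → V → Prop) (Z : V → V → ZMod 2) : Prop :=
  ∃ g : V → V → ZMod 2, (∀ x y, g x y + g y x = Z x y) ∧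
    (∀ x y z, T x y z → g x y = g y z) ∧ ∀ x y, g x y ≠ 0 → ∃ z, T x y z

lemma IsBoundary.add {Z Z' : V → V → ZMod 2} (h : IsBoundary T Z) (h' : IsBoundary T Z') :
    IsBoundary T (Z + Z') := by
  obtain ⟨g, h1, h2, h3⟩ := h
  obtain ⟨g', h1', h2', h3'⟩ := h'
  refine ⟨g + g', fun x y => ?_, fun x y z hz => ?_, fun x y hxy => ?_⟩
  · simp only [Pi.add_apply, ← h1, ← h1']
    ring
  · simp only [Pi.add_apply, h2 x y z hz, h2' x y z hz]
  · by_cases h0 : g x y = 0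
    · exact h3' x y (by simpa [h0] using hxy)
    · exact h3 x y h0

lemma isBoundary_zero : IsBoundary T 0 := ⟨0, by simp, by simp, by simp⟩

/-- A mod 2 cycle of the graph formed by the vertices of height less than `k`. -/
structure IsCycleBelow [Fintype V] (G : SimpleGraph V) (h : V → ℕ) (k : ℕ)
    (Z : V → V → ZMod 2) : Prop where
  symm : ∀ x y, Z x y = Z y x
  supp : ∀ x y, Z x y ≠ 0 → G.Adj x y ∧ h x < k ∧ h y < k
  sum : ∀ x, ∑ y, Z x y = 0

lemma IsCycleBelow.add [Fintype V] {h : V → ℕ} {k : ℕ} {Z Z' : V → V → ZMod 2}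
    (hZ : IsCycleBelow G h k Z)
    (hZ' : IsCycleBelow G h k Z') : IsCycleBelow G h k (Z + Z') := by
  refine ⟨fun x y => ?_, fun x y hxy => ?_, fun x => ?_⟩
  · simp only [Pi.add_apply, hZ.symm x y, hZ'.symm x y]
  · by_cases h0 : Z x y = 0
    · exact hZ'.supp x y (by simpa [h0] using hxy)
    · exact hZ.supp x y h0
  · simp only [Pi.add_apply, Finset.sum_add_distrib, hZ.sum, hZ'.sum, add_zero]

variable [DecidableEq V]

lemma isBoundary_triangle (hT : IsTriangleSystem G T) {a b c : V} (h : T a b c) :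
    IsBoundary T (edgeInd a b + edgeInd b c + edgeInd c a) := by
  have hab := (hT.adj h).ne
  have hbc := (hT.adj (hT.rot h)).ne
  have hca := (hT.adj (hT.rot (hT.rot h))).ne
  refine ⟨fun p q => if (p = a ∧ q = b) ∨ (p = b ∧ q = c) ∨ (p = c ∧ q = a) then 1 else 0,
    fun p q => ?_, fun p q r hpqr => ?_, fun p q hpq => ?_⟩
  · simp only [Pi.add_apply, edgeInd]
    grind
  · have h1 : (p = a ∧ q = b) ∨ (p = b ∧ q = c) ∨ (p = c ∧ q = a) ↔
        (q = a ∧ r = b) ∨ (q = b ∧ r = c) ∨ (q = c ∧ r = a) := by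
      constructor
      · rintro (⟨rfl, rfl⟩ | ⟨rfl, rfl⟩ | ⟨rfl, rfl⟩)
        · exact Or.inr (Or.inl ⟨rfl, hT.unique hpqr h⟩)
        · exact Or.inr (Or.inr ⟨rfl, hT.unique hpqr (hT.rot h)⟩)
        · exact Or.inl ⟨rfl, hT.unique hpqr (hT.rot (hT.rot h))⟩
      · have := hT.rot hpqr
        rintro (⟨rfl, rfl⟩ | ⟨rfl, rfl⟩ | ⟨rfl, rfl⟩)
        · exact Or.inr (Or.inr ⟨hT.unique this h, rfl⟩)
        · exact Or.inl ⟨hT.unique this (hT.rot h), rfl⟩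
        · exact Or.inr (Or.inl ⟨hT.unique this (hT.rot (hT.rot h)), rfl⟩)
    simp only [h1]
  · have : (p = a ∧ q = b) ∨ (p = b ∧ q = c) ∨ (p = c ∧ q = a) := by
      by_contra hn
      exact hpq (if_neg hn)
    rcases this with ⟨rfl, rfl⟩ | ⟨rfl, rfl⟩ | ⟨rfl, rfl⟩
    · exact ⟨_, h⟩
    · exact ⟨_, hT.rot h⟩
    · exact ⟨_, hT.rot (hT.rot h)⟩

variable [Fintype V]

lemma isCycleBelow_triangle (hT : IsTriangleSystem G T) {h : V → ℕ} {k : ℕ} {a b c : V}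
    (habc : T a b c) (ha : h a < k) (hb : h b < k) (hc : h c < k) :
    IsCycleBelow G h k (edgeInd a b + edgeInd b c + edgeInd c a) := by
  have hab := hT.adj habc
  have hbc := hT.adj (hT.rot habc)
  have hca := hT.adj (hT.rot (hT.rot habc))
  have key : ∀ {u v : V}, G.Adj u v → h u < k → h v < k → ∀ x y, edgeInd u v x y ≠ 0 →
      G.Adj x y ∧ h x < k ∧ h y < k := by
    intro u v huv hu hv x y hxy
    rcases edgeInd_ne_zero hxy with ⟨rfl, rfl⟩ | ⟨rfl, rfl⟩
    · exact ⟨huv, hu, hv⟩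
    · exact ⟨huv.symm, hv, hu⟩
  refine ⟨fun x y => ?_, fun x y hxy => ?_, fun x => ?_⟩
  · simp only [Pi.add_apply, edgeInd_symm _ _ x y]
  · by_cases h1 : edgeInd a b x y = 0
    · by_cases h2 : edgeInd b c x y = 0
      · exact key hca hc ha x y (by simpa [h1, h2] using hxy)
      · exact key hbc hb hc x y h2
    · exact key hab ha hb x y h1
  · simp only [Pi.add_apply, Finset.sum_add_distrib, sum_edgeInd hab.ne, sum_edgeInd hbc.ne,
      sum_edgeInd hca.ne]
    have h2 : ∀ t : ZMod 2, t + t = 0 := CharTwo.add_self_eq_zero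
    linear_combination h2 (if x = a then 1 else 0) + h2 (if x = b then 1 else 0) +
      h2 (if x = c then 1 else 0)

/-- If the lower neighbours of each vertex form a fan, every mod 2 cycle is a boundary. -/
lemma boundsCycles_univ (hT : IsTriangleSystem G T) {h : V → ℕ} (hh : Function.Injective h)
    (hD : ∀ p, ∃ ℓ : List V, ℓ.IsChain (T p) ∧ ∀ q, q ∈ ℓ ↔ G.Adj p q ∧ h q < h p) :
    BoundsCycles G T Finset.univ := by
  suffices H : ∀ k Z, IsCycleBelow G h k Z → IsBoundary T Z by
    intro Z h1 h2 h3
    obtain ⟨k, hk⟩ := (Finset.univ.image h).exists_le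
    obtain ⟨g, hg1, hg2, hg3⟩ := H (k + 1) Z ⟨h1, fun x y hxy => ⟨(h2 x y hxy).1,
      Nat.lt_succ_of_le (hk _ (by simp)), Nat.lt_succ_of_le (hk _ (by simp))⟩, h3⟩
    refine ⟨g, hg1, hg2, fun x y hxy => ?_⟩
    obtain ⟨z, hz⟩ := hg3 x y hxy
    exact ⟨z, hz, by simp, by simp, by simp⟩
  intro k
  induction k with
  | zero =>
    intro Z hZ
    have : Z = 0 := by
      funext x y
      by_contra hne
      exact absurd (hZ.supp x y hne).2.1 (Nat.not_lt_zero _)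
    exact this ▸ isBoundary_zero
  | succ k ih =>
    intro Z hZ
    have lower : ∀ Z, IsCycleBelow G h (k + 1) Z → (∀ p q, h p = k → Z p q = 0) →
        IsBoundary T Z := by
      intro Z hZ hp
      refine ih Z ⟨hZ.symm, fun x y hxy => ?_, hZ.sum⟩
      obtain ⟨h1, h2, h3⟩ := hZ.supp x y hxy
      have h4 : h x ≠ k := fun hx => hxy (hp x y hx)
      have h5 : h y ≠ k := fun hy => hxy (by rw [hZ.symm]; exact hp y x hy)
      exact ⟨h1, by omega, by omega⟩
    by_cases hex : ∃ p, h p = k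
    · obtain ⟨p, hp⟩ := hex
      have row : ∀ Z : V → V → ZMod 2, (∀ q, Z p q = 0) → ∀ p' q, h p' = k → Z p' q = 0 := by
        intro Z hZ p' q hp'
        rw [hh (hp'.trans hp.symm)]
        exact hZ q
      have sweep : ∀ ℓ q₀ Z, (q₀ :: ℓ).IsChain (T p) → (∀ q ∈ q₀ :: ℓ, h q < h p) →
          IsCycleBelow G h (k + 1) Z → (∀ q, Z p q ≠ 0 → q ∈ q₀ :: ℓ) → IsBoundary T Z := by
        intro ℓ
        induction ℓ with
        | nil =>
          intro q₀ Z _ _ hZ hq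
          refine lower Z hZ (row Z fun q => ?_)
          have h1 : ∀ q, q ≠ q₀ → Z p q = 0 := fun q hne => by
            by_contra h0
            exact hne (by simpa using hq q h0)
          by_cases hq₀ : q = q₀
          · have := hZ.sum p
            rw [Finset.sum_eq_single q₀ (fun q _ hne => h1 q hne) (by simp)] at this
            rw [hq₀, this]
          · exact h1 q hq₀
        | cons q₁ ℓ ihℓ =>
          intro q₀ Z hch hlt hZ hq
          by_cases h0 : Z p q₀ = 0
          · refine ihℓ q₁ Z (List.isChain_cons_cons.mp hch).2
              (fun q hq => hlt q (List.mem_cons_of_mem _ hq)) hZ fun q hne => ?_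
            exact (List.mem_cons.mp (hq q hne)).resolve_left (by rintro rfl; exact hne h0)
          · have hpT := (List.isChain_cons_cons.mp hch).1
            have hl0 := hlt q₀ (by simp)
            have hl1 := hlt q₁ (by simp)
            have h01 : q₀ ≠ q₁ := (hT.adj (hT.rot hpT)).ne
            have hp0 : p ≠ q₀ := (hT.adj hpT).ne
            have hp1 : p ≠ q₁ := (hT.adj (hT.rot (hT.rot hpT))).ne.symm
            have hZ' := hZ.add (isCycleBelow_triangle hT (h := h) (k := k + 1) hpT (by omega)
              (by omega) (by omega))
            have hZ'p : ∀ q, (Z + (edgeInd p q₀ + edgeInd q₀ q₁ + edgeInd q₁ p)) p q =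
                Z p q + ((if q = q₀ then 1 else 0) + if q = q₁ then 1 else 0) := by
              intro q
              simp [edgeInd, hp0, hp1]
            have h2 := ihℓ q₁ _ (List.isChain_cons_cons.mp hch).2
              (fun q hq => hlt q (List.mem_cons_of_mem _ hq)) hZ' fun q hne => by
                rw [hZ'p] at hne
                by_cases hqq : q = q₀
                · subst hqq
                  have : Z p q = 1 := by
                    generalize Z p q = t at h0
                    revert t; decide
                  rw [this] at hne
                  simp only [if_true, h01, if_false, add_zero] at hne
                  exact absurd (CharTwo.add_self_eq_zero 1) hne
                · by_cases hqq' : q = q₁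
                  · simp [hqq']
                  · simp only [hqq, hqq', if_false, add_zero] at hne
                    exact (List.mem_cons.mp (hq q hne)).resolve_left hqq
            have h3 := h2.add (isBoundary_triangle hT hpT)
            have h4 : Z + (edgeInd p q₀ + edgeInd q₀ q₁ + edgeInd q₁ p) +
                (edgeInd p q₀ + edgeInd q₀ q₁ + edgeInd q₁ p) = Z := by
              funext x y
              simp only [Pi.add_apply]
              rw [add_assoc, CharTwo.add_self_eq_zero, add_zero]
            rwa [h4] at h3
      obtain ⟨ℓ, hch, hmem⟩ := hD p
      have hsup : ∀ q, Z p q ≠ 0 → q ∈ ℓ := fun q hne => by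
        obtain ⟨h1, h2, h3⟩ := hZ.supp p q hne
        have : h q ≠ h p := fun h => h1.ne (hh h).symm
        exact (hmem q).mpr ⟨h1, by omega⟩
      cases ℓ with
      | nil =>
        refine lower Z hZ (row Z fun q => ?_)
        by_contra hne
        simpa using hsup q hne
      | cons q₀ ℓ => exact sweep ℓ q₀ Z hch (fun q hq => ((hmem q).mp hq).2) hZ hsup
    · exact lower Z hZ fun p q hp => absurd ⟨p, hp⟩ hex

/-- A triangulation of a disk with outer triangle `o₁ o₂ o₃` has three realizing keys. -/
lemma exists_isRealizer_of_triangulation (hT : IsTriangleSystem G T) {h : V → ℕ}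
    (hh : Function.Injective h)
    (hD : ∀ p, ∃ ℓ : List V, ℓ.IsChain (T p) ∧ ∀ q, q ∈ ℓ ↔ G.Adj p q ∧ h q < h p)
    {o₁ o₂ o₃ : V} (h₁ : Link G T Finset.univ o₂ o₁ o₃) (h₂ : Link G T Finset.univ o₃ o₂ o₁)
    (h₃ : Link G T Finset.univ o₁ o₃ o₂)
    (hinner : ∀ x, x ≠ o₁ → x ≠ o₂ → x ≠ o₃ → Cyc G T x)
    (hconn : ∀ U : Finset V, U.Nonempty → o₁ ∉ U → o₂ ∉ U → o₃ ∉ U →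
      ∃ x ∈ U, ∃ y, y ∉ U ∧ G.Adj x y) : ∃ κ, IsRealizer G κ := by
  have h12 : o₁ ≠ o₂ := h₁.adj_pred.1.ne
  have h13 : o₁ ≠ o₃ := h₁.adj_succ.1.ne
  have h23 : o₂ ≠ o₃ := h₂.adj_pred.1.ne
  have hdisk : IsDisk G T o₁ o₂ Finset.univ [o₁, o₃, o₂] := by
    refine ⟨by simp [h12, h13, h23.symm], by simp, rfl, rfl, ⟨h₁, h₃, h₂, trivial⟩,
      fun x _ hx => ⟨by simp, ?_⟩, boundsCycles_univ hT hh hD, fun U hU hUS => ?_⟩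
    · simp only [List.mem_cons, not_or] at hx
      exact hinner x hx.1 hx.2.2.1 hx.2.1
    · obtain ⟨x, hx, y, hy, hxy⟩ := hconn U hU (fun h => (hUS _ h).2 (by simp))
        (fun h => (hUS _ h).2 (by simp)) (fun h => (hUS _ h).2 (by simp))
      exact ⟨x, hx, y, by simp, hy, hxy⟩
  exact (hdisk.peel hT h12).exists_isRealizer

end Bounding

section Plane

/-- Twice the signed area of the triangle `P Q R`. -/
def cr (P Q R : ℝ × ℝ) : ℝ := (Q.1 - P.1) * (R.2 - P.2) - (Q.2 - P.2) * (R.1 - P.1)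

/-- The point at parameter `t` on the line from `P` to `Q`. -/
def pt (P Q : ℝ × ℝ) (t : ℝ) : ℝ × ℝ := (P.1 + t * (Q.1 - P.1), P.2 + t * (Q.2 - P.2))

lemma mem_segment_iff {P Q X : ℝ × ℝ} :
    X ∈ segment ℝ P Q ↔ ∃ t, 0 ≤ t ∧ t ≤ 1 ∧ X = pt P Q t := by
  rw [segment_eq_image']
  constructor
  · rintro ⟨t, ⟨h0, h1⟩, rfl⟩
    exact ⟨t, h0, h1, by ext <;> simp [pt]⟩
  · rintro ⟨t, h0, h1, rfl⟩
    exact ⟨t, ⟨h0, h1⟩, by ext <;> simp [pt]⟩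

lemma cr_pt (A B P Q : ℝ × ℝ) (t : ℝ) :
    cr A B (pt P Q t) = (1 - t) * cr A B P + t * cr A B Q := by
  simp only [cr, pt]; ring

lemma cr_rot (P Q R : ℝ × ℝ) : cr P Q R = cr Q R P := by
  simp only [cr]; ring

lemma cr_swap (P Q R : ℝ × ℝ) : cr P R Q = - cr P Q R := by
  simp only [cr]; ring

lemma cr_self_left (P Q : ℝ × ℝ) : cr P Q P = 0 := by simp only [cr]; ring

lemma cr_self_right (P Q : ℝ × ℝ) : cr P Q Q = 0 := by simp only [cr]; ring

lemma cr_sum (P Q R X : ℝ × ℝ) : cr P Q X + cr Q R X + cr R P X = cr P Q R := by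
  simp only [cr]; ring

lemma pt_zero (P Q : ℝ × ℝ) : pt P Q 0 = P := by ext <;> simp [pt]

lemma pt_one (P Q : ℝ × ℝ) : pt P Q 1 = Q := by ext <;> simp [pt]

lemma pt_mem_segment {P Q : ℝ × ℝ} {t : ℝ} (h0 : 0 ≤ t) (h1 : t ≤ 1) : pt P Q t ∈ segment ℝ P Q :=
  mem_segment_iff.mpr ⟨t, h0, h1, rfl⟩

lemma exists_eq_pt {P Q X : ℝ × ℝ} (hPQ : P ≠ Q) (h : cr P Q X = 0) : ∃ t, X = pt P Q t := by
  simp only [cr] at h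
  by_cases h1 : Q.1 - P.1 = 0
  · have h2 : Q.2 - P.2 ≠ 0 := fun h2 => hPQ (Prod.ext (by linarith) (by linarith))
    refine ⟨(X.2 - P.2) / (Q.2 - P.2), ?_⟩
    ext
    · simp only [pt, h1]
      have : X.1 - P.1 = 0 := by
        rw [h1, zero_mul, zero_sub, neg_eq_zero] at h
        exact (mul_eq_zero.mp h).resolve_left h2
      linarith
    · simp only [pt]
      field_simp
      ring
  · refine ⟨(X.1 - P.1) / (Q.1 - P.1), ?_⟩
    ext
    · simp only [pt]
      field_simp
      ring
    · simp only [pt]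
      field_simp
      linarith

lemma pt_injective {P Q : ℝ × ℝ} (hPQ : P ≠ Q) : Function.Injective (pt P Q) := by
  intro s t h
  simp only [pt, Prod.mk.injEq, add_right_inj, mul_eq_mul_right_iff] at h
  rcases h.1 with h1 | h1
  · exact h1
  rcases h.2 with h2 | h2
  · exact h2
  exact absurd (Prod.ext (by linarith) (by linarith)) hPQ

/-- A point of the closed triangle on the line through `P` and `R` is on the side `PR`. -/
lemma mem_segment_of_cr {P Q R X : ℝ × ℝ} (hD : 0 < cr P Q R) (h0 : cr R P X = 0)
    (h1 : 0 ≤ cr P Q X) (h2 : 0 ≤ cr Q R X) : X ∈ segment ℝ P R := by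
  refine mem_segment_iff.mpr ⟨cr P Q X / cr P Q R, by positivity, ?_, ?_⟩
  · rw [div_le_one hD]
    linarith [cr_sum P Q R X]
  · have hne := hD.ne'
    ext
    · simp only [pt]
      rw [← mul_left_inj' hne, add_mul, mul_right_comm, div_mul_cancel₀ _ hne]
      simp only [cr] at h0 ⊢
      linear_combination (Q.1 - P.1) * h0
    · simp only [pt]
      rw [← mul_left_inj' hne, add_mul, mul_right_comm, div_mul_cancel₀ _ hne]
      simp only [cr] at h0 ⊢
      linear_combination (Q.2 - P.2) * h0

/-- A segment leaving the quadrant `u, v ≥ 0` does so through its boundary. -/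
lemma exists_exit {u₀ v₀ u₁ v₁ : ℝ} (hu : 0 < u₀) (hv : 0 < v₀) (h : ¬ (0 ≤ u₁ ∧ 0 ≤ v₁)) :
    ∃ t, 0 < t ∧ t ≤ 1 ∧
      (((1 - t) * u₀ + t * u₁ = 0 ∧ 0 ≤ (1 - t) * v₀ + t * v₁) ∨
        ((1 - t) * v₀ + t * v₁ = 0 ∧ 0 ≤ (1 - t) * u₀ + t * u₁)) := by
  wlog hc : u₁ < 0 ∧ u₀ * v₁ - u₁ * v₀ ≥ 0 generalizing u₀ v₀ u₁ v₁
  · have h' : v₁ < 0 ∧ v₀ * u₁ - v₁ * u₀ ≥ 0 := by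
      by_cases hu1 : u₁ < 0
      · have h2 : u₀ * v₁ - u₁ * v₀ < 0 := by
          by_contra h3
          exact hc ⟨hu1, not_lt.mp h3⟩
        have h3 : v₁ < 0 := by
          by_contra h4
          nlinarith [mul_nonneg hu.le (not_lt.mp h4), mul_pos (neg_pos.mpr hu1) hv]
        exact ⟨h3, by linarith⟩
      · have h3 : v₁ < 0 := by
          by_contra h4
          exact h ⟨not_lt.mp hu1, not_lt.mp h4⟩
        exact ⟨h3, by nlinarith [mul_nonneg hv.le (not_lt.mp hu1), mul_pos (neg_pos.mpr h3) hu]⟩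
    obtain ⟨t, h0, h1, h2⟩ := this hv hu (by tauto) h'
    exact ⟨t, h0, h1, h2.symm⟩
  obtain ⟨h1, h2⟩ := hc
  have hd : 0 < u₀ - u₁ := by linarith
  refine ⟨u₀ / (u₀ - u₁), by positivity, by rw [div_le_one hd]; linarith, Or.inl ⟨?_, ?_⟩⟩
  · field_simp
    ring
  · have : (1 - u₀ / (u₀ - u₁)) * v₀ + u₀ / (u₀ - u₁) * v₁ =
        (u₀ * v₁ - u₁ * v₀) / (u₀ - u₁) := by
      field_simp
      ring
    rw [this]
    positivity

end Plane

section Drawing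

variable {V : Type*} {G : SimpleGraph V} {f : V → ℝ × ℝ}

lemma isPlanarDrawing_of (hf : Function.Injective f)
    (hdisj : ∀ a b c d : V, G.Adj a b → G.Adj c d → a ≠ c → a ≠ d → b ≠ c → b ≠ d →
      Disjoint (segment ℝ (f a) (f b)) (segment ℝ (f c) (f d)))
    (hoff : ∀ a b c : V, G.Adj a b → c ≠ a → c ≠ b → f c ∉ segment ℝ (f a) (f b)) :
    IsPlanarDrawing G f := by
  refine ⟨hf, hdisj, fun a b c hab hac hbc => ?_, hoff⟩
  refine Set.Subset.antisymm (fun X hX => ?_) (fun X hX => ?_)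
  · obtain ⟨⟨t, ht0, ht1, ht⟩, s, hs0, hs1, hs⟩ := mem_segment_iff.mp hX.1, mem_segment_iff.mp hX.2
    by_contra hne
    have ht0' : 0 < t := lt_of_le_of_ne ht0 (by rintro rfl; exact hne (ht.trans (pt_zero _ _)))
    have hs0' : 0 < s := lt_of_le_of_ne hs0 (by rintro rfl; exact hne (hs.trans (pt_zero _ _)))
    have e : pt (f a) (f b) t = pt (f a) (f c) s := ht.symm.trans hs
    have e1 := congrArg Prod.fst e
    have e2 := congrArg Prod.snd e
    simp only [pt] at e1 e2
    rcases le_total t s with h | h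
    · refine hoff a b c hab hac.ne.symm hbc.symm (mem_segment_iff.mpr ⟨t / s, by positivity,
        (div_le_one hs0').mpr h, ?_⟩)
      ext <;> simp only [pt] <;> field_simp <;> linarith
    · refine hoff a c b hac hab.ne.symm hbc (mem_segment_iff.mpr ⟨s / t, by positivity,
        (div_le_one ht0').mpr h, ?_⟩)
      ext <;> simp only [pt] <;> field_simp <;> linarith
  · rw [Set.mem_singleton_iff] at hX
    subst hX
    exact ⟨left_mem_segment _ _ _, left_mem_segment _ _ _⟩

/-- Two edges meeting in a point that is not an end of the first one coincide. -/
lemma _root_.IsPlanarDrawing.eq_or_eq_of_mem (hP : IsPlanarDrawing G f) {a b c d : V}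
    (hab : G.Adj a b)
    (hcd : G.Adj c d) {X : ℝ × ℝ} (h1 : X ∈ segment ℝ (f a) (f b))
    (h2 : X ∈ segment ℝ (f c) (f d)) :
    X = f a ∨ X = f b ∨ (a = c ∧ b = d) ∨ (a = d ∧ b = c) := by
  obtain ⟨-, hdisj, hmeet, -⟩ := hP
  by_cases hac : a = c
  · subst hac
    by_cases hbd : b = d
    · tauto
    · exact Or.inl ((hmeet a b d hab hcd hbd).subset ⟨h1, h2⟩)
  by_cases had : a = d
  · subst had
    by_cases hbc : b = c
    · tauto
    · rw [segment_symm] at h2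
      exact Or.inl ((hmeet a b c hab hcd.symm hbc).subset ⟨h1, h2⟩)
  by_cases hbc : b = c
  · subst hbc
    rw [segment_symm] at h1
    exact Or.inr (Or.inl ((hmeet b a d hab.symm hcd had).subset ⟨h1, h2⟩))
  by_cases hbd : b = d
  · subst hbd
    rw [segment_symm] at h1 h2
    exact Or.inr (Or.inl ((hmeet b a c hab.symm hcd.symm hac).subset ⟨h1, h2⟩))
  exact absurd h2 (Set.disjoint_left.mp (hdisj a b c d hab hcd hac had hbc hbd) h1)

/-- A plane drawing is saturated if every edge that could be added is present. -/
def IsSaturated (G : SimpleGraph V) (f : V → ℝ × ℝ) : Prop :=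
  ∀ a b, a ≠ b → (∀ c, c ≠ a → c ≠ b → f c ∉ segment ℝ (f a) (f b)) →
    (∀ c d, G.Adj c d → a ≠ c → a ≠ d → b ≠ c → b ≠ d →
      Disjoint (segment ℝ (f a) (f b)) (segment ℝ (f c) (f d))) → G.Adj a b

lemma _root_.IsPlanarDrawing.exists_saturated [Finite V] (hP : IsPlanarDrawing G f) :
    ∃ H, G ≤ H ∧ IsPlanarDrawing H f ∧ IsSaturated H f := by
  obtain ⟨H, hGH, hH⟩ := (Set.toFinite {H : SimpleGraph V | IsPlanarDrawing H f}).exists_le_maximal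
    (a := G) hP
  refine ⟨H, hGH, hH.prop, fun a b hab hoff hdisj => ?_⟩
  obtain ⟨hf, hdisj', -, hoff'⟩ := hH.prop
  have hadj : ∀ c d, (H ⊔ SimpleGraph.edge a b).Adj c d ↔
      H.Adj c d ∨ (c = a ∧ d = b) ∨ (c = b ∧ d = a) := by
    intro c d
    rw [SimpleGraph.sup_adj, SimpleGraph.edge_adj]
    grind
  have hle := hH.le_of_ge (y := H ⊔ SimpleGraph.edge a b) (isPlanarDrawing_of hf ?_ ?_) le_sup_left
  · exact hle ((hadj a b).mpr (by simp))
  · intro c d c' d' h1 h2 hcc hcd hdc hdd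
    rw [hadj] at h1 h2
    rcases h1 with h1 | ⟨rfl, rfl⟩ | ⟨rfl, rfl⟩
    · rcases h2 with h2 | ⟨rfl, rfl⟩ | ⟨rfl, rfl⟩
      · exact hdisj' c d c' d' h1 h2 hcc hcd hdc hdd
      · exact (hdisj c d h1 hcc.symm hdc.symm hcd.symm hdd.symm).symm
      · rw [segment_symm ℝ (f c')]
        exact (hdisj c d h1 hcd.symm hdd.symm hcc.symm hdc.symm).symm
    · rcases h2 with h2 | ⟨rfl, rfl⟩ | ⟨rfl, rfl⟩
      · exact hdisj c' d' h2 hcc hcd hdc hdd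
      · exact absurd rfl hcc
      · exact absurd rfl hcd
    · rcases h2 with h2 | ⟨rfl, rfl⟩ | ⟨rfl, rfl⟩
      · rw [segment_symm ℝ (f c)]
        exact hdisj c' d' h2 hdc hdd hcc hcd
      · exact absurd rfl hcd
      · exact absurd rfl hcc
  · intro c d e h1 hec hed
    rw [hadj] at h1
    rcases h1 with h1 | ⟨rfl, rfl⟩ | ⟨rfl, rfl⟩
    · exact hoff' c d e h1 hec hed
    · exact hoff e hec hed
    · rw [segment_symm]
      exact hoff e hed hec

/-- Only edges that cross the line `ab` properly can prevent `ab` from being an edge. -/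
lemma IsSaturated.adj (hS : IsSaturated G f) (hP : IsPlanarDrawing G f) {a b : V} (hab : a ≠ b)
    (hoff : ∀ c, c ≠ a → c ≠ b → f c ∉ segment ℝ (f a) (f b))
    (hcross : ∀ c d t s, G.Adj c d → a ≠ c → a ≠ d → b ≠ c → b ≠ d → 0 < t → t < 1 → 0 ≤ s →
      s ≤ 1 → pt (f a) (f b) t = pt (f c) (f d) s → 0 < cr (f a) (f b) (f c) →
      cr (f a) (f b) (f d) < 0 → False) : G.Adj a b := by
  refine hS a b hab hoff fun c d hcd hac had hbc hbd => ?_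
  rw [Set.disjoint_left]
  intro X h1 h2
  obtain ⟨⟨t, ht0, ht1, ht⟩, s, hs0, hs1, hs⟩ := mem_segment_iff.mp h1, mem_segment_iff.mp h2
  have ht0' : 0 < t := lt_of_le_of_ne ht0 (by
    rintro rfl
    rw [pt_zero] at ht
    exact hP.2.2.2 c d a hcd hac had (ht ▸ h2))
  have ht1' : t < 1 := lt_of_le_of_ne ht1 (by
    rintro rfl
    rw [pt_one] at ht
    exact hP.2.2.2 c d b hcd hbc hbd (ht ▸ h2))
  have hs0' : 0 < s := lt_of_le_of_ne hs0 (by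
    rintro rfl
    rw [pt_zero] at hs
    exact hoff c hac.symm hbc.symm (hs ▸ h1))
  have hs1' : s < 1 := lt_of_le_of_ne hs1 (by
    rintro rfl
    rw [pt_one] at hs
    exact hoff d had.symm hbd.symm (hs ▸ h1))
  have e := ht.symm.trans hs
  have h0 : (1 - s) * cr (f a) (f b) (f c) + s * cr (f a) (f b) (f d) = 0 := by
    rw [← cr_pt, ← e, cr_pt, cr_self_left, cr_self_right]
    ring
  rcases lt_trichotomy (cr (f a) (f b) (f c)) 0 with hc | hc | hc
  · have hd : 0 < cr (f a) (f b) (f d) := by nlinarith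
    refine hcross d c t (1 - s) hcd.symm had hac hbd hbc ht0' ht1' (by linarith) (by linarith) ?_
      hd hc
    rw [e]
    ext <;> simp only [pt] <;> ring
  · have hd : cr (f a) (f b) (f d) = 0 := by
      rw [hc, mul_zero, zero_add] at h0
      exact (mul_eq_zero.mp h0).resolve_left hs0'.ne'
    have hne := fun h => hab (hP.1 h)
    obtain ⟨u, hu⟩ := exists_eq_pt hne hc
    obtain ⟨v, hv⟩ := exists_eq_pt hne hd
    have htuv : t = (1 - s) * u + s * v := by
      refine pt_injective hne ?_
      rw [e, hu, hv]
      ext <;> simp only [pt] <;> ring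
    have hu' : u < 0 ∨ 1 < u := by
      by_contra! h
      exact hoff c hac.symm hbc.symm (hu ▸ pt_mem_segment h.1 h.2)
    have hv' : v < 0 ∨ 1 < v := by
      by_contra! h
      exact hoff d had.symm hbd.symm (hv ▸ pt_mem_segment h.1 h.2)
    have huv : (u < 0 ∧ 1 < v) ∨ (v < 0 ∧ 1 < u) := by
      rcases hu' with hu' | hu' <;> rcases hv' with hv' | hv'
      · nlinarith
      · exact Or.inl ⟨hu', hv'⟩
      · exact Or.inr ⟨hv', hu'⟩
      · nlinarith
    have hr : 0 ≤ u / (u - v) ∧ u / (u - v) ≤ 1 := by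
      rcases huv with h | h
      · rw [← neg_div_neg_eq]
        exact ⟨div_nonneg (by linarith) (by linarith), (div_le_one (by linarith)).mpr (by linarith)⟩
      · exact ⟨div_nonneg (by linarith) (by linarith), (div_le_one (by linarith)).mpr (by linarith)⟩
    refine hP.2.2.2 c d a hcd hac had (mem_segment_iff.mpr ⟨_, hr.1, hr.2, ?_⟩)
    have huv' : u - v ≠ 0 := by rcases huv with h | h <;> intro h' <;> linarith
    rw [hu, hv]
    ext <;> simp only [pt] <;> field_simp <;> ring
  · have hd : cr (f a) (f b) (f d) < 0 := by nlinarith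
    exact hcross c d t s hcd hac had hbc hbd ht0' ht1' hs0 hs1 e hc hd

end Drawing

section Corners

variable {V : Type*} {G : SimpleGraph V} {f : V → ℝ × ℝ}

/-- The edges `xy` and `xz` are consecutive around `x`, in counterclockwise order. -/
def IsCorner (G : SimpleGraph V) (f : V → ℝ × ℝ) (x y z : V) : Prop :=
  G.Adj x y ∧ G.Adj x z ∧ 0 < cr (f x) (f y) (f z) ∧
    ∀ w, G.Adj x w → ¬ (0 < cr (f x) (f y) (f w) ∧ 0 < cr (f x) (f w) (f z))

/-- `x y z` is a triangular face with counterclockwise orientation. -/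
def IsFace (G : SimpleGraph V) (f : V → ℝ × ℝ) (x y z : V) : Prop :=
  IsCorner G f x y z ∧ IsCorner G f y z x ∧ IsCorner G f z x y

/-- The closed triangle `xyz` contains no further vertices. -/
def IsVacant (f : V → ℝ × ℝ) (x y z : V) : Prop :=
  ∀ w, w ≠ x → w ≠ y → w ≠ z →
    ¬ (0 ≤ cr (f x) (f y) (f w) ∧ 0 ≤ cr (f y) (f z) (f w) ∧ 0 ≤ cr (f z) (f x) (f w))

lemma IsVacant.rot {x y z : V} (h : IsVacant f x y z) : IsVacant f y z x :=
  fun w hy hz hx hw => h w hx hy hz ⟨hw.2.2, hw.1, hw.2.1⟩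

lemma pt_mem_segment_of_mem {P C D : ℝ × ℝ} (hP : P ∈ segment ℝ C D) {t : ℝ} (h0 : 0 ≤ t)
    (h1 : t ≤ 1) : pt P C t ∈ segment ℝ C D :=
  (convex_segment C D).segment_subset hP (left_mem_segment _ _ _) (pt_mem_segment h0 h1)

/-- An edge that enters the triangle `xyz` cannot leave it through the edges `xy`, `xz`. -/
lemma _root_.IsPlanarDrawing.cr_nonneg_of_mem (hP : IsPlanarDrawing G f) {x y z c d : V} {P : ℝ × ℝ}
    (hxy : G.Adj x y) (hxz : G.Adj x z) (hD : 0 < cr (f x) (f y) (f z)) (hcd : G.Adj c d)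
    (hcx : c ≠ x) (hdx : d ≠ x) (hPm : P ∈ segment ℝ (f c) (f d)) (hβ : 0 < cr (f z) (f x) P)
    (hγ : 0 < cr (f x) (f y) P) (hα : 0 ≤ cr (f y) (f z) P)
    (hαc : cr (f y) (f z) P ≤ cr (f y) (f z) (f c))
    (h : 0 < cr (f y) (f z) P ∨ (y ≠ c ∧ y ≠ d ∧ z ≠ c ∧ z ≠ d)) :
    0 ≤ cr (f z) (f x) (f c) ∧ 0 ≤ cr (f x) (f y) (f c) := by
  by_contra hcon
  obtain ⟨t, ht0, ht1, ht⟩ := exists_exit hβ hγ hcon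
  simp only [← cr_pt] at ht
  have hQm := pt_mem_segment_of_mem hPm ht0.le ht1
  have hQα : cr (f y) (f z) P ≤ cr (f y) (f z) (pt P (f c) t) := by
    rw [cr_pt]
    nlinarith
  generalize pt P (f c) t = Q at *
  have hnx : Q ≠ f x := by
    rintro rfl
    exact hP.2.2.2 c d x hcd hcx.symm hdx.symm hQm
  rcases ht with ⟨h0, h1⟩ | ⟨h0, h1⟩
  · have hQ := mem_segment_of_cr hD h0 h1 (hα.trans hQα)
    rcases hP.eq_or_eq_of_mem hxz hcd hQ hQm with h2 | h2 | h2 | h2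
    · exact hnx h2
    · subst h2
      rcases h with h | h
      · rw [cr_self_right] at hQα
        linarith
      · exact hP.2.2.2 c d z hcd h.2.2.1 h.2.2.2 hQm
    · exact hcx h2.1.symm
    · exact hdx h2.1.symm
  · have hQ := mem_segment_of_cr (P := f y) (Q := f z) (R := f x) (by rwa [← cr_rot]) h0
      (hα.trans hQα) h1
    rcases hP.eq_or_eq_of_mem hxy.symm hcd hQ hQm with h2 | h2 | h2 | h2
    · subst h2
      rcases h with h | h
      · rw [cr_self_left] at hQα
        linarith
      · exact hP.2.2.2 c d y hcd h.1 h.2.1 hQm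
    · exact hnx h2
    · exact hdx h2.2.symm
    · exact hcx h2.2.symm

lemma IsVacant.isCorner (hP : IsPlanarDrawing G f) {x y z : V} (hE : IsVacant f x y z)
    (hxy : G.Adj x y) (hyz : G.Adj y z) (hxz : G.Adj x z) (hD : 0 < cr (f x) (f y) (f z)) :
    IsCorner G f x y z := by
  refine ⟨hxy, hxz, hD, fun w hxw ⟨hγ, hβ⟩ => ?_⟩
  have hβ' : 0 < cr (f z) (f x) (f w) := by rwa [cr_rot (f z)]
  have hwy : w ≠ y := by
    rintro rfl
    simp [cr_self_right] at hγ
  have hwz : w ≠ z := by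
    rintro rfl
    simp [cr_self_left] at hβ'
  have hα : cr (f y) (f z) (f w) < 0 := by
    by_contra! hα
    exact hE w hxw.ne' hwy hwz ⟨hγ.le, hα, hβ'.le⟩
  have hD' : 0 < cr (f x) (f y) (f z) - cr (f y) (f z) (f w) := by linarith
  set t := cr (f x) (f y) (f z) / (cr (f x) (f y) (f z) - cr (f y) (f z) (f w)) with ht
  have ht0 : 0 < t := by positivity
  have ht1 : t ≤ 1 := (div_le_one hD').mpr (by linarith)
  have h0 : cr (f y) (f z) (pt (f x) (f w) t) = 0 := by
    rw [cr_pt, cr_rot (f y), cr_rot (f z), ht]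
    field_simp
    ring
  have h1 : 0 < cr (f x) (f y) (pt (f x) (f w) t) := by
    rw [cr_pt, cr_self_left]
    simp [ht0, hγ]
  have h2 : 0 < cr (f z) (f x) (pt (f x) (f w) t) := by
    rw [cr_pt, cr_self_right]
    simp [ht0, hβ']
  have hQ := mem_segment_of_cr (P := f z) (Q := f x) (R := f y) (by rwa [cr_rot]) h0 h2.le h1.le
  have hQ' := pt_mem_segment (P := f x) (Q := f w) ht0.le ht1
  rcases hP.eq_or_eq_of_mem hyz.symm hxw hQ hQ' with h | h | h | h
  · rw [h, cr_self_left] at h2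
    exact h2.false
  · rw [h, cr_self_right] at h1
    exact h1.false
  · exact hxz.ne h.1.symm
  · exact hxy.ne h.2.symm

lemma IsCorner.isVacant [Finite V] (hP : IsPlanarDrawing G f) (hS : IsSaturated G f) {x y z : V}
    (h : IsCorner G f x y z) : IsVacant f x y z := by
  obtain ⟨hxy, hxz, hD, hcone⟩ := h
  intro w₀ hx₀ hy₀ hz₀ hw₀
  let S : Set V := {w | w ≠ x ∧ w ≠ y ∧ w ≠ z ∧ 0 ≤ cr (f x) (f y) (f w) ∧
    0 ≤ cr (f y) (f z) (f w) ∧ 0 ≤ cr (f z) (f x) (f w)}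
  obtain ⟨w, ⟨hwx, hwy, hwz, hγ, hα, hβ⟩, hmax⟩ := S.toFinite.exists_maximalFor
    (fun w => cr (f y) (f z) (f w)) S ⟨w₀, hx₀, hy₀, hz₀, hw₀⟩
  have hβ' : 0 < cr (f z) (f x) (f w) := lt_of_le_of_ne hβ fun h0 =>
    hP.2.2.2 x z w hxz hwx hwz (mem_segment_of_cr hD h0.symm hγ hα)
  have hγ' : 0 < cr (f x) (f y) (f w) := lt_of_le_of_ne hγ fun h0 =>
    hP.2.2.2 y x w hxy.symm hwy hwx
      (mem_segment_of_cr (P := f y) (Q := f z) (R := f x) (by rwa [← cr_rot]) h0.symm hα hβ)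
  have hlt : cr (f y) (f z) (f w) < cr (f x) (f y) (f z) := by
    linarith [cr_sum (f x) (f y) (f z) (f w)]
  have key : ∀ u, u ≠ x → cr (f y) (f z) (f w) < cr (f y) (f z) (f u) →
      0 ≤ cr (f z) (f x) (f u) → 0 ≤ cr (f x) (f y) (f u) → False := by
    intro u hux hu1 hu2 hu3
    refine hu1.not_ge (hmax (j := u) ⟨hux, ?_, ?_, hu3, hα.trans hu1.le, hu2⟩ hu1.le)
    · rintro rfl
      rw [cr_self_left] at hu1
      linarith
    · rintro rfl
      rw [cr_self_right] at hu1
      linarith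
  have hptα : ∀ t, t < 1 → cr (f y) (f z) (f w) < cr (f y) (f z) (pt (f x) (f w) t) := by
    intro t ht
    rw [cr_pt, ← cr_rot (f x)]
    nlinarith
  refine hcone w (hS.adj hP hwx.symm ?_ ?_) ⟨hγ', by rwa [cr_rot, cr_rot]⟩
  · intro u hux huw hu
    obtain ⟨t, ht0, ht1, ht⟩ := mem_segment_iff.mp hu
    have ht1' : t < 1 := lt_of_le_of_ne ht1 (by
      rintro rfl
      rw [pt_one] at ht
      exact huw (hP.1 ht))
    refine key u hux (ht ▸ hptα t ht1') ?_ ?_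
    · rw [ht, cr_pt, cr_self_right]
      nlinarith
    · rw [ht, cr_pt, cr_self_left]
      nlinarith
  · intro c d t s hcd hxc hxd hwc hwd ht0 ht1 hs0 hs1 hQ _ _
    have hPm := pt_mem_segment (P := f c) (Q := f d) hs0 hs1
    have hPα := hptα t ht1
    have hPβ : 0 < cr (f z) (f x) (pt (f x) (f w) t) := by
      rw [cr_pt, cr_self_right]
      simp [ht0, hβ']
    have hPγ : 0 < cr (f x) (f y) (pt (f x) (f w) t) := by
      rw [cr_pt, cr_self_left]
      simp [ht0, hγ']
    rw [hQ] at hPα hPβ hPγ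
    have hc : cr (f y) (f z) (pt (f c) (f d) s) =
      (1 - s) * cr (f y) (f z) (f c) + s * cr (f y) (f z) (f d) := cr_pt _ _ _ _ _
    rcases le_total (cr (f y) (f z) (f d)) (cr (f y) (f z) (f c)) with hle | hle
    · have hαc : cr (f y) (f z) (pt (f c) (f d) s) ≤ cr (f y) (f z) (f c) := by
        rw [hc]
        nlinarith
      obtain ⟨h1, h2⟩ := hP.cr_nonneg_of_mem hxy hxz hD hcd hxc.symm hxd.symm hPm hPβ hPγ
        (hα.trans hPα.le) hαc (Or.inl (hα.trans_lt hPα))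
      exact key c hxc.symm (hPα.trans_le hαc) h1 h2
    · have hαd : cr (f y) (f z) (pt (f c) (f d) s) ≤ cr (f y) (f z) (f d) := by
        rw [hc]
        nlinarith
      rw [segment_symm] at hPm
      obtain ⟨h1, h2⟩ := hP.cr_nonneg_of_mem hxy hxz hD hcd.symm hxd.symm hxc.symm hPm hPβ hPγ
        (hα.trans hPα.le) hαd (Or.inl (hα.trans_lt hPα))
      exact key d hxd.symm (hPα.trans_le hαd) h1 h2

/-- In a saturated drawing every convex corner belongs to a triangular face. -/
lemma IsCorner.isFace [Finite V] (hP : IsPlanarDrawing G f) (hS : IsSaturated G f) {x y z : V}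
    (h : IsCorner G f x y z) : IsFace G f x y z := by
  have hE := h.isVacant hP hS
  obtain ⟨hxy, hxz, hD, hcone⟩ := id h
  have hDy : 0 < cr (f y) (f z) (f x) := by rwa [← cr_rot]
  have hyz : y ≠ z := by
    rintro rfl
    rw [cr_self_right] at hD
    exact hD.false
  have hadj : G.Adj y z := by
    refine hS.adj hP hyz ?_ ?_
    · intro u huy huz hu
      obtain ⟨t, ht0, ht1, ht⟩ := mem_segment_iff.mp hu
      have hux : u ≠ x := by
        rintro rfl
        rw [ht, cr_pt, cr_self_left, cr_self_right] at hDy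
        simp at hDy
      refine hE u hux huy huz ⟨?_, ?_, ?_⟩ <;> rw [ht, cr_pt]
      · rw [cr_self_right]
        nlinarith
      · rw [cr_self_left, cr_self_right]
        simp
      · rw [cr_self_left, cr_rot]
        nlinarith
    · intro c d t s hcd hyc hyd hzc hzd ht0 ht1 hs0 hs1 hQ hc hd
      have hPm := pt_mem_segment (P := f c) (Q := f d) hs0 hs1
      have hPα : cr (f y) (f z) (pt (f y) (f z) t) = 0 := by
        rw [cr_pt, cr_self_left, cr_self_right]
        simp
      have hPβ : 0 < cr (f z) (f x) (pt (f y) (f z) t) := by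
        rw [cr_pt, cr_self_left, ← cr_rot (f y), ← cr_rot (f x)]
        nlinarith
      have hPγ : 0 < cr (f x) (f y) (pt (f y) (f z) t) := by
        rw [cr_pt, cr_self_right]
        nlinarith
      rw [hQ] at hPα hPβ hPγ
      have hdx : d ≠ x := by
        rintro rfl
        linarith
      by_cases hcx : c = x
      · subst hcx
        refine hcone d hcd ⟨?_, ?_⟩
        · rw [cr_pt, cr_self_left] at hPγ
          nlinarith
        · rw [cr_pt, cr_self_right] at hPβ
          rw [cr_rot, cr_rot]
          nlinarith
      · obtain ⟨h1, h2⟩ := hP.cr_nonneg_of_mem hxy hxz hD hcd hcx hdx hPm hPβ hPγ hPα.ge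
          (hPα.le.trans hc.le) (Or.inr ⟨hyc, hyd, hzc, hzd⟩)
        exact hE c hcx hyc.symm hzc.symm ⟨h2, hc.le, h1⟩
  exact ⟨h, hE.rot.isCorner hP hadj hxz.symm hxy.symm hDy,
    hE.rot.rot.isCorner hP hxz.symm hxy hadj.symm (by rwa [cr_rot])⟩

lemma IsFace.rot {x y z : V} (h : IsFace G f x y z) : IsFace G f y z x := ⟨h.2.1, h.2.2, h.1⟩

lemma _root_.IsPlanarDrawing.eq_of_eq_pt (hP : IsPlanarDrawing G f) {x z w : V} (hz : G.Adj x z)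
    (hw : G.Adj x w) {t : ℝ} (ht : f w = pt (f x) (f z) t) (ht0 : 0 < t) : z = w := by
  by_contra hne
  rcases le_total t 1 with h1 | h1
  · exact hP.2.2.2 x z w hz hw.ne' (Ne.symm hne) (ht ▸ pt_mem_segment ht0.le h1)
  · refine hP.2.2.2 x w z hw hz.ne' hne (mem_segment_iff.mpr ⟨1 / t, by positivity,
      (div_le_one ht0).mpr h1, ?_⟩)
    rw [ht]
    ext <;> simp only [pt] <;> field_simp <;> ring

lemma _root_.IsPlanarDrawing.eq_of_isFace (hP : IsPlanarDrawing G f) {x y z w : V}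
    (hz : IsFace G f x y z) (hw : IsFace G f x y w) : z = w := by
  obtain ⟨⟨hxy, hxz, hz0, hz⟩, -⟩ := hz
  obtain ⟨⟨-, hxw, hw0, hw⟩, -⟩ := hw
  have h1 := hz w hxw
  have h2 := hw z hxz
  have h4 := cr_swap (f x) (f z) (f w)
  have h3 : cr (f x) (f z) (f w) = 0 := by
    by_contra h3
    rcases lt_or_gt_of_ne h3 with h3 | h3
    · exact h1 ⟨hw0, by linarith⟩
    · exact h2 ⟨hz0, h3⟩
  obtain ⟨t, ht⟩ := exists_eq_pt (fun h => hxz.ne (hP.1 h)) h3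
  refine hP.eq_of_eq_pt hxz hxw ht ?_
  rw [ht, cr_pt, cr_self_left] at hw0
  by_contra! ht0
  nlinarith

lemma _root_.IsPlanarDrawing.isTriangleSystem (hP : IsPlanarDrawing G f) :
    IsTriangleSystem G (IsFace G f) where
  rot h := h.rot
  adj h := h.1.1
  unique h h' := hP.eq_of_isFace h h'

end Corners

section HalfPlane

variable {V : Type*} {G : SimpleGraph V} {f : V → ℝ × ℝ}

lemma continuous_pt (P Q : ℝ × ℝ) : Continuous (pt P Q) := by
  unfold pt
  fun_prop

lemma isClosed_segment_plane (P Q : ℝ × ℝ) : IsClosed (segment ℝ P Q) := by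
  have h : segment ℝ P Q = pt P Q '' Set.Icc 0 1 := by
    ext X
    rw [mem_segment_iff]
    exact ⟨fun ⟨t, h0, h1, h⟩ => ⟨t, ⟨h0, h1⟩, h.symm⟩, fun ⟨t, ⟨h0, h1⟩, h⟩ => ⟨t, h0, h1, h.symm⟩⟩
  rw [h]
  exact (isCompact_Icc.image (continuous_pt P Q)).isClosed

/-- The part of the drawing that is not incident to the vertex `x`. -/
def awayFrom (G : SimpleGraph V) (f : V → ℝ × ℝ) (x : V) : Set (ℝ × ℝ) :=
  {Q | (∃ u, u ≠ x ∧ Q = f u) ∨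
    ∃ c d, G.Adj c d ∧ c ≠ x ∧ d ≠ x ∧ Q ∈ segment ℝ (f c) (f d)}

lemma isClosed_awayFrom [Finite V] (x : V) : IsClosed (awayFrom G f x) := by
  have h : awayFrom G f x = (⋃ u ∈ {u : V | u ≠ x}, {f u}) ∪
      ⋃ p ∈ {p : V × V | G.Adj p.1 p.2 ∧ p.1 ≠ x ∧ p.2 ≠ x}, segment ℝ (f p.1) (f p.2) := by
    ext Q
    simp [awayFrom, and_assoc]
  rw [h]
  exact ((Set.toFinite _).isClosed_biUnion fun _ _ => isClosed_singleton).union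
    ((Set.toFinite _).isClosed_biUnion fun _ _ => isClosed_segment_plane _ _)

/-- The first point of the drawing that is met when moving away from `x` in a given direction. -/
lemma _root_.IsPlanarDrawing.exists_first_hit [Finite V] (hP : IsPlanarDrawing G f) {x w : V}
    (hw : w ≠ x) : ∃ t, 0 < t ∧ pt (f x) (f w) t ∈ awayFrom G f x ∧
      ∀ r, 0 ≤ r → r < t → pt (f x) (f w) r ∉ awayFrom G f x := by
  have hK : IsCompact (Set.Icc 0 1 ∩ pt (f x) (f w) ⁻¹' awayFrom G f x) :=
    isCompact_Icc.inter_right ((isClosed_awayFrom x).preimage (continuous_pt _ _))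
  obtain ⟨t, ⟨⟨ht0, ht1⟩, ht⟩, hmin⟩ := hK.exists_isLeast
    ⟨1, ⟨zero_le_one, le_rfl⟩, Or.inl ⟨w, hw, pt_one _ _⟩⟩
  refine ⟨t, lt_of_le_of_ne ht0 ?_, ht, fun r hr0 hrt hr =>
    hrt.not_ge (hmin ⟨⟨hr0, hrt.le.trans ht1⟩, hr⟩)⟩
  rintro rfl
  rw [Set.mem_preimage, pt_zero] at ht
  rcases ht with ⟨u, hux, hu⟩ | ⟨c, d, hcd, hc, hd, h⟩
  · exact hux (hP.1 hu.symm)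
  · exact hP.2.2.2 c d x hcd hc.symm hd.symm h

lemma pt_pt (P Q : ℝ × ℝ) (s t : ℝ) : pt P (pt P Q s) t = pt P Q (t * s) := by
  ext <;> simp only [pt] <;> ring

lemma IsSaturated.adj_of_clear (hS : IsSaturated G f) (hP : IsPlanarDrawing G f) {x u : V}
    (hux : u ≠ x) (hclear : ∀ Q ∈ segment ℝ (f x) (f u), Q ∈ awayFrom G f x → Q = f u) :
    G.Adj x u := by
  refine hS.adj hP hux.symm ?_ ?_
  · intro c hcx hcu hc
    exact hcu (hP.1 (hclear _ hc (Or.inl ⟨c, hcx, rfl⟩)))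
  · intro c d t s hcd hxc hxd huc hud ht0 ht1 hs0 hs1 hQ _ _
    have hm := pt_mem_segment (P := f c) (Q := f d) hs0 hs1
    have h := hclear _ (pt_mem_segment ht0.le ht1.le)
      (Or.inr ⟨c, d, hcd, hxc.symm, hxd.symm, hQ ▸ hm⟩)
    rw [← hQ, h] at hm
    exact hP.2.2.2 c d u hcd huc hud hm

/-- If the view from `x` in some direction is blocked by an inner point `P` of the edge `cd`, then
`x` is adjacent to a vertex seen between `P` and `d`. -/
lemma IsSaturated.exists_adj_of_blocked [Finite V] (hS : IsSaturated G f)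
    (hP : IsPlanarDrawing G f) {x c d : V} {P : ℝ × ℝ} (hcd : G.Adj c d) (hcx : c ≠ x)
    (hdx : d ≠ x) (hPm : P ∈ segment ℝ (f c) (f d)) (hPx : P ≠ f x)
    (hPv : ∀ u, u ≠ x → P ≠ f u)
    (hclear : ∀ Q ∈ segment ℝ (f x) P, Q ∈ awayFrom G f x → Q = P) (E : ℝ × ℝ)
    (hφP : 0 < cr (f x) E P) (hφd : 0 < cr (f x) E (f d)) :
    ∃ w, G.Adj x w ∧ 0 < cr (f x) E (f w) := by
  obtain ⟨s₀, hs₀, hs₁, hs⟩ := mem_segment_iff.mp hPm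
  have hs₀' : 0 < s₀ := lt_of_le_of_ne hs₀ (by
    rintro rfl
    rw [pt_zero] at hs
    exact hPv c hcx hs)
  have hs₁' : s₀ < 1 := lt_of_le_of_ne hs₁ (by
    rintro rfl
    rw [pt_one] at hs
    exact hPv d hdx hs)
  have hB : ∀ e e', G.Adj e e' → e ≠ x → e' ≠ x → ∀ Q ∈ segment ℝ (f x) P,
      Q ∈ segment ℝ (f e) (f e') → Q = P := fun e e' h h1 h2 Q hQ hQ' =>
    hclear Q hQ (Or.inr ⟨e, e', h, h1, h2, hQ'⟩)
  have hD : cr (f x) P (f d) ≠ 0 := by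
    intro hD
    have hcol : ∀ e e' t, G.Adj e e' → e ≠ x → e' ≠ x → P ∈ segment ℝ (f e) (f e') →
        f e = pt (f x) P t → 1 < t := by
      intro e e' t hee hex hex' hm ht
      by_contra! h
      have h2 : 0 < 2 - t := by linarith
      have hQ : pt P (f e) (1 / (2 - t)) = pt (f x) P (1 / (2 - t)) := by
        rw [ht]
        ext <;> simp only [pt] <;> field_simp <;> ring
      have h01 : 0 ≤ 1 / (2 - t) ∧ 1 / (2 - t) ≤ 1 :=
        ⟨by positivity, (div_le_one h2).mpr (by linarith)⟩
      have h3 := hB e e' hee hex hex' _ (pt_mem_segment h01.1 h01.2)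
        (hQ ▸ pt_mem_segment_of_mem hm h01.1 h01.2)
      have h4 : 1 / (2 - t) = 1 := pt_injective hPx.symm (h3.trans (pt_one _ _).symm)
      have h5 : t = 1 := by
        rw [div_eq_one_iff_eq h2.ne'] at h4
        linarith
      rw [h5, pt_one] at ht
      exact hPv e hex ht.symm
    have hDc : cr (f x) P (f c) = 0 := by
      have h := cr_pt (f x) P (f c) (f d) s₀
      rw [← hs, cr_self_right, hD, mul_zero, add_zero, eq_comm, mul_eq_zero] at h
      exact h.resolve_left (by linarith)
    obtain ⟨t, ht⟩ := exists_eq_pt hPx.symm hD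
    obtain ⟨r, hr⟩ := exists_eq_pt hPx.symm hDc
    have ht1 := hcol d c t hcd.symm hdx hcx (by rwa [segment_symm]) ht
    have hr1 := hcol c d r hcd hcx hdx hPm hr
    have h : (1 - s₀) * r + s₀ * t = 1 := by
      refine pt_injective hPx.symm (Eq.trans ?_ (hs.symm.trans (pt_one _ _).symm))
      rw [hr, ht]
      ext <;> simp only [pt] <;> ring
    nlinarith
  obtain ⟨b, k, hbpt, hkpt, hrec, hbP, hkP, hbd, hkd, hbx, hkx, hcrk⟩ : ∃ b k : ℝ × ℝ → ℝ,
      (∀ A B t, b (pt A B t) = (1 - t) * b A + t * b B) ∧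
      (∀ A B t, k (pt A B t) = (1 - t) * k A + t * k B) ∧
      (∀ Q, Q = ((f x).1 + b Q * (P.1 - (f x).1) + k Q * ((f d).1 - (f x).1),
        (f x).2 + b Q * (P.2 - (f x).2) + k Q * ((f d).2 - (f x).2))) ∧
      b P = 1 ∧ k P = 0 ∧ b (f d) = 0 ∧ k (f d) = 1 ∧ b (f x) = 0 ∧ k (f x) = 0 ∧
      ∀ A Q, cr (f x) A Q = cr (f x) P (f d) * (b A * k Q - k A * b Q) := by
    refine ⟨fun Q => cr (f d) (f x) Q / cr (f x) P (f d), fun Q => cr (f x) P Q / cr (f x) P (f d),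
      ?_, ?_, ?_, ?_, ?_, ?_, ?_, ?_, ?_, ?_⟩
    · intro A B t
      simp only [cr_pt]
      ring
    · intro A B t
      simp only [cr_pt]
      ring
    · intro Q
      ext
      · field_simp
        simp only [cr]
        ring
      · field_simp
        simp only [cr]
        ring
    · simp only []
      rw [cr_rot, div_self hD]
    · simp [cr_self_right]
    · simp [cr_self_left]
    · simp [hD]
    · simp [cr_self_right]
    · simp [cr_self_left]
    · intro A Q
      field_simp
      simp only [cr]
      ring
  have hφ : ∀ Q, cr (f x) E Q = b Q * cr (f x) E P + k Q * cr (f x) E (f d) := by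
    intro Q
    conv_lhs => rw [hrec Q]
    simp only [cr]
    ring
  have hray : ∀ Q, k Q = 0 → 0 ≤ b Q → b Q ≤ 1 → Q ∈ segment ℝ (f x) P := by
    intro Q h1 h2 h3
    refine mem_segment_iff.mpr ⟨b Q, h2, h3, ?_⟩
    conv_lhs => rw [hrec Q, h1]
    simp only [pt, zero_mul, add_zero]
  have hside : ∀ Q, b Q + k Q = 1 → 0 ≤ k Q → k Q ≤ 1 → Q ∈ segment ℝ (f c) (f d) := by
    intro Q h1 h2 h3
    rw [segment_symm] at hPm ⊢
    have h4 := pt_mem_segment_of_mem hPm h2 h3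
    have h5 : pt P (f d) (k Q) = Q := by
      refine Eq.trans ?_ (hrec Q).symm
      rw [show b Q = 1 - k Q by linarith]
      ext <;> simp only [pt] <;> ring
    rwa [h5] at h4
  have hkc : k (f c) < 0 := by
    have := hkpt (f c) (f d) s₀
    rw [← hs, hkP, hkd] at this
    by_contra! h
    nlinarith
  have hline : ∀ Q ∈ segment ℝ (f c) (f d), b Q + k Q = 1 := by
    have hc : b (f c) + k (f c) = 1 := by
      have h1 := hbpt (f c) (f d) s₀
      have h2 := hkpt (f c) (f d) s₀
      rw [← hs, hkP, hkd] at h2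
      rw [← hs, hbP, hbd] at h1
      have : (1 - s₀) * (b (f c) + k (f c) - 1) = 0 := by linarith
      rcases mul_eq_zero.mp this with h | h <;> linarith
    intro Q hQ
    obtain ⟨t, -, -, rfl⟩ := mem_segment_iff.mp hQ
    rw [hbpt, hkpt, hbd, hkd]
    linear_combination (1 - t) * hc
  let U : Set V := {u | u ≠ x ∧ 0 ≤ b (f u) ∧ 0 ≤ k (f u) ∧ b (f u) + k (f u) ≤ 1}
  have hUk : ∀ u ∈ U, 0 < k (f u) := by
    rintro u ⟨hux, h1, h2, h3⟩
    refine lt_of_le_of_ne h2 fun h0 => hPv u hux (Eq.symm ?_)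
    exact hclear _ (hray _ h0.symm h1 (by linarith)) (Or.inl ⟨u, hux, rfl⟩)
  obtain ⟨w, hwU, hmax⟩ := U.toFinite.exists_maximalFor
    (fun u => toLex (b (f u) / k (f u), - k (f u))) U
    ⟨d, hdx, hbd.ge, by rw [hkd]; exact zero_le_one, by rw [hbd, hkd, zero_add]⟩
  have hkw := hUk w hwU
  obtain ⟨hwx, hbw0, -, hsw⟩ := id hwU
  have hψ : ∀ u ∈ U, b (f u) * k (f w) ≤ k (f u) * b (f w) ∧
      (b (f u) * k (f w) = k (f u) * b (f w) → k (f w) ≤ k (f u)) := by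
    intro u hu
    have hku := hUk u hu
    have h := (le_total _ _).elim (hmax (j := u) hu) id
    rw [Prod.Lex.toLex_le_toLex] at h
    simp only [div_lt_div_iff₀ hku hkw, div_eq_div_iff hku.ne' hkw.ne', neg_le_neg_iff] at h
    rcases h with h | h
    · exact ⟨by linarith, fun h' => by linarith⟩
    · exact ⟨by linarith, fun _ => h.2⟩
  refine ⟨w, hS.adj hP hwx.symm ?_ ?_, ?_⟩
  · intro u hux huw hu
    obtain ⟨t, ht0, ht1, ht⟩ := mem_segment_iff.mp hu
    have ht1' : t < 1 := lt_of_le_of_ne ht1 (by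
      rintro rfl
      rw [pt_one] at ht
      exact huw (hP.1 ht))
    have h1 : b (f u) = t * b (f w) := by rw [ht, hbpt, hbx]; ring
    have h2 : k (f u) = t * k (f w) := by rw [ht, hkpt, hkx]; ring
    have h3 := (hψ u ⟨hux, by rw [h1]; positivity, by rw [h2]; positivity, by
      rw [h1, h2]; nlinarith⟩).2 (by rw [h1, h2]; ring)
    nlinarith
  · have key : ∀ e e' t, G.Adj e e' → x ≠ e → x ≠ e' → 0 < t → t < 1 →
        pt (f x) (f w) t ∈ segment ℝ (f e) (f e') → k (f e) * b (f w) < b (f e) * k (f w) →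
        False := by
      intro e e' t hee hxe hxe' ht0 ht1 hm hψe
      have h1 : b (pt (f x) (f w) t) = t * b (f w) := by rw [hbpt, hbx]; ring
      have h2 : k (pt (f x) (f w) t) = t * k (f w) := by rw [hkpt, hkx]; ring
      have hnot : ¬ (0 ≤ k (f e) ∧ 0 ≤ 1 - (b (f e) + k (f e))) := by
        rintro ⟨h3, h4⟩
        have h5 : 0 ≤ b (f e) := by
          by_contra! h5
          nlinarith [mul_nonneg h3 hbw0, mul_pos (neg_pos.mpr h5) hkw]
        exact hψe.not_ge (hψ e ⟨hxe.symm, h5, h3, by linarith⟩).1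
      have hlt : b (pt (f x) (f w) t) + k (pt (f x) (f w) t) < 1 := by
        rw [h1, h2]
        nlinarith
      obtain ⟨τ, hτ0, hτ1, hτ⟩ := exists_exit (u₀ := k (pt (f x) (f w) t))
        (v₀ := 1 - (b (pt (f x) (f w) t) + k (pt (f x) (f w) t))) (by rw [h2]; positivity)
        (by linarith) hnot
      have hQm := pt_mem_segment_of_mem hm hτ0.le hτ1
      have hbQ := hbpt (pt (f x) (f w) t) (f e) τ
      have hkQ := hkpt (pt (f x) (f w) t) (f e) τ
      have hψQ : k (pt (pt (f x) (f w) t) (f e) τ) * b (f w) <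
          b (pt (pt (f x) (f w) t) (f e) τ) * k (f w) := by
        rw [hbQ, hkQ, h1, h2]
        nlinarith
      have hsame : ¬ ((c = e ∧ d = e') ∨ (c = e' ∧ d = e)) := by
        intro h
        have hm' : pt (f x) (f w) t ∈ segment ℝ (f c) (f d) := by
          rcases h with ⟨rfl, rfl⟩ | ⟨rfl, rfl⟩
          · exact hm
          · rwa [segment_symm]
        exact hlt.ne (hline _ hm')
      have hk0 : 0 ≤ k (pt (pt (f x) (f w) t) (f e) τ) := by
        rcases hτ with h | h <;> linarith
      have hb0 : 0 < b (pt (pt (f x) (f w) t) (f e) τ) := by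
        by_contra! h
        nlinarith [mul_nonneg hk0 hbw0]
      have hcases : k (pt (pt (f x) (f w) t) (f e) τ) = 0 ∧ b (pt (pt (f x) (f w) t) (f e) τ) ≤ 1 ∨
          b (pt (pt (f x) (f w) t) (f e) τ) + k (pt (pt (f x) (f w) t) (f e) τ) = 1 := by
        rcases hτ with h | h
        · exact Or.inl ⟨by linarith, by nlinarith⟩
        · exact Or.inr (by linarith)
      generalize pt (pt (f x) (f w) t) (f e) τ = Q at *
      have hQcd : Q ∈ segment ℝ (f c) (f d) := by
        rcases hcases with h | h
        · rw [hB e e' hee hxe.symm hxe'.symm Q (hray Q h.1 hb0.le h.2) hQm]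
          exact hPm
        · exact hside Q h hk0 (by linarith)
      rcases hP.eq_or_eq_of_mem hcd hee hQcd hQm with h | h | h
      · rw [h] at hk0
        linarith
      · rw [h, hbd] at hb0
        exact hb0.false
      · exact hsame h
    intro e e' t s hee hxe hxe' hwe hwe' ht0 ht1 hs0 hs1 hQ hc1 hc2
    rw [hcrk] at hc1 hc2
    have hm := pt_mem_segment (P := f e) (Q := f e') hs0 hs1
    rw [← hQ] at hm
    rcases lt_or_gt_of_ne hD with hD | hD
    · refine key e e' t hee hxe hxe' ht0 ht1 hm ?_
      nlinarith
    · rw [segment_symm] at hm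
      refine key e' e t hee.symm hxe' hxe ht0 ht1 hm ?_
      nlinarith
  · rw [hφ]
    positivity

/-- If some vertex lies in an open half-plane through `x`, then so does some neighbour of `x`. -/
lemma IsSaturated.exists_adj_cr_pos [Finite V] (hS : IsSaturated G f) (hP : IsPlanarDrawing G f)
    {x w₀ : V} {E : ℝ × ℝ} (h : 0 < cr (f x) E (f w₀)) :
    ∃ w, G.Adj x w ∧ 0 < cr (f x) E (f w) := by
  have hw₀ : w₀ ≠ x := by
    rintro rfl
    rw [cr_self_left] at h
    exact h.false
  obtain ⟨t, ht0, hB, hmin⟩ := hP.exists_first_hit hw₀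
  set P := pt (f x) (f w₀) t with hPdef
  have hφP : 0 < cr (f x) E P := by
    rw [hPdef, cr_pt, cr_self_left]
    simp [ht0, h]
  have hclear : ∀ Q ∈ segment ℝ (f x) P, Q ∈ awayFrom G f x → Q = P := by
    intro Q hQ hQB
    obtain ⟨r, hr0, hr1, rfl⟩ := mem_segment_iff.mp hQ
    rcases eq_or_lt_of_le hr1 with rfl | hr1
    · exact pt_one _ _
    · rw [hPdef, pt_pt] at hQB
      exact absurd hQB (hmin _ (by positivity) (by nlinarith))
  by_cases hv : ∃ u, u ≠ x ∧ P = f u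
  · obtain ⟨u, hux, hu⟩ := hv
    exact ⟨u, hS.adj_of_clear hP hux (hu ▸ hclear), hu ▸ hφP⟩
  · push Not at hv
    obtain ⟨u, hux, hu⟩ | ⟨c, d, hcd, hcx, hdx, hPm⟩ := hB
    · exact absurd hu (hv u hux)
    have hPx : P ≠ f x := by
      intro hPx
      rw [hPx, cr_self_left] at hφP
      exact hφP.false
    by_cases hd : 0 < cr (f x) E (f d)
    · exact hS.exists_adj_of_blocked hP hcd hcx hdx hPm hPx hv hclear E hφP hd
    · rw [segment_symm] at hPm
      refine hS.exists_adj_of_blocked hP hcd.symm hdx hcx hPm hPx hv hclear E hφP ?_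
      obtain ⟨s, hs0, hs1, hs⟩ := mem_segment_iff.mp hPm
      rw [hs, cr_pt] at hφP
      by_contra! hc
      nlinarith

end HalfPlane

section Angles

/-- The angle from the direction `e` to the direction `v`, in `(-π, π]`. -/
noncomputable def ang (e v : ℝ × ℝ) : ℝ :=
  Complex.arg ⟨e.1 * v.1 + e.2 * v.2, e.1 * v.2 - e.2 * v.1⟩

lemma ang_le_pi (e v : ℝ × ℝ) : ang e v ≤ Real.pi := Complex.arg_le_pi _

lemma neg_pi_lt_ang (e v : ℝ × ℝ) : -Real.pi < ang e v := Complex.neg_pi_lt_arg _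

lemma normSq_pos {e : ℝ × ℝ} (he : e ≠ 0) : 0 < e.1 ^ 2 + e.2 ^ 2 := by
  by_contra! h
  refine he (Prod.ext ?_ ?_)
  · simp only [Prod.fst_zero]
    nlinarith [sq_nonneg e.1, sq_nonneg e.2]
  · simp only [Prod.snd_zero]
    nlinarith [sq_nonneg e.1, sq_nonneg e.2]

lemma exists_polar {e v : ℝ × ℝ} (he : e ≠ 0) (hv : v ≠ 0) : ∃ r, 0 < r ∧
    e.1 * v.1 + e.2 * v.2 = r * Real.cos (ang e v) ∧
    e.1 * v.2 - e.2 * v.1 = r * Real.sin (ang e v) := by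
  set z : ℂ := ⟨e.1 * v.1 + e.2 * v.2, e.1 * v.2 - e.2 * v.1⟩ with hz
  have hz0 : z ≠ 0 := by
    intro h
    have h1 := congrArg Complex.re h
    have h2 := congrArg Complex.im h
    simp only [hz, Complex.zero_re, Complex.zero_im] at h1 h2
    have h3 : (e.1 ^ 2 + e.2 ^ 2) * (v.1 ^ 2 + v.2 ^ 2) = 0 := by
      linear_combination (e.1 * v.1 + e.2 * v.2) * h1 + (e.1 * v.2 - e.2 * v.1) * h2
    exact (mul_pos (normSq_pos he) (normSq_pos hv)).ne' h3
  exact ⟨‖z‖, norm_pos_iff.mpr hz0, (Complex.norm_mul_cos_arg z).symm,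
    (Complex.norm_mul_sin_arg z).symm⟩

lemma ang_lt_iff {e u v : ℝ × ℝ} (he : e ≠ 0) (hu : u ≠ 0) (hv : v ≠ 0) :
    0 < u.1 * v.2 - u.2 * v.1 ↔
      (0 < ang e v - ang e u ∧ ang e v - ang e u < Real.pi) ∨ ang e v - ang e u < - Real.pi := by
  obtain ⟨r, hr, hr1, hr2⟩ := exists_polar he hu
  obtain ⟨s, hs, hs1, hs2⟩ := exists_polar he hv
  have key : (e.1 ^ 2 + e.2 ^ 2) * (u.1 * v.2 - u.2 * v.1) =
      r * s * Real.sin (ang e v - ang e u) := by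
    rw [Real.sin_sub]
    calc _ = (e.1 * u.1 + e.2 * u.2) * (e.1 * v.2 - e.2 * v.1) -
          (e.1 * u.2 - e.2 * u.1) * (e.1 * v.1 + e.2 * v.2) := by ring
      _ = _ := by rw [hr1, hr2, hs1, hs2]; ring
  have h1 : 0 < u.1 * v.2 - u.2 * v.1 ↔ 0 < Real.sin (ang e v - ang e u) := by
    rw [← mul_pos_iff_of_pos_left (normSq_pos he), key, mul_pos_iff_of_pos_left (by positivity)]
  rw [h1]
  have b1 := ang_le_pi e u
  have b2 := ang_le_pi e v
  have b3 := neg_pi_lt_ang e u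
  have b4 := neg_pi_lt_ang e v
  generalize ang e v = β at *
  generalize ang e u = α at *
  constructor
  · intro h
    by_contra! hcon
    obtain ⟨h2, h3⟩ := hcon
    rcases le_or_gt (β - α) 0 with h4 | h4
    · exact h.not_ge (Real.sin_nonpos_of_nonpos_of_neg_pi_le h4 h3)
    · have h5 := h2 h4
      have h6 : 0 ≤ Real.sin (β - α - Real.pi) :=
        Real.sin_nonneg_of_nonneg_of_le_pi (by linarith) (by linarith)
      rw [Real.sin_sub_pi] at h6
      linarith
  · rintro (h | h)
    · exact Real.sin_pos_of_pos_of_lt_pi h.1 h.2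
    · have h6 : 0 < Real.sin (β - α + 2 * Real.pi) :=
        Real.sin_pos_of_pos_of_lt_pi (by linarith) (by linarith)
      rwa [Real.sin_add_two_pi] at h6

lemma exists_smul_of_ang_eq {e u v : ℝ × ℝ} (he : e ≠ 0) (hu : u ≠ 0) (hv : v ≠ 0)
    (h : ang e u = ang e v) : ∃ t : ℝ, 0 < t ∧ v = t • u := by
  obtain ⟨r, hr, hr1, hr2⟩ := exists_polar he hu
  obtain ⟨s, hs, hs1, hs2⟩ := exists_polar he hv
  rw [h] at hr1 hr2
  have h1 : e.1 * (r * v.1 - s * u.1) + e.2 * (r * v.2 - s * u.2) = 0 := by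
    linear_combination r * hs1 - s * hr1
  have h2 : e.1 * (r * v.2 - s * u.2) - e.2 * (r * v.1 - s * u.1) = 0 := by
    linear_combination r * hs2 - s * hr2
  have h3 : r * v.1 - s * u.1 = 0 := by
    refine (mul_eq_zero.mp (?_ : (e.1 ^ 2 + e.2 ^ 2) * (r * v.1 - s * u.1) = 0)).resolve_left
      (normSq_pos he).ne'
    linear_combination e.1 * h1 - e.2 * h2
  have h4 : r * v.2 - s * u.2 = 0 := by
    refine (mul_eq_zero.mp (?_ : (e.1 ^ 2 + e.2 ^ 2) * (r * v.2 - s * u.2) = 0)).resolve_left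
      (normSq_pos he).ne'
    linear_combination e.2 * h1 + e.1 * h2
  refine ⟨s / r, by positivity, ?_⟩
  ext
  · simp only [Prod.smul_fst, smul_eq_mul]
    field_simp
    linarith
  · simp only [Prod.smul_snd, smul_eq_mul]
    field_simp
    linarith

lemma ang_self {e : ℝ × ℝ} : ang e e = 0 := by
  rw [ang, Complex.arg_eq_zero_iff]
  exact ⟨by nlinarith [sq_nonneg e.1, sq_nonneg e.2], by ring⟩

lemma ang_neg_self {e : ℝ × ℝ} (he : e ≠ 0) : ang (-e) e = Real.pi := by
  rw [ang, Complex.arg_eq_pi_iff]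
  simp only [Prod.fst_neg, Prod.snd_neg]
  exact ⟨by nlinarith [normSq_pos he], by ring⟩

end Angles

section Sorting

variable {α : Type*}

lemma exists_sorted_list (N : Finset α) (κ : α → ℝ) (hκ : Set.InjOn κ N) :
    ∃ ℓ : List α, (∀ y, y ∈ ℓ ↔ y ∈ N) ∧ ℓ.Pairwise (fun y z => κ y < κ z) := by
  classical
  induction N using Finset.induction_on_max_value κ with
  | empty => exact ⟨[], by simp⟩
  | insert a s ha hmax ih =>
    obtain ⟨ℓ, h1, h2⟩ := ih (hκ.mono (by simp))
    refine ⟨ℓ ++ [a], fun y => by simp [h1, or_comm], ?_⟩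
    rw [List.pairwise_append]
    refine ⟨h2, List.pairwise_singleton _ _, fun y hy z hz => ?_⟩
    rw [List.mem_singleton.mp hz]
    have hy' := (h1 y).mp hy
    refine lt_of_le_of_ne (hmax y hy') fun h => ha ?_
    rwa [← hκ (by simp [hy']) (by simp) h]

lemma isChain_of_sorted {ℓ : List α} {κ : α → ℝ} {R : α → α → Prop}
    (hℓ : ℓ.Pairwise (fun y z => κ y < κ z))
    (h : ∀ y ∈ ℓ, ∀ z ∈ ℓ, κ y < κ z → (∀ w ∈ ℓ, κ y < κ w → ¬ κ w < κ z) → R y z) :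
    ℓ.IsChain R := by
  rw [List.isChain_iff_getElem]
  rw [List.pairwise_iff_getElem] at hℓ
  intro i hi
  refine h _ (List.getElem_mem _) _ (List.getElem_mem _) (hℓ _ _ _ _ (Nat.lt_succ_self i)) ?_
  intro w hw
  obtain ⟨j, hj, rfl⟩ := List.getElem_of_mem hw
  intro h1 h2
  rcases le_or_gt j i with hji | hji
  · rcases eq_or_lt_of_le hji with rfl | hji
    · exact h1.false
    · exact (hℓ _ _ hj (by omega) hji).not_gt h1
  · rcases eq_or_lt_of_le (Nat.succ_le_of_lt hji) with rfl | hji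
    · exact h2.false
    · exact (hℓ _ _ hi hj hji).not_gt h2

lemma head?_of_sorted {ℓ : List α} {κ : α → ℝ} (hℓ : ℓ.Pairwise (fun y z => κ y < κ z)) {m : α}
    (hm : m ∈ ℓ) (h : ∀ w ∈ ℓ, κ m ≤ κ w) : ℓ.head? = some m := by
  cases ℓ with
  | nil => simp at hm
  | cons a l =>
    rcases List.mem_cons.mp hm with rfl | hm
    · rfl
    · exact absurd (h a (by simp)) (List.rel_of_pairwise_cons hℓ hm).not_ge

lemma getLast?_of_sorted {ℓ : List α} {κ : α → ℝ} (hℓ : ℓ.Pairwise (fun y z => κ y < κ z)) {m : α}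
    (hm : m ∈ ℓ) (h : ∀ w ∈ ℓ, κ w ≤ κ m) : ℓ.getLast? = some m := by
  rcases List.eq_nil_or_concat ℓ with rfl | ⟨l, a, rfl⟩
  · simp at hm
  · rw [List.concat_eq_append] at *
    rcases List.mem_append.mp hm with hm | hm
    · exact absurd (h a (by simp)) ((List.pairwise_append.mp hℓ).2.2 m hm a (by simp)).not_ge
    · simp [List.mem_singleton.mp hm]

lemma nodup_of_sorted {ℓ : List α} {κ : α → ℝ} (hℓ : ℓ.Pairwise (fun y z => κ y < κ z)) :
    ℓ.Nodup :=
  hℓ.imp fun h h' => by simp [h'] at h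

lemma exists_rank [Finite α] {β : Type*} [LinearOrder β] {key : α → β}
    (hkey : Function.Injective key) :
    ∃ h : α → ℕ, Function.Injective h ∧ ∀ p q, h q < h p ↔ key q < key p := by
  classical
  have := Fintype.ofFinite α
  have hlt : ∀ p q, key q < key p →
      (Finset.univ.filter fun u => key u < key q).card <
        (Finset.univ.filter fun u => key u < key p).card := by
    intro p q hpq
    refine Finset.card_lt_card (Finset.ssubset_iff.mpr ⟨q, by simp, fun u hu => ?_⟩)
    rcases Finset.mem_insert.mp hu with rfl | hu
    · simpa using hpq
    · simp only [Finset.mem_filter, Finset.mem_univ, true_and] at hu ⊢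
      exact hu.trans hpq
  have hiff : ∀ p q, (Finset.univ.filter fun u => key u < key q).card <
        (Finset.univ.filter fun u => key u < key p).card ↔ key q < key p := by
    refine fun p q => ⟨fun h => ?_, hlt p q⟩
    by_contra! hc
    rcases eq_or_lt_of_le hc with hc | hc
    · rw [hkey hc] at h
      exact h.false
    · exact h.not_gt (hlt q p hc)
  refine ⟨_, fun p q hpq => ?_, hiff⟩
  by_contra hne
  rcases lt_or_gt_of_ne (fun h => hne (hkey h)) with h | h
  · exact (hlt q p h).ne hpq
  · exact (hlt p q h).ne hpq.symm

end Sorting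

section Fans

variable {V : Type*} {G : SimpleGraph V} {f : V → ℝ × ℝ}

lemma cr_pos_iff_ang (hf : Function.Injective f) {e : ℝ × ℝ} (he : e ≠ 0) {x y z : V} (hy : y ≠ x)
    (hz : z ≠ x) : 0 < cr (f x) (f y) (f z) ↔
      (0 < ang e (f z - f x) - ang e (f y - f x) ∧
        ang e (f z - f x) - ang e (f y - f x) < Real.pi) ∨
      ang e (f z - f x) - ang e (f y - f x) < - Real.pi := by
  rw [← ang_lt_iff he (sub_ne_zero.mpr (hf.ne hy)) (sub_ne_zero.mpr (hf.ne hz))]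
  rfl

lemma _root_.IsPlanarDrawing.eq_of_ang_eq (hP : IsPlanarDrawing G f) {e : ℝ × ℝ} (he : e ≠ 0)
    {x y z : V} (hy : G.Adj x y) (hz : G.Adj x z)
    (h : ang e (f y - f x) = ang e (f z - f x)) : y = z := by
  obtain ⟨t, ht0, ht⟩ := exists_smul_of_ang_eq he (sub_ne_zero.mpr (hP.1.ne hy.ne'))
    (sub_ne_zero.mpr (hP.1.ne hz.ne')) h
  refine hP.eq_of_eq_pt hy hz ?_ ht0
  rw [sub_eq_iff_eq_add] at ht
  rw [ht]
  ext <;> simp [pt] <;> ring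

/-- A block of neighbours of `x` without reflex gaps, sorted by angle, forms a fan of faces. -/
lemma IsSaturated.exists_fan [Finite V] (hS : IsSaturated G f) (hP : IsPlanarDrawing G f)
    {e : ℝ × ℝ} (he : e ≠ 0) {x : V} (N : Finset V) (hN : ∀ y ∈ N, G.Adj x y)
    (hblock : ∀ y ∈ N, ∀ z ∈ N, ∀ w, G.Adj x w → ang e (f y - f x) < ang e (f w - f x) →
      ang e (f w - f x) < ang e (f z - f x) → w ∈ N)
    (hgap : ∀ y ∈ N, ∀ z ∈ N, ang e (f y - f x) < ang e (f z - f x) →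
      (∀ w ∈ N, ang e (f y - f x) < ang e (f w - f x) →
        ¬ ang e (f w - f x) < ang e (f z - f x)) →
      ang e (f z - f x) - ang e (f y - f x) < Real.pi) :
    ∃ ℓ : List V, (∀ y, y ∈ ℓ ↔ y ∈ N) ∧
      ℓ.Pairwise (fun y z => ang e (f y - f x) < ang e (f z - f x)) ∧
      ℓ.IsChain (IsFace G f x) := by
  obtain ⟨ℓ, h1, h2⟩ := exists_sorted_list N (fun y => ang e (f y - f x))
    (fun y hy z hz h => hP.eq_of_ang_eq he (hN y hy) (hN z hz) h)
  refine ⟨ℓ, h1, h2, isChain_of_sorted h2 fun y hy z hz hyz hcons => ?_⟩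
  rw [h1] at hy hz
  have hy' := hN y hy
  have hz' := hN z hz
  have hg := hgap y hy z hz hyz fun w hw => hcons w ((h1 w).mpr hw)
  refine IsCorner.isFace hP hS ⟨hy', hz', ?_, fun w hw ⟨h3, h4⟩ => ?_⟩
  · rw [cr_pos_iff_ang hP.1 he hy'.ne' hz'.ne']
    exact Or.inl ⟨by linarith, hg⟩
  · rw [cr_pos_iff_ang hP.1 he hy'.ne' hw.ne'] at h3
    rw [cr_pos_iff_ang hP.1 he hw.ne' hz'.ne'] at h4
    have h5 : ang e (f y - f x) < ang e (f w - f x) := by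
      rcases h3 with h3 | h3 <;> rcases h4 with h4 | h4 <;> linarith
    have h6 : ang e (f w - f x) < ang e (f z - f x) := by
      rcases h3 with h3 | h3 <;> rcases h4 with h4 | h4 <;> linarith
    exact hcons w ((h1 w).mpr (hblock y hy z hz w hw h5 h6)) h5 h6

lemma IsSaturated.cyc [Finite V] (hS : IsSaturated G f) (hP : IsPlanarDrawing G f) {x : V}
    (hx : ∀ E, E ≠ f x → ∃ w, 0 < cr (f x) E (f w)) : Cyc G (IsFace G f) x := by
  classical
  have := Fintype.ofFinite V
  have hx' : ∀ E, E ≠ f x → ∃ w, G.Adj x w ∧ 0 < cr (f x) E (f w) := by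
    intro E hE
    obtain ⟨w, hw⟩ := hx E hE
    exact hS.exists_adj_cr_pos hP hw
  intro v hv
  have hv0 : f v - f x ≠ 0 := sub_ne_zero.mpr (hP.1.ne hv.ne')
  have he : -(f v - f x) ≠ 0 := neg_ne_zero.mpr hv0
  have hκv : ang (-(f v - f x)) (f v - f x) = Real.pi := ang_neg_self hv0
  generalize -(f v - f x) = e at he hκv
  have hlt : ∀ w, G.Adj x w → w ≠ v → ang e (f w - f x) < Real.pi := fun w hw hwv =>
    lt_of_le_of_ne (ang_le_pi _ _) fun h => hwv (hP.eq_of_ang_eq he hw hv (h.trans hκv.symm))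
  have hgt : ∀ w, -Real.pi < ang e (f w - f x) := fun w => neg_pi_lt_ang _ _
  have hpos := fun {y z : V} (hy : G.Adj x y) (hz : G.Adj x z) =>
    cr_pos_iff_ang hP.1 he hy.ne' hz.ne'
  have hpi := Real.pi_pos
  obtain ⟨ℓ, hmem, hsort, hchain⟩ := hS.exists_fan hP he (x := x)
    (Finset.univ.filter fun w => G.Adj x w ∧ w ≠ v) (by simp; tauto) (by
      intro y _ z _ w hw _ h2
      simp only [Finset.mem_filter, Finset.mem_univ, true_and]
      refine ⟨hw, ?_⟩
      rintro rfl
      rw [hκv] at h2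
      exact (ang_le_pi _ _).not_gt h2) (by
      intro y hy z hz hyz hcons
      simp only [Finset.mem_filter, Finset.mem_univ, true_and] at hy hz hcons
      by_contra! hgap
      obtain ⟨w, hw, hw'⟩ := hx' (f y) (hP.1.ne hy.1.ne')
      have hz' := hlt z hz.1 hz.2
      have hy' := hgt y
      rw [hpos hy.1 hw] at hw'
      rcases hw' with ⟨h1, h2⟩ | h1
      · refine hcons w ⟨hw, ?_⟩ (by linarith) (by linarith)
        rintro rfl
        linarith
      · linarith [hgt w])
  simp only [Finset.mem_filter, Finset.mem_univ, true_and] at hmem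
  refine ⟨ℓ, nodup_of_sorted hsort, hmem, hchain, ?_, ?_⟩
  · obtain ⟨w, hw, hw'⟩ := hx' (f v) (hP.1.ne hv.ne')
    have hwv : w ≠ v := by
      rintro rfl
      rw [cr_self_right] at hw'
      exact hw'.false
    obtain ⟨h, hh, hmin⟩ := ℓ.toFinset.exists_min_image (fun w => ang e (f w - f x))
      ⟨w, by simp [hmem, hw, hwv]⟩
    simp only [List.mem_toFinset] at hh hmin
    refine ⟨h, head?_of_sorted hsort hh hmin, IsCorner.isFace hP hS ?_⟩
    have hle := hmin w (by simp [hmem, hw, hwv])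
    obtain ⟨hxh, hhv⟩ := (hmem h).mp hh
    rw [hpos hv hw, hκv] at hw'
    have hw0 : ang e (f w - f x) < 0 := by
      have := hlt w hw hwv
      rcases hw' with h | h <;> linarith
    have hgth := hgt h
    refine ⟨hv, hxh, ?_, fun u hu ⟨h1, h2⟩ => ?_⟩
    · rw [hpos hv hxh, hκv]
      exact Or.inr (by linarith)
    · have huv : u ≠ v := by
        rintro rfl
        rw [cr_self_right] at h1
        exact h1.false
      have := hmin u (by simp [hmem, hu, huv])
      have := hlt u hu huv
      rw [hpos hv hu, hκv] at h1
      rw [hpos hu hxh] at h2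
      rcases h1 with h1 | h1 <;> rcases h2 with h2 | h2 <;> linarith
  · have hrefl : ∀ Q, cr (f x) ((2 : ℝ) • f x - f v) Q = cr (f x) Q (f v) := by
      intro Q
      simp only [cr, Prod.fst_sub, Prod.snd_sub, Prod.smul_fst, Prod.smul_snd, smul_eq_mul]
      ring
    obtain ⟨w, hw, hw'⟩ := hx' ((2 : ℝ) • f x - f v) (by
      intro h
      refine hv0 ?_
      rw [sub_eq_iff_eq_add, two_smul, add_comm (f x) (f v), add_comm] at h
      rw [sub_eq_zero]
      exact (add_left_cancel (h.trans (by abel))).symm)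
    rw [hrefl] at hw'
    have hwv : w ≠ v := by
      rintro rfl
      rw [cr_self_right] at hw'
      exact hw'.false
    obtain ⟨t, ht, hmax⟩ := ℓ.toFinset.exists_max_image (fun w => ang e (f w - f x))
      ⟨w, by simp [hmem, hw, hwv]⟩
    simp only [List.mem_toFinset] at ht hmax
    refine ⟨t, getLast?_of_sorted hsort ht hmax, IsCorner.isFace hP hS ?_⟩
    have hle := hmax w (by simp [hmem, hw, hwv])
    obtain ⟨hxt, htv⟩ := (hmem t).mp ht
    rw [hpos hw hv, hκv] at hw'
    have hw0 : 0 < ang e (f w - f x) := by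
      have := hlt w hw hwv
      rcases hw' with h | h <;> linarith
    have hltt := hlt t hxt htv
    refine ⟨hxt, hv, ?_, fun u hu ⟨h1, h2⟩ => ?_⟩
    · rw [hpos hxt hv, hκv]
      exact Or.inl ⟨by linarith, by linarith⟩
    · have huv : u ≠ v := by
        rintro rfl
        rw [cr_self_right] at h2
        exact h2.false
      have := hmax u (by simp [hmem, hu, huv])
      have := hgt u
      have := hlt u hu huv
      rw [hpos hu hv, hκv] at h2
      rw [hpos hxt hu] at h1
      rcases h1 with h1 | h1 <;> rcases h2 with h2 | h2 <;> linarith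

lemma IsSaturated.link [Fintype V] (hS : IsSaturated G f) (hP : IsPlanarDrawing G f) {a b c : V}
    (hab : G.Adj a b) (hac : G.Adj a c) (hbc : b ≠ c)
    (hb : ∀ w, w ≠ a → w ≠ b → 0 < cr (f a) (f b) (f w))
    (hc : ∀ w, w ≠ c → w ≠ a → 0 < cr (f c) (f a) (f w)) :
    Link G (IsFace G f) Finset.univ b a c := by
  classical
  obtain ⟨e, he, hκb⟩ : ∃ e, e ≠ 0 ∧ ang e (f b - f a) = 0 :=
    ⟨_, sub_ne_zero.mpr (hP.1.ne hab.ne'), ang_self⟩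
  have hκ : ∀ w, w ≠ a → w ≠ b → 0 < ang e (f w - f a) ∧ ang e (f w - f a) < Real.pi := by
    intro w hwa hwb
    have h := hb w hwa hwb
    rw [cr_pos_iff_ang hP.1 he hab.ne' hwa, hκb, sub_zero] at h
    exact h.resolve_right (neg_pi_lt_ang _ _).not_gt
  have hκ' : ∀ w, w ≠ a → 0 ≤ ang e (f w - f a) ∧ ang e (f w - f a) < Real.pi := by
    intro w hwa
    by_cases hwb : w = b
    · rw [hwb, hκb]
      exact ⟨le_rfl, Real.pi_pos⟩
    · exact ⟨(hκ w hwa hwb).1.le, (hκ w hwa hwb).2⟩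
  obtain ⟨ℓ, hmem, hsort, hchain⟩ := hS.exists_fan hP he (x := a)
    (Finset.univ.filter fun w => G.Adj a w) (by simp) (by
      intro y _ z _ w hw _ _
      simpa using hw) (by
      intro y hy z hz _ _
      simp only [Finset.mem_filter, Finset.mem_univ, true_and] at hy hz
      linarith [hκ' y hy.ne', hκ' z hz.ne'])
  simp only [Finset.mem_filter, Finset.mem_univ, true_and] at hmem
  refine ⟨ℓ, nodup_of_sorted hsort, by simpa using hmem, hchain,
    head?_of_sorted hsort ((hmem b).mpr hab) ?_, getLast?_of_sorted hsort ((hmem c).mpr hac) ?_, ?_⟩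
  · intro w hw
    rw [hκb]
    exact (hκ' w ((hmem w).mp hw).ne').1
  · intro w hw
    have hw := (hmem w).mp hw
    by_cases hwc : w = c
    · rw [hwc]
    have h := hc w hwc hw.ne'
    rw [cr_rot, cr_pos_iff_ang hP.1 he hw.ne' hac.ne'] at h
    have := hκ' w hw.ne'
    have := hκ' c hac.ne'
    rcases h with h | h <;> linarith
  · intro h
    have h1 := h.1.2.2.1
    have h2 := hb c hac.ne' hbc.symm
    rw [cr_swap] at h1
    linarith

lemma IsSaturated.exists_lower_fan [Finite V] (hS : IsSaturated G f) (hP : IsPlanarDrawing G f)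
    (p : V) : ∃ ℓ : List V, ℓ.IsChain (IsFace G f p) ∧
      ∀ q, q ∈ ℓ ↔ G.Adj p q ∧ toLex (f q) < toLex (f p) := by
  classical
  have := Fintype.ofFinite V
  have he : ((-1, 0) : ℝ × ℝ) ≠ 0 := by simp [Prod.ext_iff]
  have hlt : ∀ w, (f w).1 < (f p).1 ↔ w ≠ p ∧ |ang (-1, 0) (f w - f p)| < Real.pi / 2 := by
    intro w
    rw [ang, Complex.abs_arg_lt_pi_div_two_iff]
    simp only [Prod.fst_sub, Prod.snd_sub, Complex.ext_iff, Complex.zero_re, Complex.zero_im]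
    constructor
    · intro h
      exact ⟨by rintro rfl; exact h.false, Or.inl (by linarith)⟩
    · rintro ⟨hwp, h | h⟩
      · linarith
      · exact absurd (hP.1 (Prod.ext (by linarith) (by linarith))) hwp
  have hmid : ∀ w, toLex (f w) < toLex (f p) → -(Real.pi / 2) < ang (-1, 0) (f w - f p) ∧
      ang (-1, 0) (f w - f p) ≤ Real.pi / 2 := by
    intro w hw
    rcases Prod.Lex.toLex_lt_toLex.mp hw with h | ⟨h1, h2⟩
    · have h := abs_lt.mp ((hlt w).mp h).2
      exact ⟨h.1, h.2.le⟩
    · have h : ang (-1, 0) (f w - f p) = Real.pi / 2 := by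
        rw [ang, Complex.arg_eq_pi_div_two_iff]
        simp only [Prod.fst_sub, Prod.snd_sub]
        exact ⟨by linarith, by linarith⟩
      rw [h]
      exact ⟨by linarith [Real.pi_pos], le_rfl⟩
  obtain ⟨ℓ, hmem, -, hchain⟩ := hS.exists_fan hP he (x := p)
    (Finset.univ.filter fun w => G.Adj p w ∧ toLex (f w) < toLex (f p)) (by simp; tauto) (by
      intro y hy z hz w hw h1 h2
      simp only [Finset.mem_filter, Finset.mem_univ, true_and] at hy hz ⊢
      refine ⟨hw, Prod.Lex.toLex_lt_toLex.mpr (Or.inl ((hlt w).mpr ⟨hw.ne', abs_lt.mpr ⟨?_, ?_⟩⟩))⟩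
      · linarith [hmid y hy.2]
      · linarith [hmid z hz.2]) (by
      intro y hy z hz _ _
      simp only [Finset.mem_filter, Finset.mem_univ, true_and] at hy hz
      linarith [hmid y hy.2, hmid z hz.2])
  exact ⟨ℓ, hchain, by simpa using hmem⟩

end Fans

section Realizer

variable {V : Type*} {G : SimpleGraph V} {f : V → ℝ × ℝ}

lemma IsSaturated.adj_of_side (hS : IsSaturated G f) (hP : IsPlanarDrawing G f) {a b : V}
    (hab : a ≠ b) (h : ∀ w, w ≠ a → w ≠ b → 0 < cr (f a) (f b) (f w)) : G.Adj a b := by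
  refine hS.adj hP hab ?_ ?_
  · intro c hca hcb hc
    obtain ⟨t, -, -, ht⟩ := mem_segment_iff.mp hc
    have h1 := h c hca hcb
    rw [ht, cr_pt, cr_self_left, cr_self_right] at h1
    simp at h1
  · intro c d t s _ _ had _ hbd _ _ _ _ _ _ hd
    exact hd.not_gt (h d had.symm hbd.symm)

lemma exists_cr_pos_of_mem_triangle {A B C X E : ℝ × ℝ} (hE : E ≠ X) (hA : 0 < cr A B X)
    (hB : 0 < cr B C X) (hC : 0 < cr C A X) : 0 < cr X E A ∨ 0 < cr X E B ∨ 0 < cr X E C := by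
  by_contra! h
  obtain ⟨h1, h2, h3⟩ := h
  have hsum : cr B C X * cr X E A + cr C A X * cr X E B + cr A B X * cr X E C = 0 := by
    simp only [cr]
    ring
  have hA0 : cr X E A = 0 := by nlinarith
  have hB0 : cr X E B = 0 := by nlinarith
  have hprod : ((E - X).1 ^ 2 + (E - X).2 ^ 2) * cr A B X = 0 := by
    simp only [cr, Prod.fst_sub, Prod.snd_sub] at hA0 hB0 ⊢
    linear_combination ((E.1 - X.1) * (A.1 - X.1) + (E.2 - X.2) * (A.2 - X.2)) * hB0 -
      ((E.1 - X.1) * (B.1 - X.1) + (E.2 - X.2) * (B.2 - X.2)) * hA0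
  exact (mul_pos (normSq_pos (sub_ne_zero.mpr hE)) hA).ne' hprod

/-- A saturated drawing whose outer boundary is a triangle has a realizer. -/
lemma IsSaturated.exists_isRealizer [Fintype V] [DecidableEq V] (hS : IsSaturated G f)
    (hP : IsPlanarDrawing G f) {a b c : V} (hab : a ≠ b) (hbc : b ≠ c) (hca : c ≠ a)
    (ha : ∀ w, w ≠ a → w ≠ b → 0 < cr (f a) (f b) (f w))
    (hb : ∀ w, w ≠ b → w ≠ c → 0 < cr (f b) (f c) (f w))
    (hc : ∀ w, w ≠ c → w ≠ a → 0 < cr (f c) (f a) (f w)) : ∃ κ, IsRealizer G κ := by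
  have hab' := hS.adj_of_side hP hab ha
  have hbc' := hS.adj_of_side hP hbc hb
  have hca' := hS.adj_of_side hP hca hc
  obtain ⟨h, hinj, hlt⟩ := exists_rank (key := fun p => toLex (f p)) (fun p q hpq => hP.1 hpq)
  have hinner : ∀ x, x ≠ a → x ≠ b → x ≠ c → ∀ E, E ≠ f x → ∃ w, 0 < cr (f x) E (f w) := by
    intro x hxa hxb hxc E hE
    rcases exists_cr_pos_of_mem_triangle hE (ha x hxa hxb) (hb x hxb hxc) (hc x hxc hxa)
      with h | h | h
    exacts [⟨a, h⟩, ⟨b, h⟩, ⟨c, h⟩]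
  refine exists_isRealizer_of_triangulation (o₁ := a) (o₂ := b) (o₃ := c) hP.isTriangleSystem hinj
    (fun p => ?_) (hS.link hP hab' hca'.symm hbc ha hc) (hS.link hP hbc' hab'.symm hca hb ha)
    (hS.link hP hca' hbc'.symm hab hc hb) (fun x hxa hxb hxc => hS.cyc hP (hinner x hxa hxb hxc)) ?_
  · simpa only [hlt] using hS.exists_lower_fan hP p
  · intro U hU haU hbU hcU
    obtain ⟨x, hxU, hmax⟩ := U.exists_max_image (fun u => (f u).1) hU
    obtain ⟨w, hw⟩ := hinner x (by rintro rfl; exact haU hxU) (by rintro rfl; exact hbU hxU)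
      (by rintro rfl; exact hcU hxU) ((f x).1, (f x).2 - 1) (by simp [Prod.ext_iff])
    obtain ⟨y, hxy, hy⟩ := hS.exists_adj_cr_pos hP hw
    refine ⟨x, hxU, y, fun hyU => ?_, hxy⟩
    have := hmax y hyU
    simp only [cr] at hy
    linarith

/-- The corners of a large triangle. -/
def outerPoint (R : ℝ) : Fin 3 → ℝ × ℝ := ![(-R, -R), (3 * R, -R), (-R, 3 * R)]

lemma _root_.IsPlanarDrawing.map_inl (hP : IsPlanarDrawing G f) {R : ℝ} (hR : 0 < R)
    (hf : ∀ v, |(f v).1| < R) :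
    IsPlanarDrawing (G.map Function.Embedding.inl) (Sum.elim f (outerPoint R)) := by
  obtain ⟨hinj, hdisj, -, hoff⟩ := hP
  have houter : ∀ i, R ≤ |(outerPoint R i).1| := by
    intro i
    fin_cases i <;> simp [outerPoint, abs_of_pos hR]
    linarith
  refine isPlanarDrawing_of ?_ ?_ ?_
  · refine hinj.sumElim ?_ fun v i h => (hf v).not_ge (by rw [h]; exact houter i)
    intro i j hij
    fin_cases i <;> fin_cases j <;> first | rfl | (simp [outerPoint] at hij; linarith)
  · rintro _ _ _ _ ⟨-, a, b, hab, rfl, rfl⟩ ⟨-, c, d, hcd, rfl, rfl⟩ h1 h2 h3 h4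
    exact hdisj a b c d hab hcd (by simpa using h1) (by simpa using h2) (by simpa using h3)
      (by simpa using h4)
  · rintro _ _ w ⟨-, a, b, hab, rfl, rfl⟩ h1 h2
    rcases w with w | i
    · exact hoff a b w hab (by simpa using h1) (by simpa using h2)
    · intro h
      obtain ⟨t, ht0, ht1, ht⟩ := mem_segment_iff.mp h
      have ha := abs_lt.mp (hf a)
      have hb := abs_lt.mp (hf b)
      refine (houter i).not_gt ?_
      have ht' : (outerPoint R i).1 = (f a).1 + t * ((f b).1 - (f a).1) := congrArg Prod.fst ht
      rw [ht', abs_lt]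
      rcases le_total (f a).1 (f b).1 with hle | hle <;> constructor <;>
        nlinarith [mul_nonneg ht0 (sub_nonneg.mpr hle),
          mul_nonneg (sub_nonneg.mpr ht1) (sub_nonneg.mpr hle)]

lemma _root_.IsPlanarDrawing.exists_isRealizer [Finite V] (hP : IsPlanarDrawing G f) :
    ∃ κ, IsRealizer G κ := by
  classical
  have := Fintype.ofFinite V
  obtain ⟨R, hR, hfR⟩ : ∃ R : ℝ, 0 < R ∧ ∀ v, |(f v).1| < R ∧ |(f v).2| < R := by
    refine ⟨1 + ∑ v, (|(f v).1| + |(f v).2|), by positivity, fun v => ?_⟩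
    have h := Finset.single_le_sum (f := fun v => |(f v).1| + |(f v).2|)
      (fun v _ => by positivity) (Finset.mem_univ v)
    constructor <;> linarith [abs_nonneg (f v).1, abs_nonneg (f v).2]
  obtain ⟨H, hGH, hH, hS⟩ := (hP.map_inl hR fun v => (hfR v).1).exists_saturated
  have hv := fun v => abs_lt.mp (hfR v).1
  have hv' := fun v => abs_lt.mp (hfR v).2
  obtain ⟨κ, hκ⟩ := hS.exists_isRealizer hH (a := Sum.inr 0) (b := Sum.inr 1) (c := Sum.inr 2)
    (by simp) (by simp) (by simp) (by
      rintro (v | i) h1 h2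
      · simp only [cr, Sum.elim_inl, Sum.elim_inr, outerPoint]
        simp
        nlinarith [hv v, hv' v]
      · fin_cases i <;> simp [cr, outerPoint] at h1 h2 ⊢
        nlinarith) (by
      rintro (v | i) h1 h2
      · simp only [cr, Sum.elim_inl, Sum.elim_inr, outerPoint]
        simp
        nlinarith [hv v, hv' v]
      · fin_cases i <;> simp [cr, outerPoint] at h1 h2 ⊢
        nlinarith) (by
      rintro (v | i) h1 h2
      · simp only [cr, Sum.elim_inl, Sum.elim_inr, outerPoint]
        simp
        nlinarith [hv v, hv' v]
      · fin_cases i <;> simp [cr, outerPoint] at h1 h2 ⊢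
        nlinarith)
  refine ⟨fun i v => κ i (Sum.inl v), fun a b c hab hca hcb => ?_⟩
  exact hκ _ _ _ (hGH ⟨by simpa using hab.ne, a, b, hab, rfl, rfl⟩) (by simpa using hca)
    (by simpa using hcb)

end Realizer

lemma isRealizer_top_fin_four :
    IsRealizer (⊤ : SimpleGraph (Fin 4))
      (fun i v => if v = i.castSucc then 2 else if v = 3 then 1 else 0) := by
  intro a b c hab hca hcb
  rw [SimpleGraph.top_adj] at hab
  fin_cases a <;> fin_cases b <;> fin_cases c <;> simp [Fin.exists_fin_succ] at hab hca hcb ⊢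

/-- Of the three pairs of disjoint edges of `K₄`, a permutation separates at most one. -/
lemma eq_of_sepPerm {n : ℕ} (σ : Fin 4 ≃ Fin n) {p q : Fin 3}
    (hp : SepPerm σ {x | x ∈ s(0, p.succ)} {x | x ∈ s((p + 1).succ, (p + 2).succ)})
    (hq : SepPerm σ {x | x ∈ s(0, q.succ)} {x | x ∈ s((q + 1).succ, (q + 2).succ)}) :
    p = q := by
  simp only [SepPerm, Set.mem_ofPred_eq, Sym2.mem_iff, forall_eq_or_imp, forall_eq,
    Fin.lt_def] at hp hq
  fin_cases p <;> fin_cases q <;> simp at hp hq ⊢ <;> omega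

lemma three_le_of_pwSuitable {k : ℕ} {F : Fin k → (Fin 4 ≃ Fin (Fintype.card (Fin 4)))}
    (hF : PWSuitable ⊤ F) : 3 ≤ k := by
  have h : ∀ p : Fin 3, ∃ i, SepPerm (F i) {x | x ∈ s(0, p.succ)}
      {x | x ∈ s((p + 1).succ, (p + 2).succ)} := by
    intro p
    apply hF <;> fin_cases p <;> simp
  choose i hi using h
  simpa using Fintype.card_le_of_injective i fun p q hpq =>
    eq_of_sepPerm (F (i p)) (hi p) (hpq ▸ hi q)

lemma sepDim_top_fin_four : sepDim (⊤ : SimpleGraph (Fin 4)) = 3 :=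
  le_antisymm isRealizer_top_fin_four.sepDim_le
    (le_csInf ⟨3, isRealizer_top_fin_four.exists_pwSuitable⟩
      fun _ ⟨_, hF⟩ => three_le_of_pwSuitable hF)

end PlanarSep

/-- Every planar graph has separation dimension at most `3`, and `K₄` has
separation dimension exactly `3`. -/
theorem stmt13 :
    (∀ (V : Type) [Fintype V] [DecidableEq V] (G : SimpleGraph V)
        (f : V → ℝ × ℝ), IsPlanarDrawing G f → sepDim G ≤ 3) ∧
    sepDim (⊤ : SimpleGraph (Fin 4)) = 3 :=
  ⟨fun _ _ _ _ _ hP => hP.exists_isRealizer.elim fun _ h => h.sepDim_le,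
    PlanarSep.sepDim_top_fin_four⟩
end
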